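/- arXiv:1609.02490 — 2 statements merged into one kernel-verified Lean document; each statement's English description precedes it below -/
import Mathlib

section
/- Let p ∈ (0,1) be fixed. For each n, let d(n) ∈ ℕ and α = α(n) ∈ ℝ^{d(n)} be a vector of nonnegative entries. If (‖α‖₂/‖α‖₄)⁴ / n³ → ∞ as n → ∞, then the total variation distance between the distribution of the Erdős–Rényi random graph G(n,p) and the distribution of the anisotropic random geometric graph G(n,p,α) converges to 0. -/
open MeasureTheory ProbabilityTheory Real Filter
open scoped Classical ENNReal NNReal

noncomputable section

/-- Euclidean inner product on `Fin d → ℝ`. -/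
def dotp {d : ℕ} (x y : Fin d → ℝ) : ℝ := ∑ i, x i * y i

/-- The `q`-norm of a vector `α ∈ ℝ^d`. -/
def nrm {d : ℕ} (q : ℕ) (α : Fin d → ℝ) : ℝ := (∑ i, α i ^ q) ^ ((1 : ℝ) / q)

/-- The centered Gaussian measure `N(0, D_α)` on `ℝ^d`, `D_α = diag α`. -/
def gaussPi (d : ℕ) (α : Fin d → ℝ) : Measure (Fin d → ℝ) :=
  Measure.pi fun i => gaussianReal 0 (Real.toNNReal (α i))

/-- The law of `n` i.i.d. samples from `N(0, D_α)`. -/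
def sampleMeasure (n d : ℕ) (α : Fin d → ℝ) : Measure (Fin n → Fin d → ℝ) :=
  Measure.pi fun _ => gaussPi d α

/-- `t` is the `p`-th upper quantile of `⟨X₁, X₂⟩` for `X₁, X₂` i.i.d. `N(0, D_α)`. -/
def IsThreshold (d : ℕ) (α : Fin d → ℝ) (p t : ℝ) : Prop :=
  ((gaussPi d α).prod (gaussPi d α)) {xy | t ≤ dotp xy.1 xy.2} = ENNReal.ofReal p

instance (n : ℕ) : MeasurableSpace (SimpleGraph (Fin n)) := ⊤

/-- The anisotropic random geometric graph `G(n, p, α)`, with threshold `t = t_{p,α}`. -/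
def geomGraph (n d : ℕ) (α : Fin d → ℝ) (t : ℝ) : Measure (SimpleGraph (Fin n)) :=
  Measure.map (fun X => SimpleGraph.fromRel fun i j => t ≤ dotp (X i) (X j))
    (sampleMeasure n d α)

/-- The Erdős–Rényi random graph `G(n, p)`. -/
def erGraph (n : ℕ) (p : ℝ) : Measure (SimpleGraph (Fin n)) :=
  Measure.map (fun x => SimpleGraph.fromRel fun i j => x s(i, j) ≤ p)
    (Measure.pi fun _ : Sym2 (Fin n) => volume.restrict (Set.Icc (0 : ℝ) 1))

/-- Total variation distance between two measures. -/
def tvDist {Ω : Type*} [MeasurableSpace Ω] (μ ν : Measure Ω) : ℝ :=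
  ⨆ s : {s : Set Ω // MeasurableSet s}, |(μ s.1).toReal - (ν s.1).toReal|

/-- density ratio of `N(0,v)` w.r.t. `N(0,1)` -/
def gRatio (v : ℝ≥0) (x : ℝ) : ℝ := gaussianPDFReal 0 v x / gaussianPDFReal 0 1 x

lemma gRatio_nonneg (v : ℝ≥0) (x : ℝ) : 0 ≤ gRatio v x :=
  div_nonneg (gaussianPDFReal_nonneg _ _ _) (gaussianPDFReal_nonneg _ _ _)

lemma gRatio_measurable (v : ℝ≥0) : Measurable (gRatio v) :=
  (measurable_gaussianPDFReal _ _).div (measurable_gaussianPDFReal _ _)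

lemma gaussianReal_eq_withDensity (v : ℝ≥0) (hv : v ≠ 0) :
    gaussianReal 0 v = (gaussianReal 0 1).withDensity (fun x => ENNReal.ofReal (gRatio v x)) := by
  rw [gaussianReal_of_var_ne_zero 0 hv, gaussianReal_of_var_ne_zero 0 one_ne_zero,
    ← withDensity_mul _ (measurable_gaussianPDF _ _) (gRatio_measurable v).ennreal_ofReal]
  congr 1
  ext x
  simp only [Pi.mul_apply, gaussianPDF, gRatio]
  rw [← ENNReal.ofReal_mul (gaussianPDFReal_nonneg _ _ _),
    mul_div_cancel₀ _ (gaussianPDFReal_pos 0 1 x one_ne_zero).ne']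

lemma gRatio_sq_aux (v : ℝ≥0) (hv : v ≠ 0) (x : ℝ) :
    gaussianPDFReal 0 1 x * (gRatio v x) ^ 2 =
      ((v : ℝ) * √(2 * π))⁻¹ * rexp (-((2 - (v : ℝ)) / (2 * v)) * x ^ 2) := by
  have hv' : (0 : ℝ) < v := by positivity
  have h2 : √(2 * π * (v : ℝ)) ^ 2 = 2 * π * v := Real.sq_sqrt (by positivity)
  have h1 : √(2 * π) ^ 2 = 2 * π := Real.sq_sqrt (by positivity)
  have h1p : 0 < √(2 * π) := by positivity
  have h2p : 0 < √(2 * π * (v : ℝ)) := by positivity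
  have e1 : rexp (-((2 - (v : ℝ)) / (2 * v)) * x ^ 2) * rexp (-x ^ 2 / 2)
      = rexp (-x ^ 2 / (2 * v)) ^ 2 := by
    rw [← Real.exp_add, ← Real.exp_nat_mul]
    congr 1
    field_simp
    push_cast
    ring
  have hE : 0 < rexp (-x ^ 2 / 2) := Real.exp_pos _
  simp only [gRatio, gaussianPDFReal, sub_zero, NNReal.coe_one, mul_one]
  rw [div_pow, mul_pow, ← e1, mul_pow, inv_pow, h2]
  have : (√(2*π))⁻¹ ^ 2 = (2 * π)⁻¹ := by rw [inv_pow, h1]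
  rw [this]
  field_simp

lemma gRatio_sq (v : ℝ≥0) (hv : |(v : ℝ) - 1| ≤ 1 / 2) :
    Integrable (fun x => (gRatio v x) ^ 2) (gaussianReal 0 1) ∧
    ∫ x, (gRatio v x) ^ 2 ∂(gaussianReal 0 1) ≤ rexp (((v : ℝ) - 1) ^ 2) := by
  have hv2 := abs_le.mp hv
  have hvp : (0 : ℝ) < v := by linarith
  have hv0 : v ≠ 0 := by rintro rfl; simp at hvp
  have hb : 0 < (2 - (v : ℝ)) / (2 * v) := by apply div_pos <;> linarith
  constructor
  · rw [gaussianReal_of_var_ne_zero 0 one_ne_zero]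
    rw [integrable_withDensity_iff (measurable_gaussianPDF _ _)
      (ae_of_all _ fun x => gaussianPDF_lt_top)]
    simp only [toReal_gaussianPDF]
    simp_rw [mul_comm ((gRatio v _) ^ 2), gRatio_sq_aux v hv0]
    exact (integrable_exp_neg_mul_sq hb).const_mul _
  · rw [integral_gaussianReal_eq_integral_smul one_ne_zero]
    simp only [smul_eq_mul]
    simp_rw [gRatio_sq_aux v hv0]
    rw [integral_const_mul, integral_gaussian]
    have hu : (v : ℝ) * (2 - v) = 1 - ((v : ℝ) - 1) ^ 2 := by ring
    set u := ((v : ℝ) - 1) ^ 2 with hudef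
    have hu0 : 0 ≤ u := sq_nonneg _
    have hu1 : u ≤ 1 / 4 := by rw [hudef]; nlinarith
    have hlow : rexp (-u) ^ 2 ≤ 1 - u := by
      have h3 : 1 + 2 * u ≤ rexp (2 * u) := by linarith [Real.add_one_le_exp (2 * u)]
      have h4 : rexp (-u) ^ 2 * rexp (2 * u) = 1 := by
        rw [← Real.exp_nat_mul, ← Real.exp_add]; simp
      have h5 : 0 < rexp (-u) ^ 2 := by positivity
      nlinarith
    have hsq : √(π / ((2 - (v : ℝ)) / (2 * v))) = √(2 * π) * v / √(1 - u) := by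
      rw [← hu]
      have : π / ((2 - (v : ℝ)) / (2 * v)) = (2 * π) * (v : ℝ) ^ 2 / (v * (2 - v)) := by
        have : (2 - (v : ℝ)) ≠ 0 := by linarith
        field_simp
      rw [this, Real.sqrt_div (by positivity), Real.sqrt_mul (by positivity),
        Real.sqrt_sq hvp.le]
    rw [hsq]
    have hs : rexp (-u) ≤ √(1 - u) := Real.le_sqrt_of_sq_le hlow
    have hs0 : 0 < √(1 - u) := Real.sqrt_pos.mpr (by linarith)
    have : ((v : ℝ) * √(2 * π))⁻¹ * (√(2 * π) * v / √(1 - u)) = (√(1 - u))⁻¹ := by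
      have : 0 < √(2 * π) := by positivity
      field_simp
    rw [this]
    have h6 : rexp u = (rexp (-u))⁻¹ := by rw [Real.exp_neg, inv_inv]
    rw [h6]
    exact inv_anti₀ (Real.exp_pos _) hs

lemma sq_div_le_integral_sq {Ω : Type*} [MeasurableSpace Ω] (μ : Measure Ω) [IsFiniteMeasure μ]
    (F : Ω → ℝ) (hF : MemLp F 2 μ) :
    (∫ x, F x ∂μ) ^ 2 / μ.real Set.univ ≤ ∫ x, F x ^ 2 ∂μ := by
  have hI : Integrable F μ := hF.integrable (by norm_num)
  have hI2 : Integrable (fun x => F x ^ 2) μ := hF.integrable_sq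
  rcases eq_or_ne (μ.real Set.univ) 0 with h | h
  · rw [h, div_zero]; exact integral_nonneg fun x => sq_nonneg _
  have hm : 0 < μ.real Set.univ := lt_of_le_of_ne measureReal_nonneg (Ne.symm h)
  set c := (∫ x, F x ∂μ) / μ.real Set.univ with hc
  have h1 : 0 ≤ ∫ x, (F x - c) ^ 2 ∂μ := integral_nonneg fun x => sq_nonneg _
  have h2 : ∫ x, (F x - c) ^ 2 ∂μ
      = ∫ x, F x ^ 2 ∂μ - 2 * c * ∫ x, F x ∂μ + c ^ 2 * μ.real Set.univ := by
    have : ∀ x, (F x - c) ^ 2 = F x ^ 2 - 2 * c * F x + c ^ 2 := fun x => by ring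
    simp_rw [this]
    rw [integral_add (f := fun x => F x ^ 2 - 2 * c * F x) (hI2.sub (hI.const_mul _)) (integrable_const _),
      integral_sub hI2 (hI.const_mul _), integral_const_mul, integral_const]
    simp [mul_comm]
  have h3 : (∫ x, F x ∂μ) = c * μ.real Set.univ := by rw [hc]; field_simp
  rw [h2] at h1
  rw [h3] at h1 ⊢
  have : (c * μ.real Set.univ) ^ 2 / μ.real Set.univ = c ^ 2 * μ.real Set.univ := by field_simp
  rw [this]; nlinarith

lemma chi_data {Ω R : Type*} [MeasurableSpace Ω] [Fintype R] [MeasurableSpace R]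
    [MeasurableSingletonClass R] (μ P : Measure Ω) [IsProbabilityMeasure μ] [IsProbabilityMeasure P]
    (F : Ω → ℝ) (hF0 : ∀ x, 0 ≤ F x) (hF : MemLp F 2 μ)
    (hP : P = μ.withDensity (fun x => ENNReal.ofReal (F x))) (φ : Ω → R) (hφ : Measurable φ)
    (hb : ∀ r, 0 < μ.real (φ ⁻¹' {r})) :
    ∑ r, (P.real (φ ⁻¹' {r}) - μ.real (φ ⁻¹' {r})) ^ 2 / μ.real (φ ⁻¹' {r})
      ≤ ∫ x, F x ^ 2 ∂μ - 1 := by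
  have hI : Integrable F μ := hF.integrable (by norm_num)
  have hI2 : Integrable (fun x => F x ^ 2) μ := hF.integrable_sq
  have hm : ∀ r, MeasurableSet (φ ⁻¹' {r}) := fun r => hφ (measurableSet_singleton r)
  have hdisj : Pairwise (Function.onFun Disjoint fun r => φ ⁻¹' {r}) := by
    intro r s hrs
    refine Set.disjoint_left.mpr fun x hx hy => hrs ?_
    simp only [Set.mem_preimage, Set.mem_singleton_iff] at hx hy
    rw [← hx, ← hy]
  have huniv : (⋃ r, φ ⁻¹' {r}) = Set.univ := by ext x; simp
  have hsum : ∀ (Q : Measure Ω) [IsProbabilityMeasure Q], ∑ r, Q.real (φ ⁻¹' {r}) = 1 := by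
    intro Q _
    rw [← measureReal_iUnion_fintype hdisj hm, huniv]; simp
  have hPr : ∀ r, P.real (φ ⁻¹' {r}) = ∫ x in φ ⁻¹' {r}, F x ∂μ := by
    intro r
    rw [hP, measureReal_def, withDensity_apply _ (hm r),
      ← ofReal_integral_eq_lintegral_ofReal hI.restrict (ae_of_all _ hF0),
      ENNReal.toReal_ofReal (integral_nonneg hF0)]
  have hle : ∀ r, P.real (φ ⁻¹' {r}) ^ 2 / μ.real (φ ⁻¹' {r}) ≤ ∫ x in φ ⁻¹' {r}, F x ^ 2 ∂μ := by
    intro r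
    have := sq_div_le_integral_sq (μ.restrict (φ ⁻¹' {r})) F (hF.restrict _)
    rw [hPr r]
    simpa using this
  have htot : ∑ r, ∫ x in φ ⁻¹' {r}, F x ^ 2 ∂μ = ∫ x, F x ^ 2 ∂μ := by
    rw [← integral_iUnion_fintype hm hdisj (fun r => hI2.integrableOn), huniv,
      Measure.restrict_univ]
  have : ∀ r, (P.real (φ ⁻¹' {r}) - μ.real (φ ⁻¹' {r})) ^ 2 / μ.real (φ ⁻¹' {r})
      = P.real (φ ⁻¹' {r}) ^ 2 / μ.real (φ ⁻¹' {r}) - 2 * P.real (φ ⁻¹' {r})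
        + μ.real (φ ⁻¹' {r}) := by
    intro r
    have := (hb r).ne'
    field_simp
    ring
  simp_rw [this]
  rw [Finset.sum_add_distrib, Finset.sum_sub_distrib, ← Finset.mul_sum, hsum P, hsum μ]
  have := Finset.sum_le_sum fun r (_ : r ∈ Finset.univ) => hle r
  linarith

lemma pi_gaussian_withDensity {k : ℕ} (v : Fin k → ℝ≥0) (hv : ∀ i, |(v i : ℝ) - 1| ≤ 1 / 2) :
    (Measure.pi fun i => gaussianReal 0 (v i)) =
      (Measure.pi fun _ : Fin k => gaussianReal 0 1).withDensity
        (fun x => ENNReal.ofReal (∏ i, gRatio (v i) (x i))) := by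
  have hv0 : ∀ i, v i ≠ 0 := by
    intro i h
    have := hv i
    rw [h] at this
    norm_num at this
  have hIntg : ∀ i, Integrable (gRatio (v i)) (gaussianReal 0 1) := by
    intro i
    exact ((memLp_two_iff_integrable_sq (gRatio_measurable _).aestronglyMeasurable).mpr
      (gRatio_sq (v i) (hv i)).1).integrable (by norm_num)
  refine (Measure.pi_eq fun s hs => ?_)
  rw [withDensity_apply _ (MeasurableSet.univ_pi hs), Measure.restrict_pi_pi,
    ← ofReal_integral_eq_lintegral_ofReal
      (Integrable.fintype_prod (fun i => (hIntg i).restrict))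
      (ae_of_all _ fun x => Finset.prod_nonneg fun i _ => gRatio_nonneg _ _),
    integral_fintype_prod_eq_prod, ENNReal.ofReal_prod_of_nonneg
      (fun i _ => integral_nonneg fun x => gRatio_nonneg _ _)]
  refine Finset.prod_congr rfl fun i _ => ?_
  rw [gaussianReal_eq_withDensity (v i) (hv0 i), withDensity_apply _ (hs i),
    ofReal_integral_eq_lintegral_ofReal (hIntg i).restrict
      (ae_of_all _ fun x => gRatio_nonneg _ _)]

lemma chi_gaussian {k : ℕ} {R : Type*} [Fintype R] [MeasurableSpace R]
    [MeasurableSingletonClass R] (v : Fin k → ℝ≥0) (hv : ∑ i, ((v i : ℝ) - 1) ^ 2 ≤ 1 / 4)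
    (φ : (Fin k → ℝ) → R) (hφ : Measurable φ)
    (hb : ∀ r, 0 < (Measure.pi fun _ : Fin k => gaussianReal 0 1).real (φ ⁻¹' {r})) :
    ∑ r, ((Measure.pi fun i => gaussianReal 0 (v i)).real (φ ⁻¹' {r})
        - (Measure.pi fun _ : Fin k => gaussianReal 0 1).real (φ ⁻¹' {r})) ^ 2
        / (Measure.pi fun _ : Fin k => gaussianReal 0 1).real (φ ⁻¹' {r})
      ≤ 2 * ∑ i, ((v i : ℝ) - 1) ^ 2 := by
  have hv1 : ∀ i, |(v i : ℝ) - 1| ≤ 1 / 2 := by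
    intro i
    have : ((v i : ℝ) - 1) ^ 2 ≤ 1 / 4 := le_trans
      (Finset.single_le_sum (f := fun i => ((v i : ℝ) - 1) ^ 2) (fun i _ => sq_nonneg _)
        (Finset.mem_univ i)) hv
    exact abs_le_of_sq_le_sq (by norm_num; linarith) (by norm_num)
  have hsq : ∀ x : Fin k → ℝ, (∏ i, gRatio (v i) (x i)) ^ 2 = ∏ i, (gRatio (v i) (x i)) ^ 2 :=
    fun x => (Finset.prod_pow _ _ _).symm
  have hmeas : Measurable fun x : Fin k → ℝ => ∏ i, gRatio (v i) (x i) :=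
    Finset.measurable_fun_prod _ fun i _ => (gRatio_measurable _).comp (measurable_pi_apply i)
  have hmem : MemLp (fun x : Fin k → ℝ => ∏ i, gRatio (v i) (x i)) 2
      (Measure.pi fun _ : Fin k => gaussianReal 0 1) := by
    rw [memLp_two_iff_integrable_sq hmeas.aestronglyMeasurable]
    simp_rw [hsq]
    exact Integrable.fintype_prod fun i => (gRatio_sq (v i) (hv1 i)).1
  refine (chi_data _ _ _ (fun x => Finset.prod_nonneg fun i _ => gRatio_nonneg _ _) hmem
    (pi_gaussian_withDensity v hv1) φ hφ hb).trans ?_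
  simp_rw [hsq]
  rw [integral_fintype_prod_eq_prod (f := fun i x => (gRatio (v i) x) ^ 2)]
  have h1 : ∏ i, ∫ x, (gRatio (v i) x) ^ 2 ∂(gaussianReal 0 1)
      ≤ rexp (∑ i, ((v i : ℝ) - 1) ^ 2) := by
    rw [Real.exp_sum]
    exact Finset.prod_le_prod (fun i _ => integral_nonneg fun x => sq_nonneg _)
      fun i _ => (gRatio_sq (v i) (hv1 i)).2
  set u := ∑ i, ((v i : ℝ) - 1) ^ 2
  have hu : 0 ≤ u := Finset.sum_nonneg fun i _ => sq_nonneg _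
  have h2 : rexp u ≤ 1 + 2 * u := by
    have h3 := Real.add_one_le_exp (-u)
    have h4 : rexp (-u) * rexp u = 1 := by rw [← Real.exp_add]; simp
    have h5 := Real.exp_pos u
    nlinarith
  linarith

lemma charFun_linear {k d : ℕ} (M : Matrix (Fin k) (Fin d) ℝ) (v : Fin d → ℝ≥0)
    (ξ : EuclideanSpace ℝ (Fin k)) :
    charFun ((Measure.pi fun i => gaussianReal 0 (v i)).map
      (fun x => WithLp.toLp 2 (M.mulVec x))) ξ
      = Complex.exp (-((∑ l, (v l : ℝ) * (∑ i, ξ i * M i l) ^ 2 : ℝ) : ℂ) / 2) := by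
  have hmeas : Measurable (fun x : Fin d → ℝ => WithLp.toLp 2 (M.mulVec x)) := by
    refine (PiLp.continuous_toLp 2 _).measurable.comp ?_
    exact (Continuous.matrix_mulVec continuous_const continuous_id).measurable
  rw [charFun_apply, integral_map hmeas.aemeasurable (by fun_prop)]
  have : ∀ x : Fin d → ℝ, Complex.exp (((inner ℝ (WithLp.toLp 2 (M.mulVec x)) ξ : ℝ) : ℂ) * Complex.I)
      = ∏ l, Complex.exp (((∑ i, ξ i * M i l : ℝ) : ℂ) * (x l : ℂ) * Complex.I) := by
    intro x
    rw [← Complex.exp_sum, ← Finset.sum_mul]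
    congr 2
    simp only [PiLp.inner_apply, Matrix.mulVec, dotProduct, RCLike.inner_apply, conj_trivial]
    push_cast
    simp only [Finset.sum_mul, Finset.mul_sum]
    rw [Finset.sum_comm]
    refine Finset.sum_congr rfl fun l _ => Finset.sum_congr rfl fun i _ => ?_
    ring
  simp_rw [this]
  rw [integral_fintype_prod_eq_prod (𝕜 := ℂ)
    (f := fun l (y : ℝ) => Complex.exp (((∑ i, ξ i * M i l : ℝ) : ℂ) * (y : ℂ) * Complex.I))]
  have h2 : ∀ l, ∫ y : ℝ, Complex.exp (((∑ i, ξ i * M i l : ℝ) : ℂ) * (y : ℂ) * Complex.I)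
      ∂(gaussianReal 0 (v l)) = Complex.exp (-((v l : ℝ) * (∑ i, ξ i * M i l) ^ 2 : ℝ) / 2) := by
    intro l
    have h3 := charFun_gaussianReal (μ := 0) (v := v l) (∑ i, ξ i * M i l)
    rw [charFun_apply_real] at h3
    rw [h3]
    congr 1
    push_cast
    ring
  simp_rw [h2]
  rw [← Complex.exp_sum]
  congr 1
  push_cast
  rw [← Finset.sum_div, Finset.sum_neg_distrib]

lemma law_linear_eq {k d e : ℕ} (M : Matrix (Fin k) (Fin d) ℝ) (v : Fin d → ℝ≥0)
    (N : Matrix (Fin k) (Fin e) ℝ) (w : Fin e → ℝ≥0)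
    (h : ∀ ξ : Fin k → ℝ, ∑ l, (v l : ℝ) * (∑ i, ξ i * M i l) ^ 2
      = ∑ l, (w l : ℝ) * (∑ i, ξ i * N i l) ^ 2) :
    (Measure.pi fun i => gaussianReal 0 (v i)).map M.mulVec
      = (Measure.pi fun i => gaussianReal 0 (w i)).map N.mulVec := by
  have hM : Measurable M.mulVec :=
    (Continuous.matrix_mulVec continuous_const continuous_id).measurable
  have hN : Measurable N.mulVec :=
    (Continuous.matrix_mulVec continuous_const continuous_id).measurable
  have hL : Measurable (WithLp.toLp 2 : (Fin k → ℝ) → EuclideanSpace ℝ (Fin k)) :=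
    (PiLp.continuous_toLp 2 _).measurable
  have hL' : Measurable (WithLp.ofLp : EuclideanSpace ℝ (Fin k) → (Fin k → ℝ)) :=
    (PiLp.continuous_ofLp 2 _).measurable
  have key : (Measure.pi fun i => gaussianReal 0 (v i)).map (fun x => WithLp.toLp 2 (M.mulVec x))
      = (Measure.pi fun i => gaussianReal 0 (w i)).map (fun x => WithLp.toLp 2 (N.mulVec x)) := by
    have i1 := Measure.isProbabilityMeasure_map
      (μ := Measure.pi fun i => gaussianReal 0 (v i)) (hL.comp hM).aemeasurable
    have i2 := Measure.isProbabilityMeasure_map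
      (μ := Measure.pi fun i => gaussianReal 0 (w i)) (hL.comp hN).aemeasurable
    simp only [Function.comp_def] at i1 i2
    refine Measure.ext_of_charFun ?_
    ext ξ
    rw [charFun_linear, charFun_linear, h]
  have := congrArg (fun μ => μ.map (WithLp.ofLp : EuclideanSpace ℝ (Fin k) → (Fin k → ℝ))) key
  exact (Measure.map_map hL' (hL.comp hM)).symm.trans
    (this.trans (Measure.map_map hL' (hL.comp hN)))

def sig2 {d : ℕ} (α : Fin d → ℝ) : ℝ := ∑ l, α l ^ 2

def Sent {d : ℕ} (α : Fin d → ℝ) (x y : Fin d → ℝ) : ℝ := (∑ l, α l * x l * y l) / sig2 α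

def dev {d k : ℕ} (α : Fin d → ℝ) (x : Fin k → Fin d → ℝ) : ℝ :=
  ∑ i, ∑ j, (Sent α (x i) (x j) - if i = j then 1 else 0) ^ 2

def rowBits {d k : ℕ} (t : ℝ) (x : Fin k → Fin d → ℝ) (y : Fin d → ℝ) : Fin k → Bool :=
  fun i => decide (t ≤ dotp (x i) y)

def bern (p : ℝ) (b : Bool) : ℝ := bif b then p else 1 - p

def pStar {d : ℕ} (α : Fin d → ℝ) (t : ℝ) : ℝ :=
  (gaussianReal 0 1).real (Set.Ici (t / √(sig2 α)))

lemma measurable_decide_bool {Ω : Type*} [MeasurableSpace Ω] {P : Ω → Prop}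
    (h : MeasurableSet {x | P x}) : Measurable fun x => decide (P x) := by
  refine measurable_to_bool ?_
  convert h using 1
  ext x; simp

lemma spectral_facts {k : ℕ} (S : Matrix (Fin k) (Fin k) ℝ) (hS : S.IsHermitian) :
    ∃ (U : Matrix (Fin k) (Fin k) ℝ) (lam : Fin k → ℝ), U * U.transpose = 1 ∧
      S = U * Matrix.diagonal lam * U.transpose ∧
      ∑ i, (lam i - 1) ^ 2 = ∑ i, ∑ j, (S i j - if i = j then 1 else 0) ^ 2 := by
  obtain ⟨U, lam, h1, h2, h3⟩ : ∃ (U : Matrix (Fin k) (Fin k) ℝ) (lam : Fin k → ℝ),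
      U * U.transpose = 1 ∧ U.transpose * U = 1 ∧
      S = U * Matrix.diagonal lam * U.transpose := by
    refine ⟨(hS.eigenvectorUnitary : Matrix _ _ ℝ), hS.eigenvalues, ?_, ?_, ?_⟩
    · have := Unitary.coe_mul_star_self hS.eigenvectorUnitary
      rwa [Unitary.coe_star, Matrix.star_eq_conjTranspose,
        Matrix.conjTranspose_eq_transpose_of_trivial] at this
    · have := Unitary.coe_star_mul_self hS.eigenvectorUnitary
      rwa [Matrix.star_eq_conjTranspose,
        Matrix.conjTranspose_eq_transpose_of_trivial] at this
    · have := hS.spectral_theorem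
      rw [Unitary.conjStarAlgAut_apply, Matrix.star_eq_conjTranspose,
        Matrix.conjTranspose_eq_transpose_of_trivial] at this
      exact this
  refine ⟨U, lam, h1, h3, ?_⟩
  have hT : (S - 1).transpose = S - 1 := by
    rw [Matrix.transpose_sub, Matrix.transpose_one]
    have := hS.eq
    rw [Matrix.conjTranspose_eq_transpose_of_trivial] at this
    rw [this]
  have e1 : S - 1 = U * Matrix.diagonal (fun i => lam i - 1) * U.transpose := by
    have : Matrix.diagonal (fun i => lam i - 1) = Matrix.diagonal lam - 1 := by
      rw [← Matrix.diagonal_one, Matrix.diagonal_sub]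
    rw [this, Matrix.mul_sub, Matrix.sub_mul, ← h3, Matrix.mul_one, h1]
  have e2 : ((S - 1) * (S - 1).transpose).trace = ∑ i, (lam i - 1) ^ 2 := by
    rw [hT]
    have : (S - 1) * (S - 1) = U * (Matrix.diagonal (fun i => (lam i - 1) ^ 2) * U.transpose) := by
      have hd : Matrix.diagonal (fun i => (lam i - 1) ^ 2) =
        Matrix.diagonal (fun i => lam i - 1) * Matrix.diagonal (fun i => lam i - 1) := by
        rw [Matrix.diagonal_mul_diagonal]; congr 1; ext i; ring
      rw [e1, hd]
      calc U * Matrix.diagonal (fun i => lam i - 1) * U.transpose *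
            (U * Matrix.diagonal (fun i => lam i - 1) * U.transpose)
          = U * Matrix.diagonal (fun i => lam i - 1) * (U.transpose * U) *
            Matrix.diagonal (fun i => lam i - 1) * U.transpose := by
              simp only [Matrix.mul_assoc]
        _ = _ := by rw [h2]; simp only [Matrix.mul_assoc, Matrix.mul_one]
    rw [this, Matrix.trace_mul_comm, Matrix.mul_assoc, h2, Matrix.mul_one, Matrix.trace_diagonal]
  rw [← e2, Matrix.trace]
  refine Finset.sum_congr rfl fun i _ => ?_
  rw [Matrix.diag_apply, Matrix.mul_apply]
  refine Finset.sum_congr rfl fun j _ => ?_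
  rw [Matrix.transpose_apply, Matrix.sub_apply, Matrix.one_apply]
  ring

lemma pi_bern {k : ℕ} (s : ℝ) (r : Fin k → Bool) :
    (Measure.pi fun _ : Fin k => gaussianReal 0 1).real
      ((fun y : Fin k → ℝ => fun i => decide (s ≤ y i)) ⁻¹' {r})
      = ∏ i, bern ((gaussianReal 0 1).real (Set.Ici s)) (r i) := by
  have : ((fun y : Fin k → ℝ => fun i => decide (s ≤ y i)) ⁻¹' {r})
      = Set.univ.pi fun i => if r i then Set.Ici s else (Set.Ici s)ᶜ := by
    ext y
    simp only [Set.mem_preimage, Set.mem_singleton_iff, Set.mem_univ_pi, funext_iff]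
    refine forall_congr' fun i => ?_
    by_cases h : r i = true <;> simp [h]
  rw [this, measureReal_def, Measure.pi_pi, ENNReal.toReal_prod]
  refine Finset.prod_congr rfl fun i _ => ?_
  by_cases h : r i = true
  · simp [h, bern, measureReal_def]
  · have h' : r i = false := by simpa using h
    simp only [h', bern, cond_false, Bool.false_eq_true, if_false]
    rw [← measureReal_def, measureReal_compl measurableSet_Ici]
    simp

lemma quad_expand {k d : ℕ} (c : Fin d → ℝ) (a : Fin k → Fin d → ℝ) :
    ∑ l, c l * (∑ i, a i l) ^ 2 = ∑ i, ∑ j, ∑ l, c l * a i l * a j l := by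
  have : ∀ l, c l * (∑ i, a i l) ^ 2 = ∑ i, ∑ j, c l * a i l * a j l := by
    intro l
    rw [pow_two, Finset.sum_mul_sum, Finset.mul_sum]
    refine Finset.sum_congr rfl fun i _ => ?_
    rw [Finset.mul_sum]
    exact Finset.sum_congr rfl fun j _ => by ring
  simp_rw [this]
  rw [Finset.sum_comm]
  exact Finset.sum_congr rfl fun i _ => Finset.sum_comm

lemma row_chi {d k : ℕ} (α : Fin d → ℝ) (hα : ∀ l, 0 ≤ α l) (hs : 0 < sig2 α) (t : ℝ)
    (hp0 : 0 < pStar α t) (hp1 : pStar α t < 1) (x : Fin k → Fin d → ℝ)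
    (hx : dev α x ≤ 1 / 4) :
    ∑ r : Fin k → Bool, ((gaussPi d α).real (rowBits t x ⁻¹' {r})
      - ∏ i, bern (pStar α t) (r i)) ^ 2 / ∏ i, bern (pStar α t) (r i) ≤ 2 * dev α x := by
  set s := √(sig2 α) with hsdef
  have hs0 : 0 < s := Real.sqrt_pos.mpr hs
  have hss : s ^ 2 = sig2 α := Real.sq_sqrt hs.le
  set S : Matrix (Fin k) (Fin k) ℝ := Matrix.of fun i j => Sent α (x i) (x j) with hSdef
  have hS : S.IsHermitian := by
    ext i j
    simp only [Matrix.conjTranspose_apply, star_trivial, hSdef, Matrix.of_apply, Sent]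
    congr 1
    exact Finset.sum_congr rfl fun l _ => by ring
  obtain ⟨U, lam, hU, hSU, hlam⟩ := spectral_facts S hS
  have hlam' : ∑ i, (lam i - 1) ^ 2 = dev α x := by rw [hlam]; rfl
  have hlam0 : ∀ i, 0 ≤ lam i := by
    intro i
    have : (lam i - 1) ^ 2 ≤ 1 / 4 := le_trans
      (Finset.single_le_sum (f := fun i => (lam i - 1) ^ 2) (fun i _ => sq_nonneg _)
        (Finset.mem_univ i)) (hlam'.trans_le hx)
    nlinarith
  set v : Fin k → ℝ≥0 := fun i => Real.toNNReal (lam i) with hv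
  have hvc : ∀ i, (v i : ℝ) = lam i := fun i => Real.coe_toNNReal _ (hlam0 i)
  set φ : (Fin k → ℝ) → (Fin k → Bool) := fun y i => decide (t / s ≤ y i) with hφdef
  have hφ : Measurable φ := by
    refine measurable_pi_iff.mpr fun i => measurable_decide_bool ?_
    exact measurableSet_le measurable_const (measurable_pi_apply i)
  have hUm : Measurable U.mulVec :=
    (Continuous.matrix_mulVec continuous_const continuous_id).measurable
  set M : Matrix (Fin k) (Fin d) ℝ := Matrix.of fun i l => x i l / s with hM
  have hMm : Measurable M.mulVec :=
    (Continuous.matrix_mulVec continuous_const continuous_id).measurable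
  have hquad : ∀ (ξ : Fin k → ℝ) (c : Fin k → ℝ),
      ∑ l, c l * (∑ i, ξ i * U i l) ^ 2
        = ∑ i, ∑ j, ξ i * ξ j * (U * Matrix.diagonal c * U.transpose) i j := by
    intro ξ c
    rw [quad_expand]
    refine Finset.sum_congr rfl fun i _ => Finset.sum_congr rfl fun j _ => ?_
    rw [Matrix.mul_apply, Finset.mul_sum]
    refine Finset.sum_congr rfl fun l _ => ?_
    rw [Matrix.mul_diagonal, Matrix.transpose_apply]
    ring
  have law1 : (gaussPi d α).map M.mulVec
      = (Measure.pi fun i => gaussianReal 0 (v i)).map U.mulVec := by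
    refine law_linear_eq _ _ _ _ fun ξ => ?_
    simp_rw [hvc]
    rw [hquad, ← hSU]
    rw [quad_expand]
    refine Finset.sum_congr rfl fun i _ => Finset.sum_congr rfl fun j _ => ?_
    simp only [hSdef, hM, Matrix.of_apply, Sent, Real.coe_toNNReal _ (hα _), Finset.sum_div,
      Finset.mul_sum]
    refine Finset.sum_congr rfl fun l _ => ?_
    rw [← hss]
    field_simp
  have law2 : (Measure.pi fun _ : Fin k => gaussianReal 0 1).map U.mulVec
      = Measure.pi fun _ : Fin k => gaussianReal 0 1 := by
    have := law_linear_eq U (fun _ => 1) (1 : Matrix (Fin k) (Fin k) ℝ) (fun _ => 1) (fun ξ => by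
      have := hquad ξ (fun _ => 1)
      simp only [NNReal.coe_one]
      rw [this, Matrix.diagonal_one, Matrix.mul_one, hU]
      simp [Matrix.one_apply, pow_two])
    rw [this]
    have h1 : (1 : Matrix (Fin k) (Fin k) ℝ).mulVec = id := by ext y i; simp
    rw [h1, Measure.map_id]
  have hQ : ∀ r, (gaussPi d α).real (rowBits t x ⁻¹' {r})
      = (Measure.pi fun i => gaussianReal 0 (v i)).real ((φ ∘ U.mulVec) ⁻¹' {r}) := by
    intro r
    have h1 : rowBits t x = φ ∘ M.mulVec := by
      ext y i
      simp only [rowBits, hφdef, Function.comp, Matrix.mulVec, dotProduct, hM, Matrix.of_apply,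
        dotp]
      congr 1
      have : ∑ l, x i l / s * y l = (∑ l, x i l * y l) / s := by
        rw [Finset.sum_div]
        exact Finset.sum_congr rfl fun l _ => by ring
      rw [this, div_le_div_iff_of_pos_right hs0]
    rw [h1, Set.preimage_comp, Set.preimage_comp,
      ← map_measureReal_apply hMm (hφ (measurableSet_singleton r)),
      ← map_measureReal_apply hUm (hφ (measurableSet_singleton r)), law1]
  have hB : ∀ r, (Measure.pi fun _ : Fin k => gaussianReal 0 1).real ((φ ∘ U.mulVec) ⁻¹' {r})
      = ∏ i, bern (pStar α t) (r i) := by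
    intro r
    rw [Set.preimage_comp, ← map_measureReal_apply hUm (hφ (measurableSet_singleton r)), law2]
    exact pi_bern _ r
  have hbpos : ∀ r : Fin k → Bool, 0 < ∏ i, bern (pStar α t) (r i) := by
    intro r
    refine Finset.prod_pos fun i _ => ?_
    cases r i <;> simp [bern, hp0, hp1]
  simp_rw [hQ, ← hB]
  have hd : ∑ i, ((v i : ℝ) - 1) ^ 2 = dev α x := by simp_rw [hvc]; exact hlam'
  rw [← hd]
  refine chi_gaussian v (by rw [hd]; exact hx) _ (hφ.comp hUm) fun r => ?_
  rw [hB]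
  exact hbpos r

instance gaussPi_prob (d : ℕ) (α : Fin d → ℝ) : IsProbabilityMeasure (gaussPi d α) := by
  unfold gaussPi; infer_instance

instance sample_prob (n d : ℕ) (α : Fin d → ℝ) : IsProbabilityMeasure (sampleMeasure n d α) := by
  unfold sampleMeasure; infer_instance

lemma pi_var {d : ℕ} (v : Fin d → ℝ≥0) (X : Fin d → ℝ → ℝ)
    (hX : ∀ i, MemLp (X i) 2 (gaussianReal 0 (v i))) :
    MemLp (fun ω : Fin d → ℝ => ∑ i, X i (ω i)) 2 (Measure.pi fun i => gaussianReal 0 (v i)) ∧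
    ∫ ω, (∑ i, X i (ω i) - ∑ i, ∫ x, X i x ∂(gaussianReal 0 (v i))) ^ 2
      ∂(Measure.pi fun i => gaussianReal 0 (v i)) = ∑ i, Var[X i; gaussianReal 0 (v i)] := by
  have hXi : ∀ i, MemLp (fun ω : Fin d → ℝ => X i (ω i)) 2
      (Measure.pi fun i => gaussianReal 0 (v i)) := fun i =>
    (hX i).comp_measurePreserving (measurePreserving_eval _ i)
  have hmem : MemLp (fun ω : Fin d → ℝ => ∑ i, X i (ω i)) 2
      (Measure.pi fun i => gaussianReal 0 (v i)) := memLp_finsetSum _ fun i _ => hXi i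
  refine ⟨hmem, ?_⟩
  have h := variance_sum_pi (μ := fun i => gaussianReal 0 (v i)) hX
  rw [← h]
  have e : (∑ i, fun ω : Fin d → ℝ => X i (ω i)) = fun ω : Fin d → ℝ => ∑ i, X i (ω i) := by
    ext ω; simp
  rw [e, variance_eq_integral hmem.aemeasurable]
  have hm : ∫ ω, ∑ i, X i (ω i) ∂(Measure.pi fun i => gaussianReal 0 (v i))
      = ∑ i, ∫ x, X i x ∂(gaussianReal 0 (v i)) := by
    rw [integral_finsetSum _ fun i _ => (hXi i).integrable (by norm_num)]
    refine Finset.sum_congr rfl fun i _ => ?_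
    have := (measurePreserving_eval (fun i => gaussianReal 0 (v i)) i)
    rw [← this.map_eq, integral_map this.measurable.aemeasurable]
    rw [this.map_eq]; exact (hX i).aestronglyMeasurable
  rw [hm]

lemma memLp_id_gauss (v : ℝ≥0) : MemLp (fun x : ℝ => x) 2 (gaussianReal 0 v) :=
  memLp_id_gaussianReal' 2 (by norm_num)

lemma memLp_sq_gauss (v : ℝ≥0) : MemLp (fun x : ℝ => x ^ 2) 2 (gaussianReal 0 v) := by
  have h4 : MemLp (fun x : ℝ => x) 4 (gaussianReal 0 v) := memLp_id_gaussianReal' 4 (by norm_num)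
  rw [memLp_two_iff_integrable_sq (by fun_prop)]
  have := h4.integrable_norm_pow (by norm_num)
  refine this.congr (ae_of_all _ fun x => ?_)
  simp only [Real.norm_eq_abs]
  rw [← pow_mul]
  exact (Even.pow_abs ⟨2, rfl⟩ x)

def C4 : ℝ := Var[fun x : ℝ => x ^ 2; gaussianReal 0 1]

lemma C4_nonneg : 0 ≤ C4 := variance_nonneg _ _

lemma integral_sq_gauss (v : ℝ≥0) : ∫ x : ℝ, x ^ 2 ∂(gaussianReal 0 v) = v := by
  have h := variance_fun_id_gaussianReal (μ := 0) (v := v)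
  rw [variance_of_integral_eq_zero (by fun_prop) integral_id_gaussianReal] at h
  exact h

lemma var_sq_gauss (v : ℝ≥0) :
    Var[fun x : ℝ => x ^ 2; gaussianReal 0 v] = (v : ℝ) ^ 2 * C4 := by
  have h : gaussianReal 0 v = (gaussianReal 0 1).map (fun x => √(v : ℝ) * x) := by
    rw [gaussianReal_map_const_mul]
    congr 1
    · simp
    · ext; simp
  rw [h, variance_map (by fun_prop) (by fun_prop)]
  have e : ((fun x : ℝ => x ^ 2) ∘ fun x => √(v : ℝ) * x) = fun x => (v : ℝ) * x ^ 2 := by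
    ext x
    simp only [Function.comp, mul_pow]
    rw [Real.sq_sqrt v.coe_nonneg]
  rw [e, variance_const_mul]
  rfl

lemma lin_sq {d : ℕ} (α : Fin d → ℝ) (hα : ∀ l, 0 ≤ α l) (a : Fin d → ℝ) :
    MemLp (fun y : Fin d → ℝ => ∑ l, a l * y l) 2 (gaussPi d α) ∧
    ∫ y, (∑ l, a l * y l) ^ 2 ∂(gaussPi d α) = ∑ l, a l ^ 2 * α l := by
  have h := pi_var (fun l => (α l).toNNReal) (fun l x => a l * x)
    (fun l => (memLp_id_gauss _).const_mul _)
  refine ⟨h.1, ?_⟩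
  have h2 := h.2
  have e1 : ∀ l, ∫ x, a l * x ∂(gaussianReal 0 (α l).toNNReal) = 0 := fun l => by
    rw [integral_const_mul, integral_id_gaussianReal, mul_zero]
  have e2 : ∀ l, Var[fun x => a l * x; gaussianReal 0 (α l).toNNReal] = a l ^ 2 * α l := fun l => by
    rw [variance_const_mul, variance_fun_id_gaussianReal, Real.coe_toNNReal _ (hα _)]
  simp only [e1, e2, Finset.sum_const_zero, sub_zero] at h2
  exact h2

def eps {d : ℕ} (α : Fin d → ℝ) : ℝ := (∑ l, α l ^ 4) / (sig2 α) ^ 2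

lemma eps_nonneg {d : ℕ} (α : Fin d → ℝ) : 0 ≤ eps α :=
  div_nonneg (Finset.sum_nonneg fun l _ => by positivity) (sq_nonneg _)

lemma diag_moment {d : ℕ} (α : Fin d → ℝ) (hα : ∀ l, 0 ≤ α l) (hs : 0 < sig2 α) :
    Integrable (fun x => (Sent α x x - 1) ^ 2) (gaussPi d α) ∧
    ∫ x, (Sent α x x - 1) ^ 2 ∂(gaussPi d α) = C4 * eps α := by
  have h := pi_var (fun l => (α l).toNNReal) (fun l x => α l * x ^ 2)
    (fun l => (memLp_sq_gauss _).const_mul _)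
  have e : ∀ x : Fin d → ℝ, (Sent α x x - 1) ^ 2
      = (∑ l, α l * (x l) ^ 2 - sig2 α) ^ 2 * ((sig2 α) ^ 2)⁻¹ := by
    intro x
    have : Sent α x x - 1 = (∑ l, α l * (x l) ^ 2 - sig2 α) / sig2 α := by
      rw [sub_div, div_self hs.ne', Sent]
      congr 2
      exact Finset.sum_congr rfl fun l _ => by ring
    rw [this, div_pow, div_eq_mul_inv]
  have h2 := h.2
  simp only [integral_const_mul, integral_sq_gauss, variance_const_mul, var_sq_gauss,
    Real.coe_toNNReal _ (hα _)] at h2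
  have hsig : ∑ l, α l * α l = sig2 α := Finset.sum_congr rfl fun l _ => by ring
  rw [hsig] at h2
  simp_rw [e]
  constructor
  · refine Integrable.mul_const ?_ _
    exact (h.1.sub (memLp_const (sig2 α))).integrable_sq
  · rw [integral_mul_const]
    unfold gaussPi
    rw [h2, eps, div_eq_mul_inv, ← mul_assoc, Finset.mul_sum]
    congr 1
    exact Finset.sum_congr rfl fun l _ => by ring

lemma off_moment {d : ℕ} (α : Fin d → ℝ) (hα : ∀ l, 0 ≤ α l) (hs : 0 < sig2 α) :
    Integrable (fun z : (Fin d → ℝ) × (Fin d → ℝ) => (Sent α z.1 z.2) ^ 2)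
      ((gaussPi d α).prod (gaussPi d α)) ∧
    ∫ z, (Sent α z.1 z.2) ^ 2 ∂((gaussPi d α).prod (gaussPi d α)) = eps α := by
  have hl : ∀ l, Integrable (fun y : Fin d → ℝ => (y l) ^ 2) (gaussPi d α) := by
    intro l
    have := (lin_sq α hα (Pi.single l 1)).1
    simp only [Pi.single_apply, ite_mul, one_mul, zero_mul, Finset.sum_ite_eq',
      Finset.mem_univ, if_true] at this
    exact this.integrable_sq
  have hm : MemLp (fun z : (Fin d → ℝ) × (Fin d → ℝ) => ∑ l, α l * z.1 l * z.2 l) 2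
      ((gaussPi d α).prod (gaussPi d α)) := by
    refine memLp_finsetSum _ fun l _ => ?_
    rw [memLp_two_iff_integrable_sq (by fun_prop)]
    have := ((hl l).mul_prod (hl l)).const_mul ((α l) ^ 2)
    refine this.congr (ae_of_all _ fun z => ?_)
    simp only
    ring
  have hIntg := hm.integrable_sq
  have e : ∀ z : (Fin d → ℝ) × (Fin d → ℝ), (Sent α z.1 z.2) ^ 2
      = (∑ l, α l * z.1 l * z.2 l) ^ 2 * ((sig2 α) ^ 2)⁻¹ := by
    intro z
    rw [Sent, div_pow, div_eq_mul_inv]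
  simp_rw [e]
  refine ⟨hIntg.mul_const _, ?_⟩
  rw [integral_mul_const, integral_prod _ hIntg, eps, div_eq_mul_inv]
  congr 1
  have h1 : ∀ x : Fin d → ℝ, ∫ y, (∑ l, α l * x l * y l) ^ 2 ∂(gaussPi d α)
      = ∑ l, (α l) ^ 3 * (x l) ^ 2 := by
    intro x
    rw [(lin_sq α hα (fun l => α l * x l)).2]
    exact Finset.sum_congr rfl fun l _ => by ring
  simp only [h1]
  rw [integral_finsetSum _ fun l _ => (hl l).const_mul _]
  refine Finset.sum_congr rfl fun l _ => ?_
  rw [integral_const_mul]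
  have := (lin_sq α hα (Pi.single l 1)).2
  simp only [Pi.single_apply, ite_mul, one_mul, zero_mul, Finset.sum_ite_eq',
      Finset.mem_univ, if_true, ite_pow, one_pow] at this
  rw [this]
  simp
  ring

lemma dev_moment {d : ℕ} (n : ℕ) (α : Fin d → ℝ) (hα : ∀ l, 0 ≤ α l) (hs : 0 < sig2 α) :
    Integrable (fun x : Fin n → Fin d → ℝ => dev α x) (sampleMeasure n d α) ∧
    ∫ x, dev α x ∂(sampleMeasure n d α) ≤ (C4 + 1) * (n : ℝ) ^ 2 * eps α := by
  have key : ∀ i j : Fin n, Integrable (fun x : Fin n → Fin d → ℝ =>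
      (Sent α (x i) (x j) - if i = j then 1 else 0) ^ 2) (sampleMeasure n d α) ∧
      ∫ x, (Sent α (x i) (x j) - if i = j then 1 else 0) ^ 2 ∂(sampleMeasure n d α)
        ≤ (C4 + 1) * eps α := by
    intro i j
    have hC := C4_nonneg
    have hE := eps_nonneg α
    by_cases hij : i = j
    · subst hij
      simp only [if_true]
      have hp : MeasurePreserving (fun x : Fin n → Fin d → ℝ => x i) (sampleMeasure n d α)
        (gaussPi d α) := measurePreserving_eval (fun _ => gaussPi d α) i
      have hd := diag_moment α hα hs
      refine ⟨hp.integrable_comp_of_integrable hd.1, ?_⟩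
      have : ∫ x : Fin n → Fin d → ℝ, (Sent α (x i) (x i) - 1) ^ 2 ∂(sampleMeasure n d α)
          = ∫ y, (Sent α y y - 1) ^ 2 ∂(gaussPi d α) := by
        rw [← hp.map_eq, integral_map hp.measurable.aemeasurable]
        rw [hp.map_eq]; exact hd.1.aestronglyMeasurable
      rw [this, hd.2]
      nlinarith
    · simp only [hij, if_false, sub_zero]
      have hp : MeasurePreserving (fun x : Fin n → Fin d → ℝ => (x i, x j)) (sampleMeasure n d α)
        ((gaussPi d α).prod (gaussPi d α)) := by
        refine ⟨by fun_prop, ?_⟩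
        have hind := (iIndepFun_pi (μ := fun _ : Fin n => gaussPi d α)
          (X := fun _ x => x) (fun _ => aemeasurable_id)).indepFun hij
        rw [indepFun_iff_map_prod_eq_prod_map_map (measurable_pi_apply i).aemeasurable
          (measurable_pi_apply j).aemeasurable] at hind
        unfold sampleMeasure
        rw [hind, (measurePreserving_eval (fun _ : Fin n => gaussPi d α) i).map_eq,
          (measurePreserving_eval (fun _ : Fin n => gaussPi d α) j).map_eq]
      have hd := off_moment α hα hs
      refine ⟨hp.integrable_comp_of_integrable hd.1, ?_⟩
      have : ∫ x : Fin n → Fin d → ℝ, (Sent α (x i) (x j)) ^ 2 ∂(sampleMeasure n d α)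
          = ∫ z, (Sent α z.1 z.2) ^ 2 ∂((gaussPi d α).prod (gaussPi d α)) := by
        rw [← hp.map_eq, integral_map hp.measurable.aemeasurable]
        rw [hp.map_eq]; exact hd.1.aestronglyMeasurable
      rw [this, hd.2]
      nlinarith
  unfold dev
  refine ⟨integrable_finsetSum _ fun i _ => integrable_finsetSum _ fun j _ => (key i j).1, ?_⟩
  rw [integral_finsetSum _ fun i _ => integrable_finsetSum _ fun j _ => (key i j).1]
  calc _ ≤ ∑ i : Fin n, ∑ j : Fin n, (C4 + 1) * eps α := by
        refine Finset.sum_le_sum fun i _ => ?_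
        rw [integral_finsetSum _ fun j _ => (key i j).1]
        exact Finset.sum_le_sum fun j _ => (key i j).2
    _ = _ := by simp; ring

/-- relative entropy on a finite type -/
def KL {G : Type*} [Fintype G] (p r : G → ℝ) : ℝ := ∑ g, p g * Real.log (p g / r g)

lemma pinsker {G : Type*} [Fintype G] (p r : G → ℝ) (hp : ∀ g, 0 ≤ p g) (hr : ∀ g, 0 < r g)
    (hps : ∑ g, p g = 1) (hrs : ∑ g, r g = 1) : (∑ g, |p g - r g|) ^ 2 ≤ 4 * KL p r := by
  have h1 : ∑ g, (√(p g) - √(r g)) ^ 2 ≤ KL p r := by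
    have e : ∑ g, (√(p g) - √(r g)) ^ 2 = ∑ g, (2 * (p g - √(p g) * √(r g)) + (r g - p g)) := by
      refine Finset.sum_congr rfl fun g _ => ?_
      have a := Real.sq_sqrt (hp g)
      have b := Real.sq_sqrt (hr g).le
      nlinarith
    rw [e, Finset.sum_add_distrib, Finset.sum_sub_distrib, hps, hrs, sub_self, add_zero]
    refine Finset.sum_le_sum fun g _ => ?_
    rcases (hp g).eq_or_lt with h | h
    · rw [← h]; simp
    · have a := Real.sq_sqrt (hp g)
      have sp : 0 < √(p g) := Real.sqrt_pos.mpr h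
      have sr : 0 < √(r g) := Real.sqrt_pos.mpr (hr g)
      have hl := Real.log_le_sub_one_of_pos (div_pos sr sp)
      have e1 : Real.log (p g / r g) = -2 * Real.log (√(r g) / √(p g)) := by
        rw [← Real.sqrt_div (hr g).le, Real.log_sqrt (div_pos (hr g) h).le,
          Real.log_div (hr g).ne' h.ne', Real.log_div h.ne' (hr g).ne']
        ring
      rw [e1]
      have e2 : p g * (√(r g) / √(p g)) = √(p g) * √(r g) := by
        field_simp
        nlinarith
      nlinarith
  have h2 : ∑ g, (√(p g) + √(r g)) ^ 2 ≤ 4 := by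
    have : ∑ g, (√(p g) + √(r g)) ^ 2 ≤ ∑ g, (2 * p g + 2 * r g) := by
      refine Finset.sum_le_sum fun g _ => ?_
      have a := Real.sq_sqrt (hp g)
      have b := Real.sq_sqrt (hr g).le
      nlinarith [sq_nonneg (√(p g) - √(r g))]
    rw [Finset.sum_add_distrib, ← Finset.mul_sum, ← Finset.mul_sum, hps, hrs] at this
    linarith
  have h3 : ∑ g, |p g - r g| = ∑ g, |√(p g) - √(r g)| * (√(p g) + √(r g)) := by
    refine Finset.sum_congr rfl fun g _ => ?_
    have a := Real.sq_sqrt (hp g)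
    have b := Real.sq_sqrt (hr g).le
    have : p g - r g = (√(p g) - √(r g)) * (√(p g) + √(r g)) := by nlinarith
    rw [this, abs_mul, abs_of_nonneg (a := √(p g) + √(r g)) (by positivity)]
  rw [h3]
  refine (Finset.sum_mul_sq_le_sq_mul_sq _ _ _).trans ?_
  simp only [sq_abs]
  have h4 : 0 ≤ ∑ g, (√(p g) - √(r g)) ^ 2 := Finset.sum_nonneg fun g _ => sq_nonneg _
  have h5 : 0 ≤ ∑ g, (√(p g) + √(r g)) ^ 2 := Finset.sum_nonneg fun g _ => sq_nonneg _
  nlinarith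

lemma weighted_cs {Ω : Type*} [MeasurableSpace Ω] (μ : Measure Ω) [IsProbabilityMeasure μ]
    (w h : Ω → ℝ) (hw : Measurable w) (hh : Measurable h) (hw0 : ∀ ω, 0 ≤ w ω)
    (hw1 : ∀ ω, w ω ≤ 1) (C : ℝ) (hC : ∀ ω, |h ω| ≤ C) (hp : 0 < ∫ ω, w ω ∂μ) :
    (∫ ω, w ω * h ω ∂μ) ^ 2 ≤ (∫ ω, w ω ∂μ) * ∫ ω, w ω * h ω ^ 2 ∂μ := by
  have hb : ∀ ω, |w ω| ≤ 1 := fun ω => by rw [abs_of_nonneg (hw0 ω)]; exact hw1 ω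
  have i0 : Integrable w μ := Integrable.of_bound hw.aestronglyMeasurable 1 (ae_of_all _ hb)
  have hC0 : 0 ≤ C := by
    obtain ⟨ω⟩ := μ.nonempty_of_neZero
    exact (abs_nonneg _).trans (hC ω)
  have i1 : Integrable (fun ω => w ω * h ω) μ :=
    Integrable.of_bound (hw.mul hh).aestronglyMeasurable C (ae_of_all _ fun ω => by
      rw [Real.norm_eq_abs, abs_mul]
      nlinarith [hb ω, hC ω, abs_nonneg (w ω), abs_nonneg (h ω)])
  have i2 : Integrable (fun ω => w ω * h ω ^ 2) μ :=
    Integrable.of_bound (hw.mul (hh.pow_const 2)).aestronglyMeasurable (C ^ 2)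
      (ae_of_all _ fun ω => by
        rw [Real.norm_eq_abs, abs_mul, abs_pow]
        have : |h ω| ^ 2 ≤ C ^ 2 := pow_le_pow_left₀ (abs_nonneg _) (hC ω) 2
        nlinarith [hb ω, abs_nonneg (w ω), sq_nonneg (|h ω|)])
  set c := (∫ ω, w ω * h ω ∂μ) / ∫ ω, w ω ∂μ with hc
  have h1 : 0 ≤ ∫ ω, w ω * (h ω - c) ^ 2 ∂μ :=
    integral_nonneg fun ω => mul_nonneg (hw0 ω) (sq_nonneg _)
  have h2 : ∫ ω, w ω * (h ω - c) ^ 2 ∂μ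
      = ∫ ω, w ω * h ω ^ 2 ∂μ - 2 * c * ∫ ω, w ω * h ω ∂μ + c ^ 2 * ∫ ω, w ω ∂μ := by
    have : ∀ ω, w ω * (h ω - c) ^ 2
      = w ω * h ω ^ 2 - 2 * c * (w ω * h ω) + c ^ 2 * w ω := fun ω => by ring
    simp_rw [this]
    rw [integral_add (f := fun ω => w ω * h ω ^ 2 - 2 * c * (w ω * h ω))
      (i2.sub (i1.const_mul _)) (i0.const_mul _),
      integral_sub i2 (i1.const_mul _), integral_const_mul, integral_const_mul]
  have h3 : ∫ ω, w ω * h ω ∂μ = c * ∫ ω, w ω ∂μ := by rw [hc]; field_simp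
  rw [h2, h3] at h1
  rw [h3]
  nlinarith

lemma kl_step {Ω G R : Type*} [MeasurableSpace Ω] [Fintype G] [Fintype R] (μ : Measure Ω)
    [IsProbabilityMeasure μ] (w : Ω → G → ℝ) (q : Ω → R → ℝ) (r : G → ℝ) (b : R → ℝ)
    (hwm : ∀ g, Measurable fun ω => w ω g) (hqm : ∀ ρ, Measurable fun ω => q ω ρ)
    (hw0 : ∀ ω g, 0 ≤ w ω g) (hq0 : ∀ ω ρ, 0 ≤ q ω ρ)
    (hw1 : ∀ ω, ∑ g, w ω g = 1) (hq1 : ∀ ω, ∑ ρ, q ω ρ = 1)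
    (hr : ∀ g, 0 < r g) (hb : ∀ ρ, 0 < b ρ) (hb1 : ∑ ρ, b ρ = 1) :
    KL (fun gρ : G × R => ∫ ω, w ω gρ.1 * q ω gρ.2 ∂μ) (fun gρ => r gρ.1 * b gρ.2)
      ≤ KL (fun g => ∫ ω, w ω g ∂μ) r + ∫ ω, ∑ ρ, (q ω ρ - b ρ) ^ 2 / b ρ ∂μ := by
  have hwle : ∀ ω g, w ω g ≤ 1 := fun ω g => by
    rw [← hw1 ω]; exact Finset.single_le_sum (fun g _ => hw0 ω g) (Finset.mem_univ g)
  have hqle : ∀ ω ρ, q ω ρ ≤ 1 := fun ω ρ => by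
    rw [← hq1 ω]; exact Finset.single_le_sum (fun ρ _ => hq0 ω ρ) (Finset.mem_univ ρ)
  have hble : ∀ ρ, b ρ ≤ 1 := fun ρ => by
    rw [← hb1]; exact Finset.single_le_sum (fun ρ _ => (hb ρ).le) (Finset.mem_univ ρ)
  have hqb : ∀ ω ρ, |q ω ρ - b ρ| ≤ 1 := fun ω ρ => by
    rw [abs_le]; constructor <;> linarith [hq0 ω ρ, hqle ω ρ, hble ρ, hb ρ]
  have iw : ∀ g, Integrable (fun ω => w ω g) μ := fun g =>
    Integrable.of_bound (hwm g).aestronglyMeasurable 1 (ae_of_all _ fun ω => by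
      rw [Real.norm_eq_abs, abs_of_nonneg (hw0 ω g)]; exact hwle ω g)
  have iwq : ∀ g ρ, Integrable (fun ω => w ω g * q ω ρ) μ := fun g ρ =>
    Integrable.of_bound ((hwm g).mul (hqm ρ)).aestronglyMeasurable 1 (ae_of_all _ fun ω => by
      rw [Real.norm_eq_abs, abs_of_nonneg (mul_nonneg (hw0 ω g) (hq0 ω ρ))]
      exact mul_le_one₀ (hwle ω g) (hq0 ω ρ) (hqle ω ρ))
  have iwc : ∀ g ρ, Integrable (fun ω => w ω g * ((q ω ρ - b ρ) ^ 2 / b ρ)) μ := fun g ρ => by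
    refine Integrable.bdd_mul (c := 1) ?_ (hwm g).aestronglyMeasurable
      (ae_of_all _ fun ω => by
        rw [Real.norm_eq_abs, abs_of_nonneg (hw0 ω g)]; exact hwle ω g)
    refine Integrable.div_const ?_ _
    refine Integrable.of_bound (((hqm ρ).sub_const _).pow_const 2).aestronglyMeasurable 1
      (ae_of_all _ fun ω => by
        rw [Real.norm_eq_abs, abs_pow]
        exact pow_le_one₀ (abs_nonneg _) (hqb ω ρ))
  have hpp : ∀ g, ∑ ρ, ∫ ω, w ω g * q ω ρ ∂μ = ∫ ω, w ω g ∂μ := by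
    intro g
    rw [← integral_finsetSum _ fun ρ _ => iwq g ρ]
    refine integral_congr_ae (ae_of_all _ fun ω => ?_)
    simp only
    rw [← Finset.mul_sum, hq1, mul_one]
  have hpp0 : ∀ g ρ, 0 ≤ ∫ ω, w ω g * q ω ρ ∂μ := fun g ρ =>
    integral_nonneg fun ω => mul_nonneg (hw0 ω g) (hq0 ω ρ)
  have main : ∀ g, ∑ ρ, (∫ ω, w ω g * q ω ρ ∂μ) *
        Real.log ((∫ ω, w ω g * q ω ρ ∂μ) / (r g * b ρ))
      ≤ (∫ ω, w ω g ∂μ) * Real.log ((∫ ω, w ω g ∂μ) / r g)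
        + ∑ ρ, ∫ ω, w ω g * ((q ω ρ - b ρ) ^ 2 / b ρ) ∂μ := by
    intro g
    have hpos : 0 ≤ ∑ ρ, ∫ ω, w ω g * ((q ω ρ - b ρ) ^ 2 / b ρ) ∂μ :=
      Finset.sum_nonneg fun ρ _ => integral_nonneg fun ω =>
        mul_nonneg (hw0 ω g) (div_nonneg (sq_nonneg _) (hb ρ).le)
    have hp0 : 0 ≤ ∫ ω, w ω g ∂μ := integral_nonneg fun ω => hw0 ω g
    rcases hp0.eq_or_lt with hp | hp
    · have hz : ∀ ρ, ∫ ω, w ω g * q ω ρ ∂μ = 0 := by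
        intro ρ
        refine le_antisymm ?_ (hpp0 g ρ)
        have := Finset.single_le_sum (fun ρ _ => hpp0 g ρ) (Finset.mem_univ ρ)
        rw [hpp g, ← hp] at this
        exact this
      simp_rw [hz, ← hp]
      simpa using hpos
    · set p := ∫ ω, w ω g ∂μ with hpdef
      set P : R → ℝ := fun ρ => ∫ ω, w ω g * q ω ρ ∂μ with hP
      have hle : ∀ ρ, P ρ * Real.log (P ρ / (r g * b ρ))
          ≤ P ρ * Real.log (p / r g) + ((P ρ - p * b ρ) ^ 2 / (p * b ρ) + (P ρ - p * b ρ)) := by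
        intro ρ
        have e0 : (P ρ - p * b ρ) ^ 2 / (p * b ρ) + (P ρ - p * b ρ)
            = P ρ * (P ρ / (p * b ρ) - 1) := by
          have := (hb ρ).ne'
          field_simp
          ring
        rw [e0]
        rcases (hpp0 g ρ).eq_or_lt with h | h
        · have h' : P ρ = 0 := h.symm
          simp [h']
        · have h' : 0 < P ρ := h
          have e1 : P ρ / (r g * b ρ) = (p / r g) * (P ρ / (p * b ρ)) := by
            have := (hb ρ).ne'
            have := (hr g).ne'
            field_simp
          have h3 : 0 < P ρ / (p * b ρ) := div_pos h' (mul_pos hp (hb ρ))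
          rw [e1, Real.log_mul (div_pos hp (hr g)).ne' h3.ne', mul_add]
          have := Real.log_le_sub_one_of_pos h3
          nlinarith
      have hcs : ∀ ρ, (P ρ - p * b ρ) ^ 2 / (p * b ρ)
          ≤ ∫ ω, w ω g * ((q ω ρ - b ρ) ^ 2 / b ρ) ∂μ := by
        intro ρ
        have c1 := weighted_cs μ (fun ω => w ω g) (fun ω => q ω ρ - b ρ) (hwm g)
          ((hqm ρ).sub_const _) (fun ω => hw0 ω g) (fun ω => hwle ω g) 1 (fun ω => hqb ω ρ) hp
        have c2 : ∫ ω, w ω g * (q ω ρ - b ρ) ∂μ = P ρ - p * b ρ := by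
          simp_rw [mul_sub]
          rw [integral_sub (iwq g ρ) ((iw g).mul_const _), integral_mul_const]
        have c3 : ∫ ω, w ω g * ((q ω ρ - b ρ) ^ 2 / b ρ) ∂μ
            = (∫ ω, w ω g * (q ω ρ - b ρ) ^ 2 ∂μ) / b ρ := by
          rw [← integral_div]
          refine integral_congr_ae (ae_of_all _ fun ω => ?_)
          simp only
          ring
        rw [c2] at c1
        rw [c3, div_le_div_iff₀ (mul_pos hp (hb ρ)) (hb ρ)]
        have := (hb ρ).le
        calc (P ρ - p * b ρ) ^ 2 * b ρ ≤ (p * ∫ ω, w ω g * (q ω ρ - b ρ) ^ 2 ∂μ) * b ρ :=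
              mul_le_mul_of_nonneg_right c1 this
          _ = _ := by ring
      have hPs : ∑ ρ, P ρ = p := hpp g
      calc ∑ ρ, P ρ * Real.log (P ρ / (r g * b ρ))
          ≤ ∑ ρ, (P ρ * Real.log (p / r g)
              + ((P ρ - p * b ρ) ^ 2 / (p * b ρ) + (P ρ - p * b ρ))) :=
            Finset.sum_le_sum fun ρ _ => hle ρ
        _ = p * Real.log (p / r g) + ∑ ρ, (P ρ - p * b ρ) ^ 2 / (p * b ρ) := by
            rw [Finset.sum_add_distrib, Finset.sum_add_distrib, ← Finset.sum_mul, hPs,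
              Finset.sum_sub_distrib, ← Finset.mul_sum, hPs, hb1]
            ring
        _ ≤ _ := by
            have := Finset.sum_le_sum fun ρ (_ : ρ ∈ Finset.univ) => hcs ρ
            linarith
  unfold KL
  rw [Fintype.sum_prod_type]
  have hsum := Finset.sum_le_sum fun g (_ : g ∈ Finset.univ) => main g
  rw [Finset.sum_add_distrib] at hsum
  refine hsum.trans (le_of_eq ?_)
  congr 1
  rw [Finset.sum_comm, integral_finsetSum]
  · refine Finset.sum_congr rfl fun ρ _ => ?_
    rw [← integral_finsetSum _ fun g _ => iwc g ρ]
    refine integral_congr_ae (ae_of_all _ fun ω => ?_)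
    simp only
    rw [← Finset.sum_mul, hw1, one_mul]
  · intro ρ _
    refine Integrable.div_const ?_ _
    refine Integrable.of_bound (((hqm ρ).sub_const _).pow_const 2).aestronglyMeasurable 1
      (ae_of_all _ fun ω => by
        rw [Real.norm_eq_abs, abs_pow]
        exact pow_le_one₀ (abs_nonneg _) (hqb ω ρ))

/-- Graphs on `Fin n` coded row by row. -/
abbrev Gr (n : ℕ) := (j : Fin n) → (Fin (j : ℕ) → Bool)

def rER (p : ℝ) (n : ℕ) (g : Gr n) : ℝ := ∏ j, ∏ i, bern p (g j i)

def grEquiv (n : ℕ) : Gr n × (Fin n → Bool) ≃ Gr (n + 1) :=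
  (Equiv.prodComm _ _).trans (Fin.snocEquiv (fun j : Fin (n + 1) => (Fin (j : ℕ) → Bool)))

lemma grEquiv_castSucc (n : ℕ) (g : Gr n) (ρ : Fin n → Bool) (j : Fin n) :
    (grEquiv n (g, ρ)) j.castSucc = g j := by
  simp only [grEquiv, Equiv.trans_apply, Equiv.prodComm_apply, Prod.swap, Fin.snocEquiv,
    Equiv.coe_fn_mk]
  exact Fin.snoc_castSucc (α := fun j : Fin (n + 1) => (Fin (j : ℕ) → Bool)) _ _ _

lemma grEquiv_last (n : ℕ) (g : Gr n) (ρ : Fin n → Bool) :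
    (grEquiv n (g, ρ)) (Fin.last n) = ρ := by
  simp only [grEquiv, Equiv.trans_apply, Equiv.prodComm_apply, Prod.swap, Fin.snocEquiv,
    Equiv.coe_fn_mk]
  exact Fin.snoc_last (α := fun j : Fin (n + 1) => (Fin (j : ℕ) → Bool)) _ _

lemma bern_sum (p : ℝ) (k : ℕ) : ∑ ρ : Fin k → Bool, ∏ i, bern p (ρ i) = 1 := by
  have := Finset.prod_univ_sum (fun _ : Fin k => (Finset.univ : Finset Bool))
    (fun _ b => bern p b)
  rw [Fintype.piFinset_univ] at this
  rw [← this]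
  simp [bern]

lemma bern_pos {p : ℝ} (h0 : 0 < p) (h1 : p < 1) (b : Bool) : 0 < bern p b := by
  cases b <;> simp [bern] <;> linarith

lemma rER_snoc (p : ℝ) (n : ℕ) (g : Gr n) (ρ : Fin n → Bool) :
    rER p (n + 1) (grEquiv n (g, ρ)) = rER p n g * ∏ i, bern p (ρ i) := by
  unfold rER
  rw [Fin.prod_univ_castSucc]
  congr 1
  · refine Finset.prod_congr rfl fun j _ => ?_
    have := grEquiv_castSucc n g ρ j
    exact congrArg (fun h : Fin (j : ℕ) → Bool => ∏ i, bern p (h i)) this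
  · have := grEquiv_last n g ρ
    exact congrArg (fun h : Fin n → Bool => ∏ i, bern p (h i)) this

lemma rER_sum (p : ℝ) (n : ℕ) : ∑ g, rER p n g = 1 := by
  induction n with
  | zero => simp [rER]
  | succ n ih =>
    rw [← (grEquiv n).sum_comp, Fintype.sum_prod_type]
    simp_rw [rER_snoc, ← Finset.mul_sum, bern_sum, mul_one]
    exact ih

def wt {E : Type*} (fac : ∀ k : ℕ, (Fin k → E) → E → (Fin k → Bool) → ℝ) (n : ℕ)
    (X : Fin n → E) (g : Gr n) : ℝ :=
  ∏ j : Fin n, fac j (fun i => X (Fin.castLE j.is_lt.le i)) (X j) (g j)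

lemma wt_snoc {E : Type*} (fac : ∀ k : ℕ, (Fin k → E) → E → (Fin k → Bool) → ℝ) (n : ℕ)
    (X : Fin n → E) (y : E) (g : Gr n) (ρ : Fin n → Bool) :
    wt fac (n + 1) (Fin.snoc X y : Fin (n + 1) → E) (grEquiv n (g, ρ))
      = wt fac n X g * fac n X y ρ := by
  unfold wt
  rw [Fin.prod_univ_castSucc]
  have hh : ∀ i : Fin n, (Fin.snoc X y : Fin (n + 1) → E) i.castSucc = X i := fun i =>
    Fin.snoc_castSucc (α := fun _ => E) _ _ _
  have hl : (Fin.snoc X y : Fin (n + 1) → E) (Fin.last n) = y :=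
    Fin.snoc_last (α := fun _ => E) _ _
  congr 1
  · refine Finset.prod_congr rfl fun j _ => ?_
    have h1 : (fun i => (Fin.snoc X y : Fin (n + 1) → E)
        (Fin.castLE (j.castSucc).is_lt.le i)) = fun i : Fin (j : ℕ) =>
          X (Fin.castLE j.is_lt.le i) := by
      funext i
      exact hh (Fin.castLE j.is_lt.le i)
    rw [hh]
    have h2 := grEquiv_castSucc n g ρ j
    exact congrArg₂ (fun (a : Fin (j : ℕ) → E) (h : Fin (j : ℕ) → Bool) => fac j a (X j) h) h1 h2
  · have h1 : (fun i => (Fin.snoc X y : Fin (n + 1) → E)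
        (Fin.castLE (Fin.last n).is_lt.le i)) = X := by
      funext i
      exact hh i
    rw [hl]
    have h2 := grEquiv_last n g ρ
    exact congrArg₂ (fun (a : Fin n → E) (h : Fin n → Bool) => fac n a y h) h1 h2

structure FacOK {E : Type*} [MeasurableSpace E]
    (fac : ∀ k : ℕ, (Fin k → E) → E → (Fin k → Bool) → ℝ) : Prop where
  nonneg : ∀ k Z y ρ, 0 ≤ fac k Z y ρ
  sum : ∀ k Z y, ∑ ρ, fac k Z y ρ = 1
  meas : ∀ k ρ, Measurable fun z : (Fin k → E) × E => fac k z.1 z.2 ρ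

lemma FacOK.le_one {E : Type*} [MeasurableSpace E]
    {fac : ∀ k : ℕ, (Fin k → E) → E → (Fin k → Bool) → ℝ} (h : FacOK fac) (k Z y ρ) :
    fac k Z y ρ ≤ 1 := by
  rw [← h.sum k Z y]
  exact Finset.single_le_sum (fun g _ => h.nonneg k Z y g) (Finset.mem_univ ρ)

lemma wt_nonneg {E : Type*} [MeasurableSpace E]
    {fac : ∀ k : ℕ, (Fin k → E) → E → (Fin k → Bool) → ℝ} (h : FacOK fac) (n X g) :
    0 ≤ wt fac n X g := Finset.prod_nonneg fun _ _ => h.nonneg _ _ _ _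

lemma wt_le_one {E : Type*} [MeasurableSpace E]
    {fac : ∀ k : ℕ, (Fin k → E) → E → (Fin k → Bool) → ℝ} (h : FacOK fac) (n X g) :
    wt fac n X g ≤ 1 :=
  Finset.prod_le_one (fun _ _ => h.nonneg _ _ _ _) fun _ _ => h.le_one _ _ _ _

lemma wt_meas {E : Type*} [MeasurableSpace E]
    {fac : ∀ k : ℕ, (Fin k → E) → E → (Fin k → Bool) → ℝ} (h : FacOK fac) (n g) :
    Measurable fun X => wt fac n X g := by
  unfold wt
  refine Finset.measurable_prod _ fun j _ => ?_
  refine (h.meas j (g j)).comp (g := fun z : (Fin (j : ℕ) → E) × E => fac j z.1 z.2 (g j))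
    (f := fun X : Fin n → E => (fun i => X (Fin.castLE j.is_lt.le i), X j)) ?_
  refine Measurable.prodMk ?_ (measurable_pi_apply _)
  exact measurable_pi_lambda _ fun i => measurable_pi_apply _

lemma wt_sum {E : Type*} [MeasurableSpace E]
    {fac : ∀ k : ℕ, (Fin k → E) → E → (Fin k → Bool) → ℝ} (h : FacOK fac) (n X) :
    ∑ g, wt fac n X g = 1 := by
  induction n with
  | zero => simp [wt]
  | succ n ih =>
    obtain ⟨X', y, rfl⟩ : ∃ X' : Fin n → E, ∃ y, X = (Fin.snoc X' y : Fin (n + 1) → E) :=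
      ⟨_, _, (Fin.snoc_init_self X).symm⟩
    rw [← (grEquiv n).sum_comp, Fintype.sum_prod_type]
    simp_rw [wt_snoc, ← Finset.mul_sum, h.sum, mul_one]
    exact ih X'

lemma integral_snoc {E : Type*} [MeasurableSpace E] (γ : Measure E) [IsProbabilityMeasure γ]
    (n : ℕ) (f : (Fin (n + 1) → E) → ℝ) (hf : Integrable f (Measure.pi fun _ => γ)) :
    ∫ X, f X ∂(Measure.pi fun _ : Fin (n + 1) => γ)
      = ∫ Z, ∫ y, f (Fin.snoc Z y : Fin (n + 1) → E) ∂γ ∂(Measure.pi fun _ : Fin n => γ) := by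
  have hmp := (measurePreserving_piFinSuccAbove (fun _ : Fin (n + 1) => γ) (Fin.last n)).symm
  have hi := hmp.integrable_comp_of_integrable hf
  rw [← hmp.integral_comp (MeasurableEquiv.measurableEmbedding _)]
  refine (integral_prod_symm _ hi).trans ?_
  refine integral_congr_ae (ae_of_all _ fun Z => integral_congr_ae (ae_of_all _ fun y => ?_))
  exact congrArg f (Fin.insertNth_last' y Z)

lemma chain_kl {E : Type*} [MeasurableSpace E] (γ : Measure E) [IsProbabilityMeasure γ]
    {fac : ∀ k : ℕ, (Fin k → E) → E → (Fin k → Bool) → ℝ} (h : FacOK fac)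
    (p : ℝ) (hp0 : 0 < p) (hp1 : p < 1) (n : ℕ) :
    KL (fun g => ∫ X, wt fac n X g ∂(Measure.pi fun _ : Fin n => γ)) (rER p n)
      ≤ ∑ k ∈ Finset.range n, ∫ Z, ∑ ρ : Fin k → Bool,
        ((∫ y, fac k Z y ρ ∂γ) - ∏ i, bern p (ρ i)) ^ 2 / (∏ i, bern p (ρ i))
          ∂(Measure.pi fun _ : Fin k => γ) := by
  induction n with
  | zero => simp [KL, wt, rER]
  | succ n ih =>
    have hrp : ∀ g, 0 < rER p n g := fun g =>
      Finset.prod_pos fun _ _ => Finset.prod_pos fun _ _ => bern_pos hp0 hp1 _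
    have hbp : ∀ ρ : Fin n → Bool, 0 < ∏ i, bern p (ρ i) := fun ρ =>
      Finset.prod_pos fun _ _ => bern_pos hp0 hp1 _
    have hIntg : ∀ Z ρ, Integrable (fun y => fac n Z y ρ) γ := fun Z ρ => by
      refine Integrable.of_bound (C := 1) ?_ (ae_of_all _ fun y => ?_)
      · exact ((h.meas n ρ).comp measurable_prodMk_left).aestronglyMeasurable
      · rw [Real.norm_eq_abs, abs_of_nonneg (h.nonneg _ _ _ _)]; exact h.le_one _ _ _ _
    have step := kl_step (Measure.pi fun _ : Fin n => γ) (wt fac n)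
      (fun Z ρ => ∫ y, fac n Z y ρ ∂γ) (rER p n) (fun ρ => ∏ i, bern p (ρ i))
      (wt_meas h n)
      (fun ρ => (StronglyMeasurable.integral_prod_right' (ν := γ)
        (f := fun z : (Fin n → E) × E => fac n z.1 z.2 ρ) (h.meas n ρ).stronglyMeasurable).measurable)
      (wt_nonneg h n) (fun Z ρ => integral_nonneg fun y => h.nonneg _ _ _ _)
      (wt_sum h n) (fun Z => by
        rw [← integral_finsetSum _ (fun ρ _ => hIntg Z ρ)]
        simp [h.sum])
      hrp hbp (bern_sum p n)
    rw [Finset.sum_range_succ]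
    refine le_trans (le_of_eq ?_) (step.trans (add_le_add_left ih _))
    unfold KL
    rw [← (grEquiv n).sum_comp]
    refine Finset.sum_congr rfl fun gρ _ => ?_
    obtain ⟨g, ρ⟩ := gρ
    have e : ∫ X, wt fac (n + 1) X (grEquiv n (g, ρ)) ∂(Measure.pi fun _ : Fin (n + 1) => γ)
        = ∫ Z, wt fac n Z g * ∫ y, fac n Z y ρ ∂γ ∂(Measure.pi fun _ : Fin n => γ) := by
      rw [integral_snoc]
      · simp_rw [wt_snoc, integral_const_mul]
      · refine Integrable.of_bound (C := 1) (wt_meas h _ _).aestronglyMeasurable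
          (ae_of_all _ fun y => ?_)
        rw [Real.norm_eq_abs, abs_of_nonneg (wt_nonneg h _ _ _)]; exact wt_le_one h _ _ _
    simp only [e, rER_snoc]

lemma wt_integrable {E : Type*} [MeasurableSpace E] (γ : Measure E) [IsProbabilityMeasure γ]
    {fac : ∀ k : ℕ, (Fin k → E) → E → (Fin k → Bool) → ℝ} (h : FacOK fac) (n g) :
    Integrable (fun X => wt fac n X g) (Measure.pi fun _ : Fin n => γ) := by
  refine Integrable.of_bound (C := 1) (wt_meas h _ _).aestronglyMeasurable
    (ae_of_all _ fun y => ?_)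
  rw [Real.norm_eq_abs, abs_of_nonneg (wt_nonneg h _ _ _)]; exact wt_le_one h _ _ _

lemma chain_tv {E : Type*} [MeasurableSpace E] (γ : Measure E) [IsProbabilityMeasure γ]
    {fac : ∀ k : ℕ, (Fin k → E) → E → (Fin k → Bool) → ℝ} (h : FacOK fac)
    (p : ℝ) (hp0 : 0 < p) (hp1 : p < 1) (n : ℕ) (B : ℕ → ℝ)
    (hB : ∀ k < n, ∫ Z, ∑ ρ : Fin k → Bool,
        ((∫ y, fac k Z y ρ ∂γ) - ∏ i, bern p (ρ i)) ^ 2 / (∏ i, bern p (ρ i))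
          ∂(Measure.pi fun _ : Fin k => γ) ≤ B k) :
    (∑ g, |(∫ X, wt fac n X g ∂(Measure.pi fun _ : Fin n => γ)) - rER p n g|) ^ 2
      ≤ 4 * ∑ k ∈ Finset.range n, B k := by
  refine (pinsker _ _ (fun g => integral_nonneg fun X => wt_nonneg h _ _ _)
    (fun g => Finset.prod_pos fun _ _ => Finset.prod_pos fun _ _ => bern_pos hp0 hp1 _)
    ?_ (rER_sum p n)).trans ?_
  · rw [← integral_finsetSum _ (fun g _ => wt_integrable γ h n g)]
    simp [wt_sum h]
  · refine mul_le_mul_of_nonneg_left ((chain_kl γ h p hp0 hp1 n).trans ?_) (by norm_num)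
    exact Finset.sum_le_sum fun k hk => hB k (Finset.mem_range.mp hk)

lemma pStar_pos {d : ℕ} (α : Fin d → ℝ) (t : ℝ) : 0 < pStar α t := by
  unfold pStar
  refine lt_of_le_of_ne measureReal_nonneg fun h => ?_
  have h1 := (measureReal_eq_zero_iff (by simp)).mp h.symm
  have := gaussianReal_absolutelyContinuous' 0 (one_ne_zero (α := ℝ≥0)) h1
  simp at this

lemma pStar_lt_one {d : ℕ} (α : Fin d → ℝ) (t : ℝ) : pStar α t < 1 := by
  unfold pStar
  have e := probReal_add_probReal_compl (μ := gaussianReal 0 1)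
    (s := Set.Ici (t / √(sig2 α))) measurableSet_Ici
  have : 0 < (gaussianReal 0 1).real (Set.Ici (t / √(sig2 α)))ᶜ := by
    refine lt_of_le_of_ne measureReal_nonneg fun h => ?_
    have h1 := (measureReal_eq_zero_iff (by simp)).mp h.symm
    have := gaussianReal_absolutelyContinuous' 0 (one_ne_zero (α := ℝ≥0)) h1
    simp at this
  linarith

lemma measurable_dotp {d : ℕ} : Measurable fun z : (Fin d → ℝ) × (Fin d → ℝ) => dotp z.1 z.2 := by
  unfold dotp; fun_prop

lemma measurable_rowBits {d k : ℕ} (t : ℝ) :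
    Measurable fun z : (Fin k → Fin d → ℝ) × (Fin d → ℝ) => rowBits t z.1 z.2 := by
  unfold rowBits
  refine measurable_pi_lambda _ fun i => measurable_decide_bool ?_
  refine measurableSet_le measurable_const ?_
  exact measurable_dotp.comp (f := fun z : (Fin k → Fin d → ℝ) × (Fin d → ℝ) => (z.1 i, z.2))
    (by fun_prop)

lemma dev_nonneg {d k : ℕ} (α : Fin d → ℝ) (x : Fin k → Fin d → ℝ) : 0 ≤ dev α x :=
  Finset.sum_nonneg fun _ _ => Finset.sum_nonneg fun _ _ => sq_nonneg _

lemma measurable_dev {d k : ℕ} (α : Fin d → ℝ) :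
    Measurable fun x : Fin k → Fin d → ℝ => dev α x := by
  unfold dev Sent
  fun_prop

def facGeom {d : ℕ} (α : Fin d → ℝ) (t : ℝ) (k : ℕ) (Z : Fin k → Fin d → ℝ) (y : Fin d → ℝ)
    (ρ : Fin k → Bool) : ℝ :=
  if dev α Z ≤ 1 / 4 then (if rowBits t Z y = ρ then 1 else 0) else ∏ i, bern (pStar α t) (ρ i)

lemma facGeom_ok {d : ℕ} (α : Fin d → ℝ) (t : ℝ) : FacOK (facGeom α t) where
  nonneg k Z y ρ := by
    unfold facGeom
    split_ifs
    · norm_num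
    · norm_num
    · exact Finset.prod_nonneg fun _ _ => (bern_pos (pStar_pos α t) (pStar_lt_one α t) _).le
  sum k Z y := by
    unfold facGeom
    split_ifs
    · simp
    · exact bern_sum _ _
  meas k ρ := by
    unfold facGeom
    refine Measurable.ite ?_ (Measurable.ite ?_ measurable_const measurable_const) measurable_const
    · exact measurableSet_le ((measurable_dev α).comp measurable_fst) measurable_const
    · exact (measurable_rowBits t) (measurableSet_singleton ρ)

lemma facGeom_int {d : ℕ} (α : Fin d → ℝ) (t : ℝ) (k : ℕ) (Z : Fin k → Fin d → ℝ)
    (ρ : Fin k → Bool) (h : dev α Z ≤ 1 / 4) :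
    ∫ y, facGeom α t k Z y ρ ∂(gaussPi d α) = (gaussPi d α).real (rowBits t Z ⁻¹' {ρ}) := by
  have hm : MeasurableSet (rowBits t Z ⁻¹' {ρ}) :=
    ((measurable_rowBits (k := k) (d := d) t).comp measurable_prodMk_left)
      (measurableSet_singleton ρ)
  rw [← integral_indicator_one hm]
  refine integral_congr_ae (ae_of_all _ fun y => ?_)
  simp only [facGeom, if_pos h]
  simp [Set.indicator_apply]

lemma chi_geom {d : ℕ} (α : Fin d → ℝ) (hα : ∀ l, 0 ≤ α l) (hs : 0 < sig2 α) (t : ℝ) (k : ℕ) :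
    ∫ Z, ∑ ρ : Fin k → Bool,
        ((∫ y, facGeom α t k Z y ρ ∂(gaussPi d α)) - ∏ i, bern (pStar α t) (ρ i)) ^ 2
          / (∏ i, bern (pStar α t) (ρ i)) ∂(Measure.pi fun _ : Fin k => gaussPi d α)
      ≤ 2 * ((C4 + 1) * (k : ℝ) ^ 2 * eps α) := by
  obtain ⟨hi, hm⟩ := dev_moment k α hα hs
  unfold sampleMeasure at hi hm
  refine (integral_mono_of_nonneg (g := fun Z => 2 * dev α Z) (ae_of_all _ fun Z => ?_)
    (hi.const_mul 2) (ae_of_all _ fun Z => ?_)).trans ?_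
  · refine Finset.sum_nonneg fun ρ _ => div_nonneg (sq_nonneg _) ?_
    exact Finset.prod_nonneg fun _ _ => (bern_pos (pStar_pos α t) (pStar_lt_one α t) _).le
  · by_cases h : dev α Z ≤ 1 / 4
    · simp only [facGeom_int α t k Z _ h]
      exact row_chi α hα hs t (pStar_pos α t) (pStar_lt_one α t) Z h
    · simp only [facGeom, if_neg h]
      simp [dev_nonneg]
  · rw [integral_const_mul]; linarith

def code {d n : ℕ} (t : ℝ) (X : Fin n → Fin d → ℝ) : Gr n :=
  fun j => rowBits t (fun i => X (Fin.castLE j.is_lt.le i)) (X j)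

lemma measurable_code {d n : ℕ} (t : ℝ) : Measurable fun X : Fin n → Fin d → ℝ => code t X := by
  unfold code
  refine measurable_pi_lambda _ fun j => ?_
  exact (measurable_rowBits t).comp (f := fun X : Fin n → Fin d → ℝ =>
    ((fun i : Fin (j : ℕ) => X (Fin.castLE j.is_lt.le i)), X j)) (by fun_prop)

lemma dev_mono {d n : ℕ} (α : Fin d → ℝ) (X : Fin n → Fin d → ℝ) (j : Fin n) :
    dev α (fun i : Fin (j : ℕ) => X (Fin.castLE j.is_lt.le i)) ≤ dev α X := by
  unfold dev
  rw [← Fintype.sum_prod_type', ← Fintype.sum_prod_type']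
  have hinj : Function.Injective (fun q : Fin (j : ℕ) × Fin (j : ℕ) =>
      (Fin.castLE j.is_lt.le q.1, Fin.castLE j.is_lt.le q.2)) := by
    rintro ⟨a, b⟩ ⟨a', b'⟩ h
    simpa using h
  have h1 : ∀ f : Fin n × Fin n → ℝ, (∀ q, 0 ≤ f q) →
      ∑ q : Fin (j : ℕ) × Fin (j : ℕ),
        f (Fin.castLE j.is_lt.le q.1, Fin.castLE j.is_lt.le q.2) ≤ ∑ q, f q := by
    intro f hf
    rw [← Finset.sum_image (f := f) (s := Finset.univ) (fun a _ b _ h => hinj h)]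
    exact Finset.sum_le_sum_of_subset_of_nonneg (Finset.subset_univ _) fun q _ _ => hf q
  refine le_trans (le_of_eq ?_) (h1 (fun q => (Sent α (X q.1) (X q.2)
    - if q.1 = q.2 then 1 else 0) ^ 2) fun q => sq_nonneg _)
  refine Finset.sum_congr rfl fun q _ => ?_
  simp

lemma wt_good {d n : ℕ} (α : Fin d → ℝ) (t : ℝ) (X : Fin n → Fin d → ℝ) (h : dev α X ≤ 1 / 4)
    (g : Gr n) : wt (facGeom α t) n X g = if code t X = g then 1 else 0 := by
  unfold wt
  have : ∀ j : Fin n, facGeom α t j (fun i => X (Fin.castLE j.is_lt.le i)) (X j) (g j)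
      = if code t X j = g j then 1 else 0 := by
    intro j
    unfold facGeom
    rw [if_pos ((dev_mono α X j).trans h)]
    rfl
  simp_rw [this, Finset.prod_ite_zero, Finset.prod_const_one]
  congr 1
  simp [funext_iff]

lemma geom_tv {d : ℕ} (n : ℕ) (α : Fin d → ℝ) (hα : ∀ l, 0 ≤ α l) (hs : 0 < sig2 α) (t : ℝ) :
    ∑ g : Gr n, |(sampleMeasure n d α).real (code t ⁻¹' {g}) - rER (pStar α t) n g|
      ≤ 8 * ((C4 + 1) * (n : ℝ) ^ 2 * eps α)
        + √(8 * (C4 + 1) * (n : ℝ) ^ 3 * eps α) := by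
  obtain ⟨hi, hm⟩ := dev_moment n α hα hs
  have ok := facGeom_ok α t
  have hmc : ∀ g, MeasurableSet (code t ⁻¹' {g} : Set (Fin n → Fin d → ℝ)) := fun g =>
    measurable_code t (measurableSet_singleton g)
  have hI : ∀ g, Integrable (Set.indicator (code t ⁻¹' {g} : Set (Fin n → Fin d → ℝ)) 1)
      (sampleMeasure n d α) := fun g => (integrable_const (1 : ℝ)).indicator (hmc g)
  have hW : ∀ g, Integrable (fun X => wt (facGeom α t) n X g) (sampleMeasure n d α) :=
    fun g => wt_integrable _ ok n g
  have A : ∑ g : Gr n, |(sampleMeasure n d α).real (code t ⁻¹' {g})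
      - ∫ X, wt (facGeom α t) n X g ∂(sampleMeasure n d α)|
        ≤ 8 * ((C4 + 1) * (n : ℝ) ^ 2 * eps α) := by
    calc _ ≤ ∑ g : Gr n, ∫ X, |Set.indicator (code t ⁻¹' {g}) (1 : (Fin n → Fin d → ℝ) → ℝ) X
          - wt (facGeom α t) n X g| ∂(sampleMeasure n d α) := by
          refine Finset.sum_le_sum fun g _ => ?_
          rw [← integral_indicator_one (hmc g), ← integral_sub (hI g) (hW g)]
          exact abs_integral_le_integral_abs
      _ = ∫ X, ∑ g : Gr n, |Set.indicator (code t ⁻¹' {g}) (1 : (Fin n → Fin d → ℝ) → ℝ) X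
          - wt (facGeom α t) n X g| ∂(sampleMeasure n d α) :=
          (integral_finsetSum _ fun g _ => ((hI g).sub (hW g)).abs).symm
      _ ≤ ∫ X, 8 * dev α X ∂(sampleMeasure n d α) := by
          refine integral_mono_of_nonneg (ae_of_all _ fun X => Finset.sum_nonneg fun _ _ =>
            abs_nonneg _) (hi.const_mul 8) (ae_of_all _ fun X => ?_)
          by_cases h : dev α X ≤ 1 / 4
          · simp only [wt_good α t X h]
            rw [Finset.sum_eq_zero]
            · have := dev_nonneg α X; positivity
            · intro g _
              simp [Set.indicator_apply]
          · have e : ∑ g : Gr n, |Set.indicator (code t ⁻¹' {g}) (1 : (Fin n → Fin d → ℝ) → ℝ) X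
                - wt (facGeom α t) n X g| ≤ ∑ g : Gr n, ((if code t X = g then 1 else 0)
                + wt (facGeom α t) n X g) := by
              refine Finset.sum_le_sum fun g _ => ?_
              refine (abs_sub _ _).trans (le_of_eq ?_)
              rw [abs_of_nonneg (wt_nonneg ok _ _ _)]
              congr 1
              by_cases hh : code t X = g <;> simp [Set.indicator_apply, hh]
            refine e.trans ?_
            rw [Finset.sum_add_distrib, wt_sum ok]
            simp only [Finset.sum_ite_eq, Finset.mem_univ, if_true]
            push Not at h
            linarith
      _ ≤ _ := by rw [integral_const_mul]; linarith
  have B : ∑ g : Gr n, |(∫ X, wt (facGeom α t) n X g ∂(sampleMeasure n d α))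
      - rER (pStar α t) n g| ≤ √(8 * (C4 + 1) * (n : ℝ) ^ 3 * eps α) := by
    refine Real.le_sqrt_of_sq_le ?_
    refine (chain_tv (gaussPi d α) ok _ (pStar_pos α t) (pStar_lt_one α t) n
      (fun _ => 2 * ((C4 + 1) * (n : ℝ) ^ 2 * eps α)) fun k hk => ?_).trans (le_of_eq ?_)
    · refine (chi_geom α hα hs t k).trans ?_
      have := C4_nonneg
      have := eps_nonneg α
      have hk' : (k : ℝ) ≤ n := by exact_mod_cast hk.le
      gcongr
    · rw [Finset.sum_const, Finset.card_range, nsmul_eq_mul]; ring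
  refine le_trans ?_ (add_le_add A B)
  rw [← Finset.sum_add_distrib]
  exact Finset.sum_le_sum fun g _ => abs_sub_le _ _ _

lemma p_close {d : ℕ} (α : Fin d → ℝ) (hα : ∀ l, 0 ≤ α l) (hs : 0 < sig2 α) (t p : ℝ)
    (hp : 0 ≤ p) (ht : IsThreshold d α p t) : (p - pStar α t) ^ 2 ≤ 4 * (C4 * eps α) := by
  obtain ⟨hi, hm⟩ := diag_moment α hα hs
  set γ := gaussPi d α with hγ
  set Q : (Fin d → ℝ) → ℝ := fun x => γ.real {y | t ≤ dotp x y} with hQ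
  have hms : MeasurableSet {xy : (Fin d → ℝ) × (Fin d → ℝ) | t ≤ dotp xy.1 xy.2} :=
    measurableSet_le measurable_const measurable_dotp
  have hQm : Measurable Q := (measurable_measure_prodMk_left (ν := γ) hms).ennreal_toReal
  have hQ0 : ∀ x, 0 ≤ Q x := fun x => measureReal_nonneg
  have hQ1 : ∀ x, Q x ≤ 1 := fun x => measureReal_le_one
  have hQi : Integrable Q γ := Integrable.of_bound (C := 1) hQm.aestronglyMeasurable
    (ae_of_all _ fun x => by rw [Real.norm_eq_abs, abs_of_nonneg (hQ0 x)]; exact hQ1 x)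
  have hpQ : p = ∫ x, Q x ∂γ := by
    unfold IsThreshold at ht
    rw [Measure.prod_apply hms] at ht
    rw [integral_eq_lintegral_of_nonneg_ae (ae_of_all _ hQ0) hQm.aestronglyMeasurable]
    rw [← ENNReal.toReal_ofReal hp, ← ht]
    congr 1
    refine lintegral_congr fun x => ?_
    rw [hQ]
    simp only [Measure.real]
    rw [ENNReal.ofReal_toReal (measure_ne_top _ _)]
    rfl
  have pos := pStar_pos α t
  have lt1 := pStar_lt_one α t
  have key : ∀ x, (Q x - pStar α t) ^ 2 ≤ 4 * (Sent α x x - 1) ^ 2 := by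
    intro x
    have hd : dev α (fun _ : Fin 1 => x) = (Sent α x x - 1) ^ 2 := by simp [dev]
    by_cases h : (Sent α x x - 1) ^ 2 ≤ 1 / 4
    · have hr := row_chi α hα hs t pos lt1 (fun _ : Fin 1 => x) (by rw [hd]; exact h)
      rw [hd] at hr
      have h1 := (Finset.single_le_sum (f := fun r : Fin 1 → Bool =>
        ((gaussPi d α).real (rowBits t (fun _ : Fin 1 => x) ⁻¹' {r})
      - ∏ i, bern (pStar α t) (r i)) ^ 2 / ∏ i, bern (pStar α t) (r i)) (fun r _ => by
        refine div_nonneg (sq_nonneg _) ?_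
        exact Finset.prod_nonneg fun _ _ => (bern_pos pos lt1 _).le)
        (Finset.mem_univ (fun _ : Fin 1 => true))).trans hr
      have e : (rowBits t (fun _ : Fin 1 => x) ⁻¹' {fun _ => true}) = {y | t ≤ dotp x y} := by
        ext y
        simp [rowBits, funext_iff]
      simp only [e, bern, cond_true, Finset.univ_unique, Finset.prod_const, Finset.card_singleton,
        pow_one] at h1
      rw [div_le_iff₀ pos] at h1
      have h2 : (Q x - pStar α t) ^ 2 ≤ 2 * (Sent α x x - 1) ^ 2 * pStar α t := h1
      nlinarith [sq_nonneg (Sent α x x - 1)]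
    · push Not at h
      have := hQ0 x
      have := hQ1 x
      nlinarith
  have e : (p - pStar α t) = ∫ x, (Q x - pStar α t) ∂γ := by
    rw [integral_sub hQi (integrable_const _), ← hpQ]; simp
  have hQ2 : Integrable (fun x => (Q x - pStar α t) ^ 2) γ :=
    Integrable.mono' (hi.const_mul 4) ((hQm.sub measurable_const).pow_const 2).aestronglyMeasurable
      (ae_of_all _ fun x => by
        rw [Real.norm_eq_abs, abs_of_nonneg (sq_nonneg _)]; exact key x)
  calc (p - pStar α t) ^ 2 ≤ ∫ x, (Q x - pStar α t) ^ 2 ∂γ := by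
        have hv := integral_nonneg (μ := γ) (f := fun x => (Q x - pStar α t - (p - pStar α t)) ^ 2)
          fun x => sq_nonneg _
        have e2 : ∫ x, (Q x - pStar α t - (p - pStar α t)) ^ 2 ∂γ
            = ∫ x, (Q x - pStar α t) ^ 2 ∂γ - (p - pStar α t) ^ 2 := by
          have : ∀ x, (Q x - pStar α t - (p - pStar α t)) ^ 2
            = (Q x - pStar α t) ^ 2 - 2 * (p - pStar α t) * (Q x - pStar α t)
              + (p - pStar α t) ^ 2 := fun x => by ring
          simp_rw [this]
          have hQc : Integrable (fun x => 2 * (p - pStar α t) * (Q x - pStar α t)) γ :=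
            (hQi.sub (integrable_const _)).const_mul _
          have hQd : Integrable (fun x => (Q x - pStar α t) ^ 2
              - 2 * (p - pStar α t) * (Q x - pStar α t)) γ := hQ2.sub hQc
          rw [integral_add hQd (integrable_const _), integral_sub hQ2 hQc,
            integral_const_mul, ← e]
          simp
          ring
        linarith
    _ ≤ ∫ x, 4 * (Sent α x x - 1) ^ 2 ∂γ := integral_mono hQ2 (hi.const_mul 4) key
    _ = _ := by rw [integral_const_mul, hm]

def facER (p : ℝ) (k : ℕ) (_ : Fin k → Unit) (_ : Unit) (ρ : Fin k → Bool) : ℝ :=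
  ∏ i, bern p (ρ i)

lemma facER_ok (p : ℝ) (h0 : 0 < p) (h1 : p < 1) : FacOK (facER p) where
  nonneg _ _ _ _ := Finset.prod_nonneg fun _ _ => (bern_pos h0 h1 _).le
  sum _ _ _ := bern_sum _ _
  meas _ _ := measurable_const

lemma chi_er (p r : ℝ) (h0 : 0 < r) (h1 : r < 1) (k : ℕ) :
    ∑ ρ : Fin k → Bool, ((∏ i, bern p (ρ i)) - ∏ i, bern r (ρ i)) ^ 2 / (∏ i, bern r (ρ i))
      = (1 + (p - r) ^ 2 / (r * (1 - r))) ^ k - 1 := by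
  have e : ∀ ρ : Fin k → Bool,
      ((∏ i, bern p (ρ i)) - ∏ i, bern r (ρ i)) ^ 2 / (∏ i, bern r (ρ i))
      = (∏ i, (bern p (ρ i)) ^ 2 / bern r (ρ i)) - 2 * (∏ i, bern p (ρ i))
        + ∏ i, bern r (ρ i) := by
    intro ρ
    have : 0 < ∏ i, bern r (ρ i) := Finset.prod_pos fun _ _ => bern_pos h0 h1 _
    rw [Finset.prod_div_distrib, Finset.prod_pow]
    field_simp
    ring
  simp_rw [e]
  rw [Finset.sum_add_distrib, Finset.sum_sub_distrib, ← Finset.mul_sum, bern_sum, bern_sum]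
  have := Finset.prod_univ_sum (fun _ : Fin k => (Finset.univ : Finset Bool))
    (fun _ b => bern p b ^ 2 / bern r b)
  rw [Fintype.piFinset_univ] at this
  rw [← this]
  have h2 : 0 < 1 - r := by linarith
  have e3 : ∑ b : Bool, bern p b ^ 2 / bern r b = 1 + (p - r) ^ 2 / (r * (1 - r)) := by
    simp only [Fintype.sum_bool, bern, cond_true, cond_false]
    field_simp
    ring
  simp only [e3, Finset.prod_const, Finset.card_univ, Fintype.card_fin]
  ring

lemma er_tv (n : ℕ) (p r : ℝ) (hp0 : 0 < p) (hp1 : p < 1) (h0 : 0 < r) (h1 : r < 1)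
    (hc : (n : ℝ) * ((p - r) ^ 2 / (r * (1 - r))) ≤ 1) :
    ∑ g : Gr n, |rER p n g - rER r n g|
      ≤ √(8 * (n : ℝ) ^ 2 * ((p - r) ^ 2 / (r * (1 - r)))) := by
  set c := (p - r) ^ 2 / (r * (1 - r)) with hcdef
  have hc0 : 0 ≤ c := div_nonneg (sq_nonneg _) (mul_nonneg h0.le (by linarith))
  refine Real.le_sqrt_of_sq_le ?_
  have := chain_tv (Measure.dirac ()) (facER_ok p hp0 hp1) r h0 h1 n
    (fun _ => 2 * ((n : ℝ) * c)) (fun k hk => ?_)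
  · have e : ∀ g, ∫ X, wt (facER p) n X g ∂(Measure.pi fun _ : Fin n => Measure.dirac ())
        = rER p n g := by
      intro g
      have : ∀ X, wt (facER p) n X g = rER p n g := fun X => rfl
      simp_rw [this]
      simp
    simp_rw [e] at this
    refine this.trans (le_of_eq ?_)
    rw [Finset.sum_const, Finset.card_range, nsmul_eq_mul]; ring
  · simp only [facER, integral_const, probReal_univ, one_smul]
    rw [chi_er p r h0 h1 k, ← hcdef]
    have hkn : (k : ℝ) ≤ n := by exact_mod_cast hk.le
    have a1 : (1 + c) ^ k ≤ Real.exp (n * c) := by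
      calc (1 + c) ^ k ≤ (Real.exp c) ^ k := by
            refine pow_le_pow_left₀ (by linarith) ?_ _
            linarith [Real.add_one_le_exp c]
        _ = Real.exp (k * c) := (Real.exp_nat_mul c k).symm
        _ ≤ _ := Real.exp_le_exp.mpr (mul_le_mul_of_nonneg_right hkn hc0)
    have hnc : 0 ≤ (n : ℝ) * c := by positivity
    have a2 := Real.abs_exp_sub_one_sub_id_le (x := (n : ℝ) * c) (by rwa [abs_of_nonneg hnc])
    have a3 := (abs_le.mp a2).2
    nlinarith

def toGraph {n : ℕ} (g : Gr n) : SimpleGraph (Fin n) :=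
  SimpleGraph.fromRel fun i j => ∃ h : i < j, g j ⟨i, h⟩ = true

lemma toGraph_eq {n : ℕ} (R : Fin n → Fin n → Prop) (hR : ∀ i j, R i j → R j i) (g : Gr n)
    (hg : ∀ (j : Fin n) (i : Fin (j : ℕ)), g j i = true ↔ R (Fin.castLE j.is_lt.le i) j) :
    SimpleGraph.fromRel R = toGraph g := by
  have h2 : ∀ (a b : Fin n) (h : a < b), g b ⟨a, h⟩ = true ↔ R a b := fun a b h => hg b ⟨a, h⟩
  ext a b
  simp only [toGraph, SimpleGraph.fromRel_adj]
  refine and_congr_right fun hab => ?_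
  constructor
  · intro h
    have h' : R a b ∧ R b a := by
      rcases h with h | h
      · exact ⟨h, hR _ _ h⟩
      · exact ⟨hR _ _ h, h⟩
    rcases lt_or_gt_of_ne hab with h3 | h3
    · exact Or.inl ⟨h3, (h2 _ _ h3).2 h'.1⟩
    · exact Or.inr ⟨h3, (h2 _ _ h3).2 h'.2⟩
  · rintro (⟨h3, h4⟩ | ⟨h3, h4⟩)
    · exact Or.inl ((h2 _ _ h3).1 h4)
    · exact Or.inr ((h2 _ _ h3).1 h4)

lemma law_sum {Ω : Type*} [MeasurableSpace Ω] (μ : Measure Ω) [IsProbabilityMeasure μ] {n : ℕ}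
    (c : Ω → Gr n) (hc : Measurable c) (G : Ω → SimpleGraph (Fin n))
    (hG : ∀ ω, G ω = toGraph (c ω)) (s : Set (SimpleGraph (Fin n))) :
    ((Measure.map G μ) s).toReal
      = ∑ g : Gr n, if toGraph g ∈ s then μ.real (c ⁻¹' {g}) else 0 := by
  have e : G = toGraph ∘ c := funext hG
  have hm : Measurable (toGraph : Gr n → SimpleGraph (Fin n)) := measurable_of_finite _
  rw [e, Measure.map_apply (hm.comp hc) (by trivial : MeasurableSet s), ← Finset.sum_filter]
  have : (toGraph ∘ c) ⁻¹' s = ⋃ g ∈ Finset.univ.filter (fun g : Gr n => toGraph g ∈ s),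
      c ⁻¹' {g} := by
    ext ω; simp
  rw [this]
  refine measureReal_biUnion_finset ?_ fun g _ => hc (measurableSet_singleton g)
  intro a _ b _ hab
  refine Set.disjoint_left.mpr fun ω h1 h2 => hab ?_
  simp only [Set.mem_preimage, Set.mem_singleton_iff] at h1 h2
  rw [← h1, h2]

lemma tv_le {Ω Ω' : Type*} [MeasurableSpace Ω] [MeasurableSpace Ω'] (μ : Measure Ω)
    [IsProbabilityMeasure μ] (μ' : Measure Ω') [IsProbabilityMeasure μ'] {n : ℕ}
    (c : Ω → Gr n) (hc : Measurable c) (G : Ω → SimpleGraph (Fin n))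
    (hG : ∀ ω, G ω = toGraph (c ω))
    (c' : Ω' → Gr n) (hc' : Measurable c') (G' : Ω' → SimpleGraph (Fin n))
    (hG' : ∀ ω, G' ω = toGraph (c' ω)) :
    tvDist (Measure.map G μ) (Measure.map G' μ')
      ≤ ∑ g : Gr n, |μ.real (c ⁻¹' {g}) - μ'.real (c' ⁻¹' {g})| := by
  unfold tvDist
  refine Real.iSup_le (fun s => ?_) (Finset.sum_nonneg fun _ _ => abs_nonneg _)
  rw [law_sum μ c hc G hG, law_sum μ' c' hc' G' hG', ← Finset.sum_sub_distrib]
  refine (Finset.abs_sum_le_sum_abs _ _).trans (Finset.sum_le_sum fun g _ => ?_)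
  split_ifs
  · exact le_rfl
  · simp

instance unif_prob : IsProbabilityMeasure (volume.restrict (Set.Icc (0 : ℝ) 1)) := ⟨by simp⟩

lemma unif_bern (p : ℝ) (h0 : 0 < p) (h1 : p < 1) (b : Bool) :
    (volume.restrict (Set.Icc (0 : ℝ) 1)).real {u | decide (u ≤ p) = b} = bern p b := by
  have ht : (volume.restrict (Set.Icc (0 : ℝ) 1)).real (Set.Iic p) = p := by
    rw [measureReal_restrict_apply measurableSet_Iic]
    have : Set.Iic p ∩ Set.Icc (0 : ℝ) 1 = Set.Icc 0 p := by
      ext u; simp only [Set.mem_inter_iff, Set.mem_Iic, Set.mem_Icc]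
      constructor
      · rintro ⟨a, b, c⟩; exact ⟨b, a⟩
      · rintro ⟨a, b⟩; exact ⟨b, a, by linarith⟩
    rw [this]
    simp [h0.le]
  cases b
  · have e : {u : ℝ | decide (u ≤ p) = false} = (Set.Iic p)ᶜ := by ext u; simp
    rw [e, probReal_compl_eq_one_sub measurableSet_Iic, ht]; simp [bern]
  · have e : {u : ℝ | decide (u ≤ p) = true} = Set.Iic p := by ext u; simp
    rw [e, ht]; simp [bern]

def codeER {n : ℕ} (p : ℝ) (x : Sym2 (Fin n) → ℝ) : Gr n :=
  fun j i => decide (x s(Fin.castLE j.is_lt.le i, j) ≤ p)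

lemma measurable_codeER {n : ℕ} (p : ℝ) :
    Measurable fun x : Sym2 (Fin n) → ℝ => codeER p x := by
  unfold codeER
  refine measurable_pi_lambda _ fun j => measurable_pi_lambda _ fun i => measurable_decide_bool ?_
  exact measurableSet_le (measurable_pi_apply _) measurable_const

lemma er_law (n : ℕ) (p : ℝ) (h0 : 0 < p) (h1 : p < 1) (g : Gr n) :
    (Measure.pi fun _ : Sym2 (Fin n) => volume.restrict (Set.Icc (0 : ℝ) 1)).real
      (codeER p ⁻¹' {g}) = rER p n g := by
  set A : Sym2 (Fin n) → Set ℝ := fun e =>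
    {u | ∀ (j : Fin n) (i : Fin (j : ℕ)), s(Fin.castLE j.is_lt.le i, j) = e →
      decide (u ≤ p) = g j i} with hA
  have e : (codeER p ⁻¹' {g}) = Set.univ.pi A := by
    ext x
    simp only [Set.mem_preimage, Set.mem_singleton_iff, Set.mem_univ_pi, hA, Set.mem_setOf_eq]
    constructor
    · rintro rfl e j i rfl; rfl
    · intro h
      funext j i
      exact h _ j i rfl
  set ι : (Σ j : Fin n, Fin (j : ℕ)) → Sym2 (Fin n) :=
    fun q => s(Fin.castLE q.1.is_lt.le q.2, q.1) with hι
  have hinj : Function.Injective ι := by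
    rintro ⟨j, i⟩ ⟨j', i'⟩ h
    simp only [hι, Sym2.eq_iff] at h
    rcases h with ⟨h2, h3⟩ | ⟨h2, h3⟩
    · subst h3
      have : i = i' := by
        ext; simpa using congrArg Fin.val h2
      rw [this]
    · exfalso
      have a := congrArg Fin.val h2
      have b := congrArg Fin.val h3
      simp only [Fin.val_castLE] at a b
      have := i.is_lt
      have := i'.is_lt
      omega
  rw [e, Measure.real, Measure.pi_pi, ENNReal.toReal_prod]
  unfold rER
  rw [← Fintype.prod_sigma']
  refine (Fintype.prod_of_injective ι hinj _ _ ?_ ?_).symm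
  · intro e he
    have : A e = Set.univ := by
      ext u
      simp only [hA, Set.mem_setOf_eq, Set.mem_univ, iff_true]
      intro j i hji
      exact absurd ⟨⟨j, i⟩, hji⟩ he
    rw [this]; simp
  · rintro ⟨j, i⟩
    have : A (ι ⟨j, i⟩) = {u | decide (u ≤ p) = g j i} := by
      ext u
      simp only [hA, Set.mem_setOf_eq]
      constructor
      · intro h; exact h j i rfl
      · intro h j' i' hh
        have := @hinj ⟨j', i'⟩ ⟨j, i⟩ hh
        cases this
        exact h
    rw [this]
    exact (unif_bern p h0 h1 (g j i)).symm

lemma dotp_comm {d : ℕ} (x y : Fin d → ℝ) : dotp x y = dotp y x := by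
  unfold dotp
  exact Finset.sum_congr rfl fun i _ => mul_comm _ _

lemma tv_bound {d : ℕ} (n : ℕ) (α : Fin d → ℝ) (hα : ∀ l, 0 ≤ α l) (hs : 0 < sig2 α) (t p : ℝ)
    (hp0 : 0 < p) (hp1 : p < 1)
    (hc : (n : ℝ) * ((p - pStar α t) ^ 2 / (pStar α t * (1 - pStar α t))) ≤ 1) :
    tvDist (erGraph n p) (geomGraph n d α t)
      ≤ √(8 * (n : ℝ) ^ 2 * ((p - pStar α t) ^ 2 / (pStar α t * (1 - pStar α t))))
        + (8 * ((C4 + 1) * (n : ℝ) ^ 2 * eps α) + √(8 * (C4 + 1) * (n : ℝ) ^ 3 * eps α)) := by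
  refine (tv_le _ _ (codeER p) (measurable_codeER p) _ (fun x => ?_) (code t) (measurable_code t)
    _ (fun X => ?_)).trans ?_
  · refine toGraph_eq _ (fun i j h => ?_) _ fun j i => ?_
    · rw [Sym2.eq_swap]; exact h
    · simp [codeER]
  · refine toGraph_eq _ (fun i j h => ?_) _ fun j i => ?_
    · rw [dotp_comm]; exact h
    · simp [code, rowBits]
  · simp_rw [er_law n p hp0 hp1]
    refine le_trans ?_ (add_le_add (er_tv n p (pStar α t) hp0 hp1 (pStar_pos α t)
      (pStar_lt_one α t) hc) (geom_tv n α hα hs t))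
    rw [← Finset.sum_add_distrib]
    refine Finset.sum_le_sum fun g _ => ?_
    rw [abs_sub_comm ((sampleMeasure n d α).real _)]
    exact abs_sub_le _ _ _

lemma ratio_eq {d : ℕ} (α : Fin d → ℝ) (n : ℕ) :
    (nrm 2 α / nrm 4 α) ^ 4 / (n : ℝ) ^ 3 = ((n : ℝ) ^ 3 * eps α)⁻¹ := by
  have h2 : 0 ≤ ∑ i, α i ^ 2 := Finset.sum_nonneg fun i _ => sq_nonneg _
  have h4 : 0 ≤ ∑ i, α i ^ 4 := Finset.sum_nonneg fun i _ => by positivity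
  have e2 : nrm 2 α ^ 4 = (sig2 α) ^ 2 := by
    unfold nrm sig2
    rw [← Real.rpow_natCast, ← Real.rpow_mul h2, ← Real.rpow_natCast]
    norm_num
  have e4 : nrm 4 α ^ 4 = ∑ i, α i ^ 4 := by
    unfold nrm
    rw [← Real.rpow_natCast, ← Real.rpow_mul h4]
    norm_num
  rw [div_pow, e2, e4, eps, mul_inv, inv_div]
  ring

/-- Theorem 2(b). If `(‖α‖₂/‖α‖₄)⁴ / n³ → ∞`, then
`TV(G(n,p), G(n,p,α)) → 0`. -/
theorem tv_tendsto_zero (p : ℝ) (hp : p ∈ Set.Ioo (0 : ℝ) 1)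
    (d : ℕ → ℕ) (α : (n : ℕ) → Fin (d n) → ℝ)
    (hα : ∀ n i, 0 ≤ α n i)
    (t : ℕ → ℝ) (ht : ∀ n, IsThreshold (d n) (α n) p (t n))
    (hlim : Tendsto (fun n => (nrm 2 (α n) / nrm 4 (α n)) ^ 4 / (n : ℝ) ^ 3)
      atTop atTop) :
    Tendsto (fun n => tvDist (erGraph n p) (geomGraph n (d n) (α n) (t n)))
      atTop (nhds 0) := by
  obtain ⟨hp0, hp1⟩ := hp
  set e : ℕ → ℝ := fun n => (n : ℝ) ^ 3 * eps (α n) with he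
  have hinv : ∀ n, (nrm 2 (α n) / nrm 4 (α n)) ^ 4 / (n : ℝ) ^ 3 = (e n)⁻¹ :=
    fun n => ratio_eq (α n) n
  simp_rw [hinv] at hlim
  have he0 : Tendsto e atTop (nhds 0) := by
    have := hlim.inv_tendsto_atTop
    simpa [Pi.inv_def] using this
  have hpos : ∀ᶠ n in atTop, 0 < (e n)⁻¹ := hlim.eventually_gt_atTop 0
  have C0 := C4_nonneg
  set m : ℝ := min p (1 - p) with hm
  have hm0 : 0 < m := lt_min hp0 (by linarith)
  have hmp : m ≤ p := min_le_left _ _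
  have hmq : m ≤ 1 - p := min_le_right _ _
  set K : ℝ := 16 * C4 / m ^ 2 with hK
  have hK0 : 0 ≤ K := by positivity
  have hlimF : Tendsto (fun n => √(8 * (K * e n)) + (8 * ((C4 + 1) * e n)
      + √(8 * (C4 + 1) * e n))) atTop (nhds 0) := by
    have hc : Continuous fun x : ℝ => √(8 * (K * x)) + (8 * ((C4 + 1) * x)
      + √(8 * (C4 + 1) * x)) := by fun_prop
    have := (hc.tendsto 0).comp he0
    simpa [Function.comp_def] using this
  have ev1 : ∀ᶠ n in atTop, 4 * C4 * e n < (m / 2) ^ 2 := by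
    have h1 : Tendsto (fun n => 4 * C4 * e n) atTop (nhds 0) := by
      simpa using he0.const_mul (4 * C4)
    exact h1.eventually_lt_const (by positivity)
  have ev2 : ∀ᶠ n in atTop, K * e n < 1 := by
    have h1 : Tendsto (fun n => K * e n) atTop (nhds 0) := by
      simpa using he0.const_mul K
    exact h1.eventually_lt_const (by norm_num)
  refine squeeze_zero' (Eventually.of_forall fun n => Real.iSup_nonneg fun s => abs_nonneg _) ?_
    hlimF
  filter_upwards [hpos, ev1, ev2, eventually_ge_atTop 1] with n h1 h2 h3 h4
  have hn : (1 : ℝ) ≤ n := by exact_mod_cast h4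
  have heps := eps_nonneg (α n)
  have hs : 0 < sig2 (α n) := by
    refine lt_of_le_of_ne (Finset.sum_nonneg fun i _ => sq_nonneg _) fun h => ?_
    simp only [he, eps, ← h] at h1
    simp at h1
  have hn2 : (n : ℝ) ^ 2 * eps (α n) ≤ e n := by
    refine mul_le_mul_of_nonneg_right ?_ heps
    exact pow_le_pow_right₀ hn (by norm_num)
  have hclose := p_close (α n) (hα n) hs (t n) p hp0.le (ht n)
  set r := pStar (α n) (t n) with hr
  have hn1 : eps (α n) ≤ e n := by
    refine le_trans ?_ hn2
    have : (1 : ℝ) ≤ (n : ℝ) ^ 2 := one_le_pow₀ hn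
    nlinarith
  have hδ : (p - r) ^ 2 < (m / 2) ^ 2 := by
    refine lt_of_le_of_lt hclose (lt_of_le_of_lt ?_ h2)
    nlinarith
  have habs := abs_lt.mp (abs_lt_of_sq_lt_sq hδ (by positivity))
  have hprod : m ^ 2 / 4 ≤ r * (1 - r) := by
    have a1 : m / 2 ≤ r := by linarith
    have a2 : m / 2 ≤ 1 - r := by linarith
    have := mul_le_mul a1 a2 (by positivity) (by linarith)
    nlinarith
  have hcb : (p - r) ^ 2 / (r * (1 - r)) ≤ K * eps (α n) := by
    calc (p - r) ^ 2 / (r * (1 - r)) ≤ (4 * (C4 * eps (α n))) / (m ^ 2 / 4) := by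
          gcongr
      _ = K * eps (α n) := by rw [hK]; field_simp; ring
  have hcn : (n : ℝ) ^ 2 * ((p - r) ^ 2 / (r * (1 - r))) ≤ K * e n := by
    calc (n : ℝ) ^ 2 * ((p - r) ^ 2 / (r * (1 - r))) ≤ (n : ℝ) ^ 2 * (K * eps (α n)) := by gcongr
      _ = K * ((n : ℝ) ^ 2 * eps (α n)) := by ring
      _ ≤ _ := by gcongr
  have hc0 : 0 ≤ (p - r) ^ 2 / (r * (1 - r)) :=
    div_nonneg (sq_nonneg _) (le_trans (by positivity) hprod)
  refine (tv_bound n (α n) (hα n) hs (t n) p hp0 hp1 ?_).trans ?_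
  · refine le_trans ?_ h3.le
    refine le_trans ?_ hcn
    refine mul_le_mul_of_nonneg_right ?_ hc0
    nlinarith
  · refine add_le_add (Real.sqrt_le_sqrt ?_) (add_le_add ?_ (Real.sqrt_le_sqrt ?_))
    · nlinarith
    · nlinarith
    · simp only [he]
      exact le_of_eq (by ring)

end
end

section
/- Let p ∈ (0,1) be fixed. For each n, let d(n) ∈ ℕ and α = α(n) ∈ ℝ^{d(n)} be a vector of nonnegative entries, normalized so that max_i α_i = 1. If (‖α‖₂/‖α‖₄)⁴ / n³ → ∞ as n → ∞, then the relative entropy (Kullback–Leibler divergence) Ent[W(n,α) || M(n)] converges to 0, where W(n,α) is the normalized off-diagonal Wishart matrix and M(n) is the symmetric matrix with independent standard Gaussian off-diagonal entries. -/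
open MeasureTheory ProbabilityTheory Real Filter
open scoped Classical ENNReal NNReal

noncomputable section

/-- The law of the normalized off-diagonal Wishart matrix `W(n,α)`:
zero diagonal, off-diagonal entries `⟨γ_i, γ_j⟩ / ‖α‖₂` for rows `γ_i` i.i.d. `N(0, D_α)`. -/
def wishartOffDiag (n d : ℕ) (α : Fin d → ℝ) : Measure (Fin n → Fin n → ℝ) :=
  Measure.map (fun X i j => if i = j then 0 else dotp (X i) (X j) / nrm 2 α)
    (sampleMeasure n d α)

/-- The law of the symmetric matrix `M(n)` with zero diagonal and i.i.d. standard
Gaussian entries above the diagonal. -/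
def goeOffDiag (n : ℕ) : Measure (Fin n → Fin n → ℝ) :=
  Measure.map (fun (x : Sym2 (Fin n) → ℝ) i j => if i = j then 0 else x s(i, j))
    (Measure.pi fun _ : Sym2 (Fin n) => gaussianReal 0 1)

/-- Relative entropy `Ent[μ‖ν] = ∫ log (dμ/dν) dμ`. -/
def relEnt {Ω : Type*} [MeasurableSpace Ω] (μ ν : Measure Ω) : ℝ :=
  ∫ x, llr μ ν x ∂μ

section

/-- Standard Gaussian measure on `ℝ^m`. -/
def stdN (m : ℕ) : Measure (Fin m → ℝ) := Measure.pi fun _ => gaussianReal 0 1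

instance instProbStdN (m : ℕ) : IsProbabilityMeasure (stdN m) := by
  unfold stdN; infer_instance

instance instProbGaussPi (d : ℕ) (α : Fin d → ℝ) : IsProbabilityMeasure (gaussPi d α) := by
  unfold gaussPi; infer_instance

instance instProbSample (n d : ℕ) (α : Fin d → ℝ) : IsProbabilityMeasure (sampleMeasure n d α) := by
  unfold sampleMeasure; infer_instance

lemma lintegral_pi_prod (m : ℕ) (μ : Fin m → Measure ℝ) [∀ i, SigmaFinite (μ i)]
    (f : Fin m → ℝ → ℝ≥0∞) (hf : ∀ i, Measurable (f i)) :
    ∫⁻ x, ∏ i, f i (x i) ∂(Measure.pi μ) = ∏ i, ∫⁻ x, f i x ∂(μ i) := by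
  induction m with
  | zero => simp
  | succ m ih =>
    have := (measurePreserving_piFinSuccAbove μ 0).symm
    rw [← this.lintegral_comp (by fun_prop)]
    simp_rw [Fin.prod_univ_succ]
    rw [lintegral_prod _ (by fun_prop)]
    simp only [MeasurableEquiv.piFinSuccAbove_symm_apply, Fin.insertNthEquiv_zero, Fin.consEquiv_apply, Fin.cons_zero, Fin.cons_succ]
    simp only [Fin.zero_succAbove]
    have h2 : ∀ x : ℝ, ∫⁻ y : Fin m → ℝ, f 0 x * ∏ i : Fin m, f i.succ (y i) ∂(Measure.pi fun j => μ j.succ)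
        = f 0 x * ∏ i : Fin m, ∫⁻ x, f i.succ x ∂(μ i.succ) := fun x => by
      rw [lintegral_const_mul _ (by fun_prop), ih (fun j => μ j.succ) (fun j => f j.succ) (fun j => hf _)]
    simp_rw [h2]
    rw [lintegral_mul_const _ (hf 0)]

lemma charFunDual_gauss {ι : Type*} [Fintype ι] [DecidableEq ι] (v : ι → ℝ≥0) (L : StrongDual ℝ (ι → ℝ)) :
    charFunDual (Measure.pi fun i => gaussianReal 0 (v i)) L =
      Complex.exp (((-(1/2) * ∑ i, v i * (L (Pi.single i 1)) ^ 2 : ℝ)) : ℂ) := by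
  rw [charFunDual_pi]
  have : ∀ i, charFunDual (gaussianReal 0 (v i)) (L.comp (.single ℝ (fun _ => ℝ) i)) =
     Complex.exp (((-(1/2) * (v i * (L (Pi.single i 1)) ^ 2) : ℝ)) : ℂ) := by
    intro i
    rw [charFunDual_eq_charFun_map_one]
    have : (L.comp (.single ℝ (fun _ => ℝ) i) : ℝ → ℝ) = fun x => (L (Pi.single i 1)) * x := by
      ext x
      have : (Pi.single i x : ι → ℝ) = x • Pi.single i (1:ℝ) := by
        rw [← Pi.single_smul]; simp
      simp [this, mul_comm]
    rw [this, charFun_map_mul, charFun_gaussianReal]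
    congr 1
    push_cast
    ring
  simp_rw [this, ← Complex.exp_sum, ← Complex.ofReal_sum, Finset.mul_sum]

lemma stdN_eq (m : ℕ) : stdN m = volume.withDensity
    (fun z : Fin m → ℝ => ENNReal.ofReal (((√(2 * π))⁻¹) ^ m * exp (-(1/2) * ∑ i, z i ^ 2))) := by
  unfold stdN
  refine Measure.pi_eq fun s hs => ?_
  rw [withDensity_apply _ (MeasurableSet.univ_pi hs), ← lintegral_indicator (MeasurableSet.univ_pi hs)]
  have : ∀ z : Fin m → ℝ, (Set.univ.pi s).indicator (fun z : Fin m → ℝ => ENNReal.ofReal (((√(2 * π))⁻¹) ^ m * exp (-(1/2) * ∑ i, z i ^ 2))) z = ∏ i, (s i).indicator (fun x => gaussianPDF 0 1 x) (z i) := by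
    intro z
    by_cases hz : z ∈ Set.univ.pi s
    · rw [Set.indicator_of_mem hz]
      have : ∀ i, (s i).indicator (fun x => gaussianPDF 0 1 x) (z i) = gaussianPDF 0 1 (z i) :=
        fun i => Set.indicator_of_mem (hz i trivial) _
      simp_rw [this, gaussianPDF, gaussianPDFReal]
      rw [← ENNReal.ofReal_prod_of_nonneg (fun _ _ => by positivity)]
      simp [Finset.prod_mul_distrib, Finset.mul_sum, ← Real.exp_sum]
      rw [← Finset.sum_neg_distrib]
      congr 3; refine Finset.sum_congr rfl fun x _ => ?_; ring
    · rw [Set.indicator_of_notMem hz]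
      simp only [Set.mem_pi, Set.mem_univ, true_imp_iff, not_forall] at hz
      obtain ⟨i, hi⟩ := hz
      rw [Finset.prod_eq_zero (Finset.mem_univ i)]
      exact Set.indicator_of_notMem hi _
  simp_rw [this]
  rw [volume_pi, lintegral_pi_prod]
  · refine Finset.prod_congr rfl fun i _ => ?_
    rw [lintegral_indicator (hs i), gaussianReal_of_var_ne_zero _ one_ne_zero, withDensity_apply _ (hs i)]
  · exact fun i => (measurable_gaussianPDF 0 1).indicator (hs i)

end

section

open Matrix in
/-- The density ratio of `N(0,1)` with respect to `N(0,C)`. -/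
def hd {m : ℕ} (C : Matrix (Fin m) (Fin m) ℝ) (w : Fin m → ℝ) : ℝ :=
  if C.det = 0 then 1 else √(C.det) * exp (-(1/2) * (w ⬝ᵥ w) + (1/2) * (w ⬝ᵥ (C⁻¹ *ᵥ w)))

open Matrix

lemma lintegral_matrix_cov {m : ℕ} (S : Matrix (Fin m) (Fin m) ℝ) (hS : S.det ≠ 0)
    (G : (Fin m → ℝ) → ℝ≥0∞) (hG : Measurable G) :
    ∫⁻ z, ENNReal.ofReal |S.det| * G (S *ᵥ z) = ∫⁻ w, G w := by
  have h := Real.map_matrix_volume_pi_eq_smul_volume_pi hS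
  have hm : Measurable (toLin' S) := (LinearMap.continuous_of_finiteDimensional _).measurable
  have h2 := lintegral_map (μ := volume) hG hm
  rw [h, lintegral_smul_measure] at h2
  simp only [toLin'_apply] at h2
  rw [lintegral_const_mul' _ _ (by simp), ← h2, smul_eq_mul, ← mul_assoc, ← ENNReal.ofReal_mul (by positivity), ← abs_mul,
    mul_inv_cancel₀ hS]
  simp

lemma quad_inv {m : ℕ} (S : Matrix (Fin m) (Fin m) ℝ) (hS : S.det ≠ 0) (z : Fin m → ℝ) :
    (S *ᵥ z) ⬝ᵥ ((S * Sᵀ)⁻¹ *ᵥ (S *ᵥ z)) = z ⬝ᵥ z := by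
  have hu : IsUnit S.det := isUnit_iff_ne_zero.mpr hS
  rw [Matrix.mul_inv_rev, mulVec_mulVec, Matrix.mul_assoc, Matrix.nonsing_inv_mul _ hu, Matrix.mul_one,
    dotProduct_comm, ← vecMul_transpose, ← dotProduct_mulVec, mulVec_mulVec, ← Matrix.transpose_nonsing_inv,
    Matrix.transpose_transpose, Matrix.nonsing_inv_mul _ hu, Matrix.one_mulVec]

lemma hd_apply {m : ℕ} (S : Matrix (Fin m) (Fin m) ℝ) (hS : S.det ≠ 0) (z : Fin m → ℝ) :
    hd (S * Sᵀ) (S *ᵥ z) = |S.det| * exp (-(1/2) * ((S *ᵥ z) ⬝ᵥ (S *ᵥ z)) + (1/2) * (z ⬝ᵥ z)) := by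
  have hd0 : (S * Sᵀ).det = S.det ^ 2 := by simp [sq]
  rw [hd, if_neg (by rw [hd0]; positivity), quad_inv S hS, hd0, Real.sqrt_sq_eq_abs]

lemma measurable_mulVec' {m k : ℕ} (S : Matrix (Fin m) (Fin k) ℝ) : Measurable fun z : Fin k → ℝ => S *ᵥ z :=
  (Continuous.matrix_mulVec continuous_const continuous_id).measurable

lemma measurable_hd {Ω : Type*} [TopologicalSpace Ω] [MeasurableSpace Ω] [BorelSpace Ω] {m : ℕ}
    {C : Ω → Matrix (Fin m) (Fin m) ℝ} {w : Ω → Fin m → ℝ} (hC : Continuous C) (hw : Continuous w) :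
    Measurable fun p => hd (C p) (w p) := by
  have h1 : Measurable fun p => (C p).det := hC.matrix_det.measurable
  have h2 : Measurable fun p => w p ⬝ᵥ w p := (hw.dotProduct hw).measurable
  have h3 : Measurable fun p => w p ⬝ᵥ ((C p)⁻¹ *ᵥ w p) := by
    have : ∀ p, w p ⬝ᵥ ((C p)⁻¹ *ᵥ w p) = (C p).det⁻¹ * (w p ⬝ᵥ ((C p).adjugate *ᵥ w p)) := fun p => by
      rw [Matrix.inv_def, Matrix.smul_mulVec, dotProduct_smul]; simp
    simp_rw [this]
    exact h1.inv.mul (hw.dotProduct (hC.matrix_adjugate.matrix_mulVec hw)).measurable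
  unfold hd
  exact Measurable.ite (h1 (measurableSet_singleton 0)) measurable_const (by fun_prop)

lemma step_lintegral {m : ℕ} (S : Matrix (Fin m) (Fin m) ℝ) (hS : S.det ≠ 0)
    (F : (Fin m → ℝ) → ℝ≥0∞) (hF : Measurable F) :
    ∫⁻ z, F (S *ᵥ z) * ENNReal.ofReal (hd (S * Sᵀ) (S *ᵥ z)) ∂(stdN m) = ∫⁻ w, F w ∂(stdN m) := by
  have hms := measurable_mulVec' S
  simp_rw [hd_apply S hS]
  rw [stdN_eq, lintegral_withDensity_eq_lintegral_mul _ (by fun_prop) (by fun_prop),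
    lintegral_withDensity_eq_lintegral_mul _ (by fun_prop) (by fun_prop)]
  refine Eq.trans ?_ (lintegral_matrix_cov S hS _ (by fun_prop))
  refine lintegral_congr fun z => ?_
  simp only [Pi.mul_apply]
  rw [mul_comm (F _), ← mul_assoc, ← mul_assoc, ← ENNReal.ofReal_mul (by positivity), ← ENNReal.ofReal_mul (by positivity)]
  congr 2
  have e : ∀ y : Fin m → ℝ, ∑ i, y i ^ 2 = y ⬝ᵥ y := fun y => by simp [dotProduct, sq]
  rw [e, e, exp_add]
  have : exp (-(1/2) * (z ⬝ᵥ z)) * exp ((1/2) * (z ⬝ᵥ z)) = 1 := by rw [← exp_add]; simp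
  linear_combination ((√(2 * π))⁻¹ ^ m * rexp (-(1 / 2) * S *ᵥ z ⬝ᵥ S *ᵥ z) * |S.det|) * this

end

section

open Matrix

lemma gauss_lin {ι : Type*} [Fintype ι] [DecidableEq ι] (v : ι → ℝ≥0) (L : StrongDual ℝ (ι → ℝ)) :
    (Measure.pi fun i => gaussianReal 0 (v i)).map L =
      gaussianReal 0 (∑ i, v i * (L (Pi.single i 1)).toNNReal ^ 2 + ∑ i, v i * (-L (Pi.single i 1)).toNNReal ^ 2) := by
  have : IsProbabilityMeasure ((Measure.pi fun i => gaussianReal 0 (v i)).map L) :=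
    Measure.isProbabilityMeasure_map (by fun_prop)
  refine Measure.ext_of_charFun (funext fun t => ?_)
  rw [charFun_map_eq_charFunDual_smul, charFunDual_gauss, charFun_gaussianReal]
  congr 1
  have : ∀ y : ℝ, ((y.toNNReal : ℝ)) ^ 2 + (((-y).toNNReal : ℝ)) ^ 2 = y ^ 2 := by
    intro y
    rcases le_total 0 y with h | h
    · simp [Real.toNNReal_of_nonpos, h]
    · simp [Real.toNNReal_of_nonpos, h]
  have h2 : ((∑ i, v i * (L (Pi.single i 1)).toNNReal ^ 2 + ∑ i, v i * (-L (Pi.single i 1)).toNNReal ^ 2 : ℝ≥0) : ℝ) =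
     ∑ i, v i * (L (Pi.single i 1)) ^ 2 := by
    push_cast
    rw [← Finset.sum_add_distrib]
    refine Finset.sum_congr rfl fun i _ => ?_
    rw [← mul_add, this]
  rw [show (((∑ i, v i * (L (Pi.single i 1)).toNNReal ^ 2 + ∑ i, v i * (-L (Pi.single i 1)).toNNReal ^ 2 : ℝ≥0)) : ℂ) = ((∑ i, v i * (L (Pi.single i 1)) ^ 2 : ℝ) : ℂ) by rw [← h2]]
  simp only [_root_.smul_apply, smul_eq_mul]
  push_cast
  simp only [mul_pow, Finset.mul_sum, Finset.sum_mul, Finset.sum_div]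
  simp only [mul_zero, zero_mul, zero_sub, ← Finset.sum_neg_distrib]
  refine Finset.sum_congr rfl fun i _ => ?_
  ring

lemma integral_sq_gaussianReal (v : ℝ≥0) : ∫ x, x ^ 2 ∂(gaussianReal 0 v) = v := by
  have h := variance_id_gaussianReal (μ := 0) (v := v)
  rw [variance_eq_integral (by fun_prop)] at h
  simpa using h

lemma integrable_sq_gaussianReal (v : ℝ≥0) : Integrable (fun x => x ^ 2) (gaussianReal 0 v) := by
  have := (memLp_id_gaussianReal (μ := 0) (v := v) 2).integrable_sq
  simpa using this

lemma lin_sq_moment {ι : Type*} [Fintype ι] [DecidableEq ι] (v : ι → ℝ≥0) (L : StrongDual ℝ (ι → ℝ)) :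
    Integrable (fun x => (L x) ^ 2) (Measure.pi fun i => gaussianReal 0 (v i)) ∧
    ∫ x, (L x) ^ 2 ∂(Measure.pi fun i => gaussianReal 0 (v i)) = ∑ i, v i * (L (Pi.single i 1)) ^ 2 := by
  have h := gauss_lin v L
  constructor
  · have := integrable_sq_gaussianReal (∑ i, v i * (L (Pi.single i 1)).toNNReal ^ 2 + ∑ i, v i * (-L (Pi.single i 1)).toNNReal ^ 2)
    rw [← h] at this
    exact this.comp_measurable (by fun_prop)
  · have := integral_sq_gaussianReal (∑ i, v i * (L (Pi.single i 1)).toNNReal ^ 2 + ∑ i, v i * (-L (Pi.single i 1)).toNNReal ^ 2)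
    rw [← h, integral_map (by fun_prop) (by fun_prop)] at this
    rw [this]
    push_cast
    rw [← Finset.sum_add_distrib]
    refine Finset.sum_congr rfl fun i _ => ?_
    rw [← mul_add]
    congr 1
    rcases le_total 0 (L (Pi.single i 1)) with h | h
    · simp [Real.toNNReal_of_nonpos, h]
    · simp [Real.toNNReal_of_nonpos, h]

lemma lin_sq_moment' {ι : Type*} [Fintype ι] [DecidableEq ι] (v : ι → ℝ≥0) (c : ι → ℝ) :
    Integrable (fun x : ι → ℝ => (∑ i, c i * x i) ^ 2) (Measure.pi fun i => gaussianReal 0 (v i)) ∧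
    ∫ x : ι → ℝ, (∑ i, c i * x i) ^ 2 ∂(Measure.pi fun i => gaussianReal 0 (v i)) = ∑ i, v i * (c i) ^ 2 := by
  have := lin_sq_moment v (∑ i, c i • ContinuousLinearMap.proj (R := ℝ) (φ := fun _ : ι => ℝ) i)
  simpa [Pi.single_apply] using this

lemma stdN_quad {m : ℕ} (S : Matrix (Fin m) (Fin m) ℝ) :
    Integrable (fun z => (S *ᵥ z) ⬝ᵥ (S *ᵥ z)) (stdN m) ∧
    ∫ z, (S *ᵥ z) ⬝ᵥ (S *ᵥ z) ∂(stdN m) = (S * Sᵀ).trace := by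
  have h := fun j => lin_sq_moment' (fun _ : Fin m => (1:ℝ≥0)) (S j)
  have e : ∀ z, (S *ᵥ z) ⬝ᵥ (S *ᵥ z) = ∑ j, (∑ i, S j i * z i) ^ 2 := fun z => by
    simp [dotProduct, mulVec, sq]
  simp_rw [e]
  refine ⟨integrable_finsetSum _ fun j _ => (h j).1, ?_⟩
  unfold stdN
  rw [integral_finsetSum _ fun j _ => (h j).1]
  simp_rw [(h _).2]
  simp [Matrix.trace, Matrix.mul_apply, sq]

lemma stdN_sq (m : ℕ) :
    Integrable (fun z => z ⬝ᵥ z) (stdN m) ∧ ∫ z, z ⬝ᵥ z ∂(stdN m) = m := by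
  have := stdN_quad (1 : Matrix (Fin m) (Fin m) ℝ)
  simpa using this

/-- Conditional covariance. -/
def covM {m d : ℕ} (α : Fin d → ℝ) (X : Fin m → Fin d → ℝ) : Matrix (Fin m) (Fin m) ℝ :=
  fun j l => ∑ i, (√(α i) * X j i / nrm 2 α) * (√(α i) * X l i / nrm 2 α)

/-- New row. -/
def wv {m d : ℕ} (α : Fin d → ℝ) (X : Fin m → Fin d → ℝ) (x : Fin d → ℝ) : Fin m → ℝ :=
  fun j => dotp (X j) x / nrm 2 α

lemma covM_psd {m d : ℕ} (α : Fin d → ℝ) (X : Fin m → Fin d → ℝ) : (covM α X).PosSemidef := by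
  have : covM α X = (Matrix.of fun j i => √(α i) * X j i / nrm 2 α) * (Matrix.of fun j i => √(α i) * X j i / nrm 2 α)ᴴ := by
    ext j l
    simp [covM, Matrix.mul_apply]
  rw [this]
  exact Matrix.posSemidef_self_mul_conjTranspose _

open scoped MatrixOrder in
lemma psd_aux {m : ℕ} {C : Matrix (Fin m) (Fin m) ℝ} (h : C.PosSemidef) :
    ∃ S : Matrix (Fin m) (Fin m) ℝ, C = star S * S :=
  CStarAlgebra.nonneg_iff_eq_star_mul_self.mp h.nonneg

lemma psd_sqrt {m : ℕ} {C : Matrix (Fin m) (Fin m) ℝ} (h : C.PosSemidef) :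
    ∃ S : Matrix (Fin m) (Fin m) ℝ, C = S * Sᵀ := by
  obtain ⟨B, hB⟩ := psd_aux h
  exact ⟨Bᵀ, by rw [hB, Matrix.star_eq_conjTranspose]; simp⟩

lemma quad_self {m k : ℕ} (S : Matrix (Fin m) (Fin k) ℝ) (v : Fin m → ℝ) :
    v ⬝ᵥ ((S * Sᵀ) *ᵥ v) = ∑ i, (∑ j, v j * S j i) ^ 2 := by
  rw [← mulVec_mulVec, dotProduct_mulVec]
  simp [dotProduct, mulVec, vecMul, sq, mul_comm]

lemma quad_covM {m d : ℕ} (α : Fin d → ℝ) (X : Fin m → Fin d → ℝ) (v : Fin m → ℝ) :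
    v ⬝ᵥ (covM α X *ᵥ v) = ∑ i, (√(α i) / nrm 2 α * ∑ j, v j * X j i) ^ 2 := by
  have : covM α X = (Matrix.of fun j i => √(α i) * X j i / nrm 2 α) * (Matrix.of fun j i => √(α i) * X j i / nrm 2 α)ᵀ := by
    ext j l
    simp [covM, Matrix.mul_apply]
  rw [this, quad_self]
  refine Finset.sum_congr rfl fun i _ => ?_
  congr 1
  rw [Finset.mul_sum]
  refine Finset.sum_congr rfl fun j _ => ?_
  simp only [Matrix.of_apply]
  ring

lemma dual_apply {m : ℕ} (L : StrongDual ℝ (Fin m → ℝ)) (y : Fin m → ℝ) :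
    L y = ∑ j, L (Pi.single j 1) * y j := by
  conv_lhs => rw [← Finset.univ_sum_single y]
  rw [map_sum]
  refine Finset.sum_congr rfl fun j _ => ?_
  rw [show (Pi.single j (y j) : Fin m → ℝ) = y j • Pi.single j (1:ℝ) by rw [← Pi.single_smul]; simp, map_smul, smul_eq_mul, mul_comm]

lemma law_w {m d : ℕ} (α : Fin d → ℝ) (hα : ∀ i, 0 ≤ α i) (X : Fin m → Fin d → ℝ)
    (S : Matrix (Fin m) (Fin m) ℝ) (hS : covM α X = S * Sᵀ) :
    (gaussPi d α).map (wv α X) = (stdN m).map (fun z => S *ᵥ z) := by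
  let A : (Fin d → ℝ) →L[ℝ] (Fin m → ℝ) := LinearMap.toContinuousLinearMap
    (Matrix.toLin' (Matrix.of fun j i => X j i / nrm 2 α))
  let B : (Fin m → ℝ) →L[ℝ] (Fin m → ℝ) := LinearMap.toContinuousLinearMap (Matrix.toLin' S)
  have hA : wv α X = A := by
    ext x j
    simp [A, wv, dotp, mulVec, dotProduct, Finset.sum_div, div_mul_eq_mul_div]
  have hB : (fun z => S *ᵥ z) = B := by
    ext x j
    simp [B]
  rw [hA, hB]
  have : IsProbabilityMeasure ((gaussPi d α).map A) := Measure.isProbabilityMeasure_map (by fun_prop)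
  have : IsProbabilityMeasure ((stdN m).map B) := Measure.isProbabilityMeasure_map (by fun_prop)
  refine Measure.ext_of_charFunDual (funext fun L => ?_)
  rw [charFunDual_map, charFunDual_map, gaussPi, stdN, charFunDual_gauss, charFunDual_gauss]
  congr 3
  have h := quad_covM α X (fun j => L (Pi.single j 1))
  rw [hS, quad_self] at h
  have h1 : ∀ i, (L.comp B) (Pi.single i 1) = ∑ j, L (Pi.single j 1) * S j i := fun i => by
    rw [ContinuousLinearMap.comp_apply, dual_apply]
    simp [B]
  have h2 : ∀ i, (L.comp A) (Pi.single i 1) = (∑ j, L (Pi.single j 1) * X j i) / nrm 2 α := fun i => by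
    rw [ContinuousLinearMap.comp_apply, dual_apply]
    simp [A, Finset.sum_div, mul_div_assoc]

  simp only [h1, h2]
  simp only [NNReal.coe_one, one_mul]
  rw [h]
  refine Finset.sum_congr rfl fun i _ => ?_
  rw [mul_pow, div_pow, div_pow, Real.sq_sqrt (hα i), Real.coe_toNNReal _ (hα i)]
  ring

end

section

open Matrix

/-- Gaussian integral representing `det C ^ (-1/2)`. -/
def Jq {m : ℕ} (C : Matrix (Fin m) (Fin m) ℝ) : ℝ≥0∞ :=
  ∫⁻ v : Fin m → ℝ, ENNReal.ofReal (((√(2 * π))⁻¹) ^ m * exp (-(1/2) * (v ⬝ᵥ (C *ᵥ v))))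

lemma lintegral_dens_one (m : ℕ) :
    ∫⁻ v : Fin m → ℝ, ENNReal.ofReal (((√(2 * π))⁻¹) ^ m * exp (-(1/2) * ∑ i, v i ^ 2)) = 1 := by
  have h : (stdN m) Set.univ = 1 := measure_univ
  rw [stdN_eq, withDensity_apply _ MeasurableSet.univ] at h
  simpa using h

lemma Jq_posDef {m : ℕ} (S : Matrix (Fin m) (Fin m) ℝ) (hS : S.det ≠ 0) :
    ENNReal.ofReal (√((S * Sᵀ).det)) * Jq (S * Sᵀ) = 1 := by
  have hT : Sᵀ.det ≠ 0 := by rwa [det_transpose]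
  have h := lintegral_matrix_cov Sᵀ hT (fun v => ENNReal.ofReal (((√(2 * π))⁻¹) ^ m * exp (-(1/2) * ∑ i, v i ^ 2))) (by fun_prop)
  rw [lintegral_dens_one, lintegral_const_mul' _ _ ENNReal.ofReal_ne_top] at h
  have hd0 : (S * Sᵀ).det = S.det ^ 2 := by simp [sq]
  rw [hd0, Real.sqrt_sq_eq_abs, Jq]
  simp_rw [quad_self]
  rw [det_transpose] at h
  rw [← h]
  congr 1
  refine lintegral_congr fun v => ?_
  simp [mulVec, dotProduct, mul_comm]

lemma Jq_ge {m : ℕ} {C : Matrix (Fin m) (Fin m) ℝ} (hC : C.PosSemidef) (hJ : Jq C ≠ ∞) :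
    1 ≤ ENNReal.ofReal (√(C.det)) * Jq C := by
  have key : ∀ ε : ℝ, 0 < ε → 1 ≤ ENNReal.ofReal (√((C + ε • (1 : Matrix (Fin m) (Fin m) ℝ)).det)) * Jq C := by
    intro ε hε
    have hpd : (C + ε • (1 : Matrix (Fin m) (Fin m) ℝ)).PosDef :=
      Matrix.PosDef.posSemidef_add hC (Matrix.PosDef.one.smul hε)
    obtain ⟨S, hS⟩ := psd_sqrt hpd.posSemidef
    have hdet : S.det ≠ 0 := by
      have := hpd.det_pos
      rw [hS] at this
      intro h0
      simp [h0] at this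
    have := Jq_posDef S hdet
    rw [← hS] at this
    rw [← this]
    gcongr
    unfold Jq
    refine lintegral_mono fun v => ENNReal.ofReal_le_ofReal ?_
    gcongr _ * exp ?_
    rw [Matrix.add_mulVec, dotProduct_add, smul_mulVec, dotProduct_smul, one_mulVec]
    have : 0 ≤ ε • (v ⬝ᵥ v) := smul_nonneg hε.le (by simpa using dotProduct_star_self_nonneg v)
    linarith
  have ht : Tendsto (fun ε : ℝ => ENNReal.ofReal (√((C + ε • (1 : Matrix (Fin m) (Fin m) ℝ)).det)) * Jq C)
      (nhdsWithin 0 (Set.Ioi 0)) (nhds (ENNReal.ofReal (√(C.det)) * Jq C)) := by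
    refine ENNReal.Tendsto.mul_const ?_ (Or.inr hJ)
    have hc : Continuous fun ε : ℝ => ENNReal.ofReal (√((C + ε • (1 : Matrix (Fin m) (Fin m) ℝ)).det)) := by
      refine ENNReal.continuous_ofReal.comp (Real.continuous_sqrt.comp (Continuous.matrix_det ?_))
      fun_prop
    have := (hc.tendsto 0).mono_left (nhdsWithin_le_nhds (s := Set.Ioi 0))
    simpa using this
  exact ge_of_tendsto ht (eventually_nhdsWithin_of_forall fun ε hε => key ε hε)

lemma Jq_cor {m : ℕ} {C : Matrix (Fin m) (Fin m) ℝ} (hC : C.PosSemidef) (hJ : Jq C ≠ ∞) :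
    0 < C.det ∧ -(1/2) * log C.det ≤ (Jq C).toReal - 1 := by
  have h := Jq_ge hC hJ
  have hpos : 0 < C.det := by
    by_contra hn
    rw [Real.sqrt_eq_zero_of_nonpos (not_lt.mp hn)] at h
    simp at h
  refine ⟨hpos, ?_⟩
  have h2 := ENNReal.toReal_mono (by finiteness) h
  rw [ENNReal.toReal_mul, ENNReal.toReal_ofReal (by positivity), ENNReal.toReal_one] at h2
  have hs : 0 < √C.det := Real.sqrt_pos.mpr hpos
  have h3 : (√C.det)⁻¹ ≤ (Jq C).toReal := by
    rw [inv_le_iff_one_le_mul₀ hs]; linarith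
  have h4 := Real.log_le_sub_one_of_pos (inv_pos.mpr hs)
  rw [Real.log_inv, Real.log_sqrt hpos.le] at h4
  linarith

lemma lintegral_gauss_1d (v : ℝ≥0) (b : ℝ) :
    ∫⁻ u, ENNReal.ofReal (exp (-(1/2) * (b * u) ^ 2)) ∂(gaussianReal 0 v) =
      ENNReal.ofReal ((√(1 + b ^ 2 * v))⁻¹) := by
  by_cases hv : v = 0
  · subst hv; simp
  have hv' : (0:ℝ) < v := by positivity
  rw [gaussianReal_of_var_ne_zero _ hv, lintegral_withDensity_eq_lintegral_mul _ (by fun_prop) (by fun_prop)]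
  have e : ∀ u : ℝ, (gaussianPDF 0 v * fun u => ENNReal.ofReal (exp (-(1/2) * (b * u) ^ 2))) u =
      ENNReal.ofReal ((√(2 * π * v))⁻¹ * exp (-((1 + b ^ 2 * v) / (2 * v)) * u ^ 2)) := by
    intro u
    rw [Pi.mul_apply, gaussianPDF, gaussianPDFReal, ← ENNReal.ofReal_mul (by positivity), mul_assoc, ← exp_add]
    congr 3
    field_simp
    ring
  simp_rw [e]
  have hb : 0 < (1 + b ^ 2 * v) / (2 * v) := by positivity
  rw [← ofReal_integral_eq_lintegral_ofReal ((integrable_exp_neg_mul_sq hb).const_mul _) (ae_of_all _ fun x => by positivity),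
    integral_const_mul, integral_gaussian]
  congr 1
  rw [← Real.sqrt_inv, ← Real.sqrt_inv, ← Real.sqrt_mul (by positivity)]
  congr 1
  field_simp

lemma law_u {m d : ℕ} (α : Fin d → ℝ) (hα : ∀ i, 0 ≤ α i) (v : Fin m → ℝ) :
    (sampleMeasure m d α).map (fun X i => ∑ j, v j * X j i) = gaussPi d (fun i => (∑ j, v j ^ 2) * α i) := by
  let A : (Fin m → Fin d → ℝ) →L[ℝ] (Fin d → ℝ) :=
    ∑ j, v j • ContinuousLinearMap.proj (R := ℝ) (φ := fun _ : Fin m => Fin d → ℝ) j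
  have hA : (fun (X : Fin m → Fin d → ℝ) i => ∑ j, v j * X j i) = A := by
    ext X i
    simp [A]
  rw [hA]
  have : IsProbabilityMeasure ((sampleMeasure m d α).map A) := Measure.isProbabilityMeasure_map (by fun_prop)
  refine Measure.ext_of_charFunDual (funext fun L => ?_)
  rw [charFunDual_map, sampleMeasure, charFunDual_pi]
  have hR := charFunDual_gauss (fun i => Real.toNNReal ((∑ j, v j ^ 2) * α i)) L
  rw [← gaussPi] at hR
  rw [hR]
  have : ∀ j, charFunDual (gaussPi d α) ((L.comp A).comp (.single ℝ (fun _ => Fin d → ℝ) j)) =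
      Complex.exp (((-(1/2) * ∑ i, α i * (v j * L (Pi.single i 1)) ^ 2 : ℝ)) : ℂ) := by
    intro j
    rw [gaussPi, charFunDual_gauss]
    congr 3
    refine Finset.sum_congr rfl fun i _ => ?_
    rw [Real.coe_toNNReal _ (hα i)]
    congr 2
    have : A (Pi.single j (Pi.single i 1)) = v j • Pi.single i 1 := by
      simp [A, Pi.single_apply]
    simp [this]
  simp_rw [this]
  rw [← Complex.exp_sum, ← Complex.ofReal_sum, ← Finset.mul_sum, Finset.sum_comm]
  congr 3
  refine Finset.sum_congr rfl fun i _ => ?_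
  rw [Real.coe_toNNReal _ (mul_nonneg (by positivity) (hα i)), Finset.sum_mul, Finset.sum_mul]
  refine Finset.sum_congr rfl fun j _ => ?_
  ring

lemma continuous_covM {m d : ℕ} (α : Fin d → ℝ) : Continuous (fun X : Fin m → Fin d → ℝ => covM α X) := by
  refine continuous_matrix fun i j => ?_
  unfold covM
  fun_prop

lemma lintegral_Jq {m d : ℕ} (α : Fin d → ℝ) (hα : ∀ i, 0 ≤ α i) :
    ∫⁻ X, Jq (covM α X) ∂(sampleMeasure m d α) =
      ∫⁻ v : Fin m → ℝ, ENNReal.ofReal (((√(2 * π))⁻¹) ^ m *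
        ∏ i, (√(1 + (α i / nrm 2 α) ^ 2 * ∑ j, v j ^ 2))⁻¹) := by
  unfold Jq
  rw [lintegral_lintegral_swap]
  · refine lintegral_congr fun v => ?_
    simp_rw [quad_covM]
    have h := law_u α hα v
    have h2 := lintegral_map (μ := sampleMeasure m d α) (f := fun u : Fin d → ℝ => ENNReal.ofReal (((√(2 * π))⁻¹) ^ m * exp (-(1/2) * ∑ i, (√(α i) / nrm 2 α * u i) ^ 2)))
      (g := fun X i => ∑ j, v j * X j i) (by fun_prop) (by fun_prop)
    rw [← h2, h]
    simp_rw [ENNReal.ofReal_mul (show (0:ℝ) ≤ ((√(2 * π))⁻¹) ^ m by positivity), Finset.mul_sum, Real.exp_sum]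
    rw [lintegral_const_mul' _ _ ENNReal.ofReal_ne_top]
    congr 1
    rw [ENNReal.ofReal_prod_of_nonneg (fun _ _ => by positivity)]
    simp_rw [ENNReal.ofReal_prod_of_nonneg (s := Finset.univ) (fun (i : Fin d) _ => (exp_pos (_)).le)]
    unfold gaussPi
    rw [lintegral_pi_prod d _ (fun i u => ENNReal.ofReal (exp (-(1/2) * (√(α i) / nrm 2 α * u) ^ 2))) (fun i => by fun_prop)]
    refine Finset.prod_congr rfl fun i _ => ?_
    rw [lintegral_gauss_1d, Real.coe_toNNReal _ (mul_nonneg (by positivity) (hα i)), div_pow, Real.sq_sqrt (hα i)]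
    congr 4
    rw [← Finset.mul_sum]
    ring
  · have : Continuous fun p : (Fin m → Fin d → ℝ) × (Fin m → ℝ) => p.2 ⬝ᵥ (covM α p.1 *ᵥ p.2) :=
      continuous_snd.dotProduct (((continuous_covM α).comp continuous_fst).matrix_mulVec continuous_snd)
    have := this.measurable
    exact (ENNReal.measurable_ofReal.comp ((this.const_mul _).exp.const_mul _)).aemeasurable

end

section

lemma G_small {d : ℕ} (a : Fin d → ℝ) (ha : ∀ i, 0 ≤ a i) (hs : ∑ i, a i = 1) (δ N s : ℝ)
    (hδ : ∑ i, a i ^ 2 = δ) (hN : δ * N ^ 2 ≤ 1) (h0 : 0 ≤ s) (hsN : s ≤ N) :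
    ∏ i, (√(1 + a i * s))⁻¹ ≤ exp (-(1/2) * s) * (1 + δ / 2 * s ^ 2) := by
  have hδ0 : 0 ≤ δ := hδ ▸ Finset.sum_nonneg fun i _ => sq_nonneg _
  have h1 : ∀ i, (√(1 + a i * s))⁻¹ ≤ exp (-(1/2) * (a i * s) + (a i * s) ^ 2 / 4) := by
    intro i
    have hx : 0 ≤ a i * s := mul_nonneg (ha i) h0
    set x := a i * s
    have hl : x - x ^ 2 / 2 ≤ log (1 + x) := by
      have := Real.le_log_one_add_of_nonneg hx
      refine le_trans ?_ this
      rw [le_div_iff₀ (by positivity)]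
      nlinarith [pow_nonneg hx 3]
    have : exp (1/2 * x - x ^ 2 / 4) ≤ √(1 + x) := by
      rw [Real.sqrt_eq_rpow, Real.rpow_def_of_pos (by positivity)]
      apply exp_le_exp.2; linarith
    calc _ ≤ (exp (1/2 * x - x ^ 2 / 4))⁻¹ := by gcongr
      _ = _ := by rw [← Real.exp_neg]; congr 1; ring
  calc _ ≤ ∏ i, exp (-(1/2) * (a i * s) + (a i * s) ^ 2 / 4) :=
        Finset.prod_le_prod (fun i _ => by positivity) fun i _ => h1 i
    _ = exp (-(1/2) * s) * exp (δ * s ^ 2 / 4) := by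
        rw [← Real.exp_sum, ← Real.exp_add, Finset.sum_add_distrib, ← Finset.mul_sum, ← Finset.sum_mul, hs,
          ← Finset.sum_div]
        simp_rw [mul_pow]
        rw [← Finset.sum_mul, hδ, one_mul]
    _ ≤ _ := by
        gcongr
        have h2 : δ * s ^ 2 ≤ 1 := le_trans (by gcongr) hN
        have h3 : 0 ≤ δ * s ^ 2 := by positivity
        set y := δ * s ^ 2 / 4 with hy
        have := Real.abs_exp_sub_one_sub_id_le (x := y) (by rw [abs_of_nonneg (by positivity)]; linarith)
        have := (abs_le.1 this).2
        have hy4 : y ≤ 1 / 4 := by linarith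
        have hy0 : 0 ≤ y := by positivity
        have : δ / 2 * s ^ 2 = 2 * y := by rw [hy]; ring
        nlinarith

lemma G_large {d : ℕ} (a : Fin d → ℝ) (ha : ∀ i, 0 ≤ a i) (hs : ∑ i, a i = 1) (N s : ℝ) (n : ℕ) (hn : 1 ≤ n)
    (haN : ∀ i, a i * N ≤ 1) (hNn : 4 * n ≤ N) (hsN : N ≤ s) :
    ∏ i, (√(1 + a i * s))⁻¹ ≤ exp (-(N / 8)) * ((1 + s / (4 * n)) ^ n)⁻¹ := by
  have hn' : (1:ℝ) ≤ n := by exact_mod_cast hn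
  have hN0 : 0 < N := by linarith
  have hs0 : 0 ≤ s := by linarith
  have hT0 : 0 ≤ s / N := by positivity
  have h1 : ∀ i, (1 + s / N) ^ (a i * N) ≤ 1 + a i * s := by
    intro i
    refine (rpow_one_add_le_one_add_mul_self (by linarith) (mul_nonneg (ha i) hN0.le) (haN i)).trans (le_of_eq ?_)
    field_simp
  have hT1 : 0 < 1 + s / N := by positivity
  have hT : 2 ≤ 1 + s / N := by
    have : 1 ≤ s / N := by rw [le_div_iff₀ hN0]; linarith
    linarith
  have h2 : (1 + s / N) ^ N ≤ ∏ i, (1 + a i * s) := by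
    calc _ = ∏ i, (1 + s / N) ^ (a i * N) := by
          rw [← Real.rpow_sum_of_pos hT1, ← Finset.sum_mul, hs, one_mul]
      _ ≤ _ := Finset.prod_le_prod (fun i _ => by positivity) fun i _ => h1 i
  have h3 : exp (N / 8) ≤ (1 + s / N) ^ (N / 4) := by
    calc exp (N / 8) ≤ (2:ℝ) ^ (N / 4) := by
          rw [Real.rpow_def_of_pos (by norm_num)]
          apply exp_le_exp.2
          have := Real.log_two_gt_d9
          nlinarith
      _ ≤ _ := by gcongr
  have h4 : (1 + s / (4 * n)) ^ n ≤ (1 + s / N) ^ (N / 4) := by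
    calc _ ≤ ((1 + s / N) ^ (N / (4 * n))) ^ n := by
          gcongr
          refine le_trans (le_of_eq ?_) (one_add_mul_self_le_rpow_one_add (by linarith) (?_))
          · field_simp
          · rw [le_div_iff₀ (by positivity)]; linarith
      _ = _ := by
          rw [← Real.rpow_natCast, ← Real.rpow_mul hT1.le]
          congr 1; field_simp
  have h5 : exp (N / 8) * (1 + s / (4 * n)) ^ n ≤ ∏ i, √(1 + a i * s) := by
    calc _ ≤ (1 + s / N) ^ (N / 4) * (1 + s / N) ^ (N / 4) := by gcongr
      _ = √((1 + s / N) ^ N) := by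
          rw [← Real.rpow_add hT1, Real.sqrt_eq_rpow, ← Real.rpow_mul hT1.le]; congr 1; ring
      _ ≤ √(∏ i, (1 + a i * s)) := Real.sqrt_le_sqrt h2
      _ = _ := by
          rw [Real.sqrt_eq_rpow, ← Real.finsetProd_rpow _ _ (fun i _ => by have := mul_nonneg (ha i) hs0; linarith)]
          simp_rw [Real.sqrt_eq_rpow]
  rw [Finset.prod_inv_distrib, Real.exp_neg, ← mul_inv]
  gcongr

lemma G_bound {m d : ℕ} (a : Fin d → ℝ) (ha : ∀ i, 0 ≤ a i) (hs : ∑ i, a i = 1) (δ N : ℝ) (n : ℕ) (hn : 1 ≤ n)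
    (hmn : m ≤ n) (hδ : ∑ i, a i ^ 2 = δ) (hN : δ * N ^ 2 ≤ 1)
    (haN : ∀ i, a i * N ≤ 1) (hNn : 4 * n ≤ N) (v : Fin m → ℝ) :
    ∏ i, (√(1 + a i * ∑ j, v j ^ 2))⁻¹ ≤
      exp (-(1/2) * ∑ j, v j ^ 2) * (1 + δ / 2 * (m * ∑ j, v j ^ 4)) +
        exp (-(N / 8)) * ∏ j, (1 + v j ^ 2 / (4 * n))⁻¹ := by
  have hδ0 : 0 ≤ δ := hδ ▸ Finset.sum_nonneg fun i _ => sq_nonneg _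
  have hs0 : 0 ≤ ∑ j, v j ^ 2 := Finset.sum_nonneg fun i _ => sq_nonneg _
  have hs4 : (∑ j, v j ^ 2) ^ 2 ≤ m * ∑ j, v j ^ 4 := by
    have := sq_sum_le_card_mul_sum_sq (s := Finset.univ) (f := fun j : Fin m => v j ^ 2)
    simpa [← pow_mul] using this
  have h4 : 0 ≤ m * ∑ j, v j ^ 4 := le_trans (sq_nonneg _) hs4
  have hp : 0 ≤ ∏ j, (1 + v j ^ 2 / (4 * n))⁻¹ := Finset.prod_nonneg fun j _ => by positivity
  rcases le_total (∑ j, v j ^ 2) N with h | h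
  · refine (G_small a ha hs δ N _ hδ hN hs0 h).trans ?_
    refine le_trans ?_ (le_add_of_nonneg_right (by positivity))
    gcongr
  · refine (G_large a ha hs N _ n hn haN hNn h).trans ?_
    refine le_trans ?_ (le_add_of_nonneg_left (by positivity))
    gcongr
    rw [Finset.prod_inv_distrib]
    have hq : ∀ j, 1 + v j ^ 2 / (4 * n) ≤ 1 + (∑ j, v j ^ 2) / (4 * n) := fun j => by
      gcongr
      exact Finset.single_le_sum (f := fun j => v j ^ 2) (fun i _ => sq_nonneg _) (Finset.mem_univ j)
    have h7 : 0 < ∏ j, (1 + v j ^ 2 / (4 * n)) := Finset.prod_pos fun j _ => by positivity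
    apply inv_anti₀ h7
    calc _ ≤ ∏ j : Fin m, (1 + (∑ j, v j ^ 2) / (4 * n)) := Finset.prod_le_prod (fun j _ => by positivity) fun j _ => hq j
      _ = (1 + (∑ j, v j ^ 2) / (4 * n)) ^ m := by simp
      _ ≤ _ := pow_le_pow_right₀ (le_add_of_nonneg_right (by positivity)) hmn

lemma lintegral_cauchy (c : ℝ) (hc : 0 < c) :
    ∫⁻ v : ℝ, ENNReal.ofReal ((√(2 * π))⁻¹ * (1 + v ^ 2 / c)⁻¹) = ENNReal.ofReal ((√(2 * π))⁻¹ * (√c * π)) := by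
  have hsc : 0 < √c := Real.sqrt_pos.2 hc
  have e : ∀ v : ℝ, (1 + v ^ 2 / c)⁻¹ = (fun x : ℝ => (1 + x ^ 2)⁻¹) (v / √c) := by
    intro v; simp only [div_pow, Real.sq_sqrt hc.le]
  simp_rw [e]
  rw [← ofReal_integral_eq_lintegral_ofReal ((integrable_inv_one_add_sq.comp_div hsc.ne').const_mul _)
    (ae_of_all _ fun x => by positivity), integral_const_mul, Measure.integral_comp_div (fun x : ℝ => (1 + x ^ 2)⁻¹) (√c),
    integral_univ_inv_one_add_sq, abs_of_pos hsc, smul_eq_mul]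

lemma gauss_fourth : ∫⁻ x, ENNReal.ofReal (x ^ 4) ∂(gaussianReal 0 1) ≤ ENNReal.ofReal 64 := by
  rw [gaussianReal_of_var_ne_zero _ one_ne_zero,
    lintegral_withDensity_eq_lintegral_mul _ (by fun_prop) (by fun_prop)]
  have e : ∀ u : ℝ, (gaussianPDF 0 1 * fun u => ENNReal.ofReal (u ^ 4)) u ≤
      ENNReal.ofReal ((√(2 * π))⁻¹ * 32 * exp (-(1 / 4) * u ^ 2)) := by
    intro u
    rw [Pi.mul_apply, gaussianPDF, gaussianPDFReal, ← ENNReal.ofReal_mul (by positivity)]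
    apply ENNReal.ofReal_le_ofReal
    have h1 : u ^ 4 ≤ 32 * exp (u ^ 2 / 4) := by
      have := Real.quadratic_le_exp_of_nonneg (x := u ^ 2 / 4) (by positivity)
      nlinarith [sq_nonneg u]
    have h2 : exp (-(u - 0) ^ 2 / (2 * ((1 : ℝ≥0) : ℝ))) * exp (u ^ 2 / 4) = exp (-(1 / 4) * u ^ 2) := by
      rw [← exp_add]; congr 1; push_cast; ring
    rw [← h2]
    have h3 : (√(2 * π * ((1 : ℝ≥0) : ℝ)))⁻¹ = (√(2 * π))⁻¹ := by simp
    rw [h3]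
    calc _ ≤ (√(2 * π))⁻¹ * exp (-(u - 0) ^ 2 / (2 * ((1 : ℝ≥0) : ℝ))) * (32 * exp (u ^ 2 / 4)) := by gcongr
      _ = _ := by ring
  refine (lintegral_mono e).trans ?_
  rw [← ofReal_integral_eq_lintegral_ofReal ((integrable_exp_neg_mul_sq (by norm_num)).const_mul _) (ae_of_all _ fun x => by positivity),
    integral_const_mul, integral_gaussian]
  apply ENNReal.ofReal_le_ofReal
  have : √(π / (1 / 4)) = √(2 * π) * √2 := by
    rw [← Real.sqrt_mul (by positivity)]; congr 1; ring
  rw [this]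
  have h0 : √(2 * π) ≠ 0 := by positivity
  have h2 : √2 ≤ 2 := by rw [Real.sqrt_le_left (by norm_num)]; norm_num
  field_simp
  linarith

lemma stdN_fourth (m : ℕ) : ∫⁻ z, ENNReal.ofReal (∑ j, z j ^ 4) ∂(stdN m) ≤ ENNReal.ofReal (64 * m) := by
  have e : ∀ z : Fin m → ℝ, ENNReal.ofReal (∑ j, z j ^ 4) = ∑ j, ENNReal.ofReal (z j ^ 4) := fun z =>
    ENNReal.ofReal_sum_of_nonneg (fun j _ => by positivity)
  simp_rw [e]
  rw [lintegral_finsetSum _ (fun j _ => by fun_prop)]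
  have : ∀ j : Fin m, ∫⁻ z, ENNReal.ofReal (z j ^ 4) ∂(stdN m) ≤ ENNReal.ofReal 64 := by
    intro j
    refine le_trans (le_of_eq ?_) gauss_fourth
    exact (measurePreserving_eval (fun _ : Fin m => gaussianReal 0 1) j).lintegral_comp (f := fun x => ENNReal.ofReal (x ^ 4)) (by fun_prop)
  refine (Finset.sum_le_sum fun j _ => this j).trans ?_
  simp only [Finset.sum_const, Finset.card_univ, Fintype.card_fin, nsmul_eq_mul]
  rw [mul_comm, ENNReal.ofReal_mul (by norm_num), ENNReal.ofReal_natCast]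

lemma I_bound {m d : ℕ} (a : Fin d → ℝ) (ha : ∀ i, 0 ≤ a i) (hs : ∑ i, a i = 1) (δ N : ℝ) (n : ℕ) (hn : 1 ≤ n)
    (hmn : m ≤ n) (hδ : ∑ i, a i ^ 2 = δ) (hN : δ * N ^ 2 ≤ 1)
    (haN : ∀ i, a i * N ≤ 1) (hNn : 32 * (n * √n) ≤ N) :
    ∫⁻ v : Fin m → ℝ, ENNReal.ofReal (((√(2 * π))⁻¹) ^ m *
        ∏ i, (√(1 + a i * ∑ j, v j ^ 2))⁻¹) ≤ ENNReal.ofReal (1 + 32 * δ * m ^ 2 + exp (-n)) := by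
  have hδ0 : 0 ≤ δ := hδ ▸ Finset.sum_nonneg fun i _ => sq_nonneg _
  have hn' : (1:ℝ) ≤ n := by exact_mod_cast hn
  have hsn : 1 ≤ √(n:ℝ) := by rw [Real.one_le_sqrt]; exact hn'
  have hNn4 : 4 * (n:ℝ) ≤ N := by nlinarith
  have hpt : ∀ v : Fin m → ℝ, ENNReal.ofReal (((√(2 * π))⁻¹) ^ m * ∏ i, (√(1 + a i * ∑ j, v j ^ 2))⁻¹) ≤
      ENNReal.ofReal (((√(2 * π))⁻¹)^m * exp (-(1/2) * ∑ i, v i^2)) *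
        (1 + ENNReal.ofReal (δ / 2 * m) * ENNReal.ofReal (∑ j, v j ^ 4)) +
      ENNReal.ofReal (exp (-(N / 8))) * ∏ j, ENNReal.ofReal ((√(2 * π))⁻¹ * (1 + v j ^ 2 / (4 * n))⁻¹) := by
    intro v
    have hf : 0 ≤ ∑ j, v j ^ 4 := Finset.sum_nonneg fun j _ => by positivity
    have hp : 0 ≤ ∏ j, (1 + v j ^ 2 / (4 * n))⁻¹ := Finset.prod_nonneg fun j _ => by positivity
    have h1 : ENNReal.ofReal (((√(2 * π))⁻¹)^m * exp (-(1/2) * ∑ i, v i^2)) *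
        (1 + ENNReal.ofReal (δ / 2 * m) * ENNReal.ofReal (∑ j, v j ^ 4)) +
      ENNReal.ofReal (exp (-(N / 8))) * ∏ j, ENNReal.ofReal ((√(2 * π))⁻¹ * (1 + v j ^ 2 / (4 * n))⁻¹) =
      ENNReal.ofReal (((√(2 * π))⁻¹)^m * exp (-(1/2) * ∑ i, v i^2) * (1 + δ / 2 * m * ∑ j, v j ^ 4) +
        exp (-(N / 8)) * ∏ j, ((√(2 * π))⁻¹ * (1 + v j ^ 2 / (4 * n))⁻¹)) := by
      rw [ENNReal.ofReal_add (by positivity) (mul_nonneg (by positivity) (Finset.prod_nonneg fun j _ => by positivity)),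
        ENNReal.ofReal_mul (q := 1 + δ / 2 * m * ∑ j, v j ^ 4) (by positivity),
        ENNReal.ofReal_add (p := 1) (by positivity) (by positivity),
        ENNReal.ofReal_mul (p := δ / 2 * m) (by positivity), ENNReal.ofReal_one,
        ENNReal.ofReal_mul (p := exp (-(N / 8))) (by positivity), ENNReal.ofReal_prod_of_nonneg (fun _ _ => by positivity)]
    rw [h1]
    apply ENNReal.ofReal_le_ofReal
    rw [Finset.prod_mul_distrib, Finset.prod_const, Finset.card_univ, Fintype.card_fin]
    have := G_bound a ha hs δ N n hn hmn hδ hN haN hNn4 v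
    calc _ ≤ _ := mul_le_mul_of_nonneg_left this (by positivity)
      _ = _ := by ring
  refine (lintegral_mono hpt).trans ?_
  rw [lintegral_add_left (by fun_prop), lintegral_const_mul' _ _ ENNReal.ofReal_ne_top]
  have hA : ∫⁻ v : Fin m → ℝ, ENNReal.ofReal (((√(2 * π))⁻¹)^m * exp (-(1/2) * ∑ i, v i^2)) *
        (1 + ENNReal.ofReal (δ / 2 * m) * ENNReal.ofReal (∑ j, v j ^ 4)) ≤ ENNReal.ofReal (1 + 32 * δ * m ^ 2) := by
    have := lintegral_withDensity_eq_lintegral_mul (volume : Measure (Fin m → ℝ))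
      (f := fun v => ENNReal.ofReal (((√(2 * π))⁻¹)^m * exp (-(1/2) * ∑ i, v i^2))) (by fun_prop)
      (g := fun v => 1 + ENNReal.ofReal (δ / 2 * m) * ENNReal.ofReal (∑ j, v j ^ 4)) (by fun_prop)
    simp only [Pi.mul_apply] at this
    rw [← this, ← stdN_eq, lintegral_add_left (by fun_prop), lintegral_const_mul' _ _ ENNReal.ofReal_ne_top]
    rw [lintegral_one, measure_univ, ENNReal.ofReal_add (by positivity) (by positivity), ENNReal.ofReal_one]
    gcongr
    refine (mul_le_mul_right (stdN_fourth m) _).trans ?_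
    rw [← ENNReal.ofReal_mul (by positivity)]
    apply ENNReal.ofReal_le_ofReal
    apply le_of_eq; ring
  have hB : ENNReal.ofReal (exp (-(N / 8))) * ∫⁻ v : Fin m → ℝ, ∏ j, ENNReal.ofReal ((√(2 * π))⁻¹ * (1 + v j ^ 2 / (4 * n))⁻¹)
      ≤ ENNReal.ofReal (exp (-n)) := by
    have h4 : (volume : Measure (Fin m → ℝ)) = Measure.pi fun _ => volume := rfl
    rw [h4, lintegral_pi_prod m _ (fun _ x => ENNReal.ofReal ((√(2 * π))⁻¹ * (1 + x ^ 2 / (4 * n))⁻¹)) (fun i => by fun_prop)]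
    simp_rw [lintegral_cauchy (4 * n) (by positivity)]
    rw [Finset.prod_const, Finset.card_univ, Fintype.card_fin, ← ENNReal.ofReal_pow (by positivity), ← ENNReal.ofReal_mul (by positivity)]
    apply ENNReal.ofReal_le_ofReal
    have h5 : (√(2 * π))⁻¹ * (√(4 * n) * π) ≤ exp (3 * √n) := by
      have h6 : √(4 * n) = 2 * √(n:ℝ) := by
        rw [Real.sqrt_mul (by norm_num)]; congr 1
        rw [show (4:ℝ) = 2 ^ 2 by norm_num, Real.sqrt_sq (by norm_num)]
      have h7 : (√(2 * π))⁻¹ * π ≤ 3 / 2 := by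
        rw [inv_mul_le_iff₀ (by positivity)]
        have h9 : π ≤ 3.15 := Real.pi_lt_d2.le
        have h8 : 2.2 ≤ √(2 * π) := by
          apply Real.le_sqrt_of_sq_le
          have := Real.pi_gt_three
          nlinarith
        nlinarith
      have := Real.add_one_le_exp (3 * √(n:ℝ))
      rw [h6]
      nlinarith
    have h6 : ((√(2 * π))⁻¹ * (√(4 * n) * π)) ^ m ≤ exp (3 * (n * √n)) := by
      calc _ ≤ exp (3 * √n) ^ m := by gcongr
        _ ≤ exp (3 * √n) ^ n := pow_le_pow_right₀ (Real.one_le_exp (by positivity)) hmn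
        _ = _ := by rw [← Real.exp_nat_mul]; congr 1; ring
    calc _ ≤ exp (-(N / 8)) * exp (3 * (n * √n)) := by gcongr
      _ = exp (-(N / 8) + 3 * (n * √n)) := by rw [Real.exp_add]
      _ ≤ _ := by
        apply Real.exp_le_exp.2
        nlinarith
  rw [ENNReal.ofReal_add (by positivity) (by positivity)]
  exact add_le_add hA hB

end

section

def extM {m : ℕ} (M : Fin m → Fin m → ℝ) (w : Fin m → ℝ) (i j : Fin (m + 1)) : ℝ :=
  Fin.lastCases (motive := fun _ => ℝ) (Fin.lastCases (motive := fun _ => ℝ) 0 w j)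
    (fun i' => Fin.lastCases (motive := fun _ => ℝ) (w i') (fun j' => M i' j') j) i

lemma measurable_extM {m : ℕ} : Measurable fun p : (Fin m → Fin m → ℝ) × (Fin m → ℝ) => extM p.1 p.2 := by
  refine measurable_pi_lambda _ fun i => measurable_pi_lambda _ fun j => ?_
  unfold extM
  refine Fin.lastCases ?_ (fun i' => ?_) i
  · refine Fin.lastCases ?_ (fun j' => ?_) j
    · simp
    · simp; fun_prop
  · refine Fin.lastCases ?_ (fun j' => ?_) j
    · simp; fun_prop
    · simp; fun_prop

lemma pi_map_inj {ι κ : Type*} [Fintype ι] [Fintype κ] (e : κ → ι) (he : Function.Injective e)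
    (μ : Measure ℝ) [IsProbabilityMeasure μ] :
    (Measure.pi fun _ : ι => μ).map (fun x k => x (e k)) = Measure.pi fun _ : κ => μ := by
  have h1 : iIndepFun (fun (i : ι) (x : ι → ℝ) => x i) (Measure.pi fun _ : ι => μ) :=
    iIndepFun_pi (μ := fun _ : ι => μ) (X := fun _ x => x) (fun i => aemeasurable_id)
  have h2 := h1.precomp he
  rw [iIndepFun_iff_map_fun_eq_pi_map (fun i => (measurable_pi_apply _).aemeasurable)] at h2
  rw [h2]
  congr 1
  ext1 k
  exact (measurePreserving_eval (fun _ : ι => μ) (e k)).map_eq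

def esum (m : ℕ) : Sym2 (Fin m) ⊕ Fin m → Sym2 (Fin (m + 1)) :=
  Sum.elim (Sym2.map Fin.castSucc) (fun j => s(j.castSucc, Fin.last m))

lemma esum_inj (m : ℕ) : Function.Injective (esum m) := by
  have hl : ∀ (x : Sym2 (Fin m)) (y : Fin m), Sym2.map Fin.castSucc x ≠ s(y.castSucc, Fin.last m) := by
    intro x y
    induction x with | _ a b
    simp only [Sym2.map_mk, ne_eq, Sym2.eq_iff]
    rintro (⟨-, h⟩ | ⟨h, -⟩)
    · exact absurd h (Fin.castSucc_lt_last b).ne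
    · exact absurd h (Fin.castSucc_lt_last a).ne
  rintro (x | x) (y | y) h
  · simp only [esum, Sum.elim_inl] at h
    rw [Sym2.map.injective (Fin.castSucc_injective m) h]
  · exact absurd h (hl x y)
  · exact absurd h.symm (hl y x)
  · simp only [esum, Sum.elim_inr, Sym2.eq_iff] at h
    rcases h with ⟨h, -⟩ | ⟨h, -⟩
    · rw [Fin.castSucc_injective m h]
    · exact absurd h (Fin.castSucc_lt_last x).ne

instance instProbGoe (m : ℕ) : IsProbabilityMeasure (goeOffDiag m) := by
  unfold goeOffDiag
  refine Measure.isProbabilityMeasure_map (Measurable.aemeasurable ?_)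
  refine measurable_pi_lambda _ fun i => measurable_pi_lambda _ fun j => ?_
  split_ifs <;> fun_prop

lemma goe_meas (m : ℕ) : Measurable (fun (x : Sym2 (Fin m) → ℝ) (i j : Fin m) => if i = j then 0 else x s(i, j)) := by
  refine measurable_pi_lambda _ fun i => measurable_pi_lambda _ fun j => ?_
  split_ifs <;> fun_prop

lemma goe_succ (m : ℕ) (F : (Fin (m+1) → Fin (m+1) → ℝ) → ℝ≥0∞) (hF : Measurable F) :
    ∫⁻ M, F M ∂(goeOffDiag (m+1)) = ∫⁻ M, ∫⁻ w, F (extM M w) ∂(stdN m) ∂(goeOffDiag m) := by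
  have hFe : Measurable fun p : (Fin m → Fin m → ℝ) × (Fin m → ℝ) => F (extM p.1 p.2) := hF.comp measurable_extM
  unfold goeOffDiag
  rw [lintegral_map hF (goe_meas _), lintegral_map (hFe.lintegral_prod_right') (goe_meas _)]
  have e1 : ∀ x : Sym2 (Fin (m+1)) → ℝ, (fun (i j : Fin (m+1)) => if i = j then 0 else x s(i, j)) =
      (fun y : Sym2 (Fin m) ⊕ Fin m → ℝ => extM (fun i j => if i = j then 0 else y (.inl s(i, j))) (fun j => y (.inr j)))
        (fun k => x (esum m k)) := by
    intro x
    ext i j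
    unfold extM
    refine Fin.lastCases ?_ (fun i' => ?_) i
    · refine Fin.lastCases ?_ (fun j' => ?_) j
      · simp
      · simp [esum, (Fin.castSucc_lt_last j').ne', Sym2.eq_swap]
    · refine Fin.lastCases ?_ (fun j' => ?_) j
      · simp [esum, (Fin.castSucc_lt_last i').ne]
      · simp [esum]
  simp_rw [e1]
  have hm : Measurable (fun y : Sym2 (Fin m) ⊕ Fin m → ℝ => extM (fun i j => if i = j then 0 else y (.inl s(i, j))) (fun j => y (.inr j))) := by
    have : Measurable (fun y : Sym2 (Fin m) ⊕ Fin m → ℝ => ((fun i j => if i = j then 0 else y (.inl s(i, j)) : Fin m → Fin m → ℝ), fun j => y (.inr j))) :=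
      ((goe_meas m).comp (g := _) (f := fun (y : Sym2 (Fin m) ⊕ Fin m → ℝ) s => y (.inl s)) (by fun_prop)).prodMk (by fun_prop)
    exact measurable_extM.comp this
  have h3 := lintegral_map (μ := Measure.pi fun _ : Sym2 (Fin (m+1)) => gaussianReal 0 1)
    (f := fun y : Sym2 (Fin m) ⊕ Fin m → ℝ => F (extM (fun i j => if i = j then 0 else y (.inl s(i, j))) (fun j => y (.inr j))))
    (g := fun x k => x (esum m k)) (hF.comp hm) (by fun_prop)
  rw [← h3, pi_map_inj _ (esum_inj m)]
  have h4 := (measurePreserving_sumPiEquivProdPi (ι := Sym2 (Fin m)) (ι' := Fin m) (X := fun _ => ℝ) (fun _ => gaussianReal 0 1))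
  have h5 := h4.lintegral_comp_emb (MeasurableEquiv.measurableEmbedding _)
    (fun p : (Sym2 (Fin m) → ℝ) × (Fin m → ℝ) => F (extM (fun i j => if i = j then 0 else p.1 s(i, j)) p.2))
  have h6 := lintegral_prod (μ := Measure.pi fun _ : Sym2 (Fin m) => gaussianReal 0 1) (ν := stdN m)
    (fun p : (Sym2 (Fin m) → ℝ) × (Fin m → ℝ) => F (extM (fun i j => if i = j then 0 else p.1 s(i, j)) p.2))
    (hFe.comp (((goe_meas m).comp measurable_fst).prodMk measurable_snd)).aemeasurable
  exact h5.trans h6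

lemma nrm_two_sq {d : ℕ} (α : Fin d → ℝ) : nrm 2 α ^ 2 = ∑ i, α i ^ 2 := by
  unfold nrm
  have : 0 ≤ ∑ i, α i ^ 2 := Finset.sum_nonneg fun i _ => sq_nonneg _
  rw [← Real.rpow_natCast, ← Real.rpow_mul this]; norm_num

lemma trace_moment {m d : ℕ} (α : Fin d → ℝ) (hα : ∀ i, 0 ≤ α i) (h0 : 0 < nrm 2 α) :
    Integrable (fun X => (covM α X).trace) (sampleMeasure m d α) ∧
    ∫ X, (covM α X).trace ∂(sampleMeasure m d α) = m := by
  have e : ∀ X : Fin m → Fin d → ℝ, (covM α X).trace = ∑ j, ∑ i, (α i / nrm 2 α ^ 2) * (X j i) ^ 2 := by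
    intro X
    simp only [Matrix.trace, covM, Matrix.diag_apply]
    refine Finset.sum_congr rfl fun j _ => Finset.sum_congr rfl fun i _ => ?_
    have := Real.mul_self_sqrt (hα i)
    field_simp
    linear_combination (X j i)^2 * this
  have mp : ∀ (j : Fin m) (i : Fin d), MeasurePreserving (fun X : Fin m → Fin d → ℝ => X j i) (sampleMeasure m d α) (gaussianReal 0 (Real.toNNReal (α i))) := by
    intro j i
    have h1 := measurePreserving_eval (fun _ : Fin m => gaussPi d α) j
    have h2 := measurePreserving_eval (fun i : Fin d => gaussianReal 0 (Real.toNNReal (α i))) i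
    exact h2.comp h1
  have hi : ∀ (j : Fin m) (i : Fin d), Integrable (fun X : Fin m → Fin d → ℝ => (X j i) ^ 2) (sampleMeasure m d α) := fun j i =>
    (mp j i).integrable_comp_of_integrable (integrable_sq_gaussianReal _)
  have hv : ∀ (j : Fin m) (i : Fin d), ∫ X, (X j i) ^ 2 ∂(sampleMeasure m d α) = α i := fun j i => by
    have := integral_map (μ := sampleMeasure m d α) (φ := fun X : Fin m → Fin d → ℝ => X j i) (mp j i).measurable.aemeasurable (f := fun x : ℝ => x ^ 2) (by fun_prop)
    rw [← this, (mp j i).map_eq, integral_sq_gaussianReal, Real.coe_toNNReal _ (hα i)]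
  simp_rw [e]
  refine ⟨integrable_finsetSum _ fun j _ => integrable_finsetSum _ fun i _ => (hi j i).const_mul _, ?_⟩
  rw [integral_finsetSum _ fun j _ => integrable_finsetSum _ fun i _ => (hi j i).const_mul _]
  have : ∀ j : Fin m, ∫ X, ∑ i, (α i / nrm 2 α ^ 2) * (X j i) ^ 2 ∂(sampleMeasure m d α) = 1 := by
    intro j
    rw [integral_finsetSum _ fun i _ => (hi j i).const_mul _]
    simp_rw [integral_const_mul, hv]
    have h3 : ∀ i, α i / nrm 2 α ^ 2 * α i = α i ^ 2 / nrm 2 α ^ 2 := fun i => by ring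
    simp_rw [h3]
    rw [← Finset.sum_div, nrm_two_sq]
    exact div_self (by rw [← nrm_two_sq]; positivity)
  simp [this]

def snocE (m d : ℕ) : (Fin m → Fin d → ℝ) × (Fin d → ℝ) ≃ᵐ (Fin (m+1) → Fin d → ℝ) :=
  MeasurableEquiv.prodComm.trans (MeasurableEquiv.piFinSuccAbove (fun _ : Fin (m+1) => Fin d → ℝ) (Fin.last m)).symm

lemma snocE_mp (m d : ℕ) (α : Fin d → ℝ) :
    MeasurePreserving (snocE m d) ((sampleMeasure m d α).prod (gaussPi d α)) (sampleMeasure (m+1) d α) := by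
  have h := (measurePreserving_piFinSuccAbove (fun _ : Fin (m+1) => gaussPi d α) (Fin.last m)).symm
  exact h.comp Measure.measurePreserving_swap

lemma snocE_castSucc {m d : ℕ} (p : (Fin m → Fin d → ℝ) × (Fin d → ℝ)) (j : Fin m) : snocE m d p j.castSucc = p.1 j := by
  simp [snocE, MeasurableEquiv.piFinSuccAbove]
  rfl

lemma snocE_last {m d : ℕ} (p : (Fin m → Fin d → ℝ) × (Fin d → ℝ)) : snocE m d p (Fin.last m) = p.2 := by
  simp [snocE, MeasurableEquiv.piFinSuccAbove]
  rfl

/-- the Wishart map -/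
def fW {d : ℕ} (n : ℕ) (α : Fin d → ℝ) (X : Fin n → Fin d → ℝ) (i j : Fin n) : ℝ :=
  if i = j then 0 else dotp (X i) (X j) / nrm 2 α

lemma measurable_fW {d : ℕ} (n : ℕ) (α : Fin d → ℝ) : Measurable (fW n α) := by
  refine measurable_pi_lambda _ fun i => measurable_pi_lambda _ fun j => ?_
  unfold fW dotp
  split_ifs <;> fun_prop

lemma fW_snoc {m d : ℕ} (α : Fin d → ℝ) (X : Fin m → Fin d → ℝ) (x : Fin d → ℝ) :
    fW (m+1) α (snocE m d (X, x)) = extM (fW m α X) (wv α X x) := by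
  ext i j
  unfold extM fW wv
  have hc : ∀ u v : Fin d → ℝ, dotp u v = dotp v u := fun u v => by simp [dotp, mul_comm]
  refine Fin.lastCases ?_ (fun i' => ?_) i
  · refine Fin.lastCases ?_ (fun j' => ?_) j
    · simp
    · simp [snocE_last, snocE_castSucc, (Fin.castSucc_lt_last j').ne', hc x]
  · refine Fin.lastCases ?_ (fun j' => ?_) j
    · simp [snocE_last, snocE_castSucc, (Fin.castSucc_lt_last i').ne]
    · simp [snocE_last, snocE_castSucc]

end

section

open Matrix

lemma log_det_le {m : ℕ} {C : Matrix (Fin m) (Fin m) ℝ} (hC : C.PosSemidef) (h : 0 < C.det) :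
    log C.det ≤ C.trace := by
  have h1 := hC.isHermitian.det_eq_prod_eigenvalues
  have h2 := hC.isHermitian.trace_eq_sum_eigenvalues
  simp only [RCLike.ofReal_real_eq_id, id_eq] at h1 h2
  rw [h2, h1, Real.log_prod]
  · refine Finset.sum_le_sum fun i _ => ?_
    have := Real.log_le_self (hC.eigenvalues_nonneg i)
    exact this
  · intro i _ h0
    rw [h1] at h
    exact h.ne' (Finset.prod_eq_zero (Finset.mem_univ i) h0)

lemma continuous_wv {m d : ℕ} (α : Fin d → ℝ) :
    Continuous fun p : (Fin m → Fin d → ℝ) × (Fin d → ℝ) => wv α p.1 p.2 := by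
  unfold wv dotp
  fun_prop

lemma measurable_winv {Ω : Type*} [TopologicalSpace Ω] [MeasurableSpace Ω] [BorelSpace Ω] {m : ℕ}
    {C : Ω → Matrix (Fin m) (Fin m) ℝ} {w : Ω → Fin m → ℝ} (hC : Continuous C) (hw : Continuous w) :
    Measurable fun p => w p ⬝ᵥ ((C p)⁻¹ *ᵥ w p) := by
  have h1 : Measurable fun p => (C p).det := hC.matrix_det.measurable
  have : ∀ p, w p ⬝ᵥ ((C p)⁻¹ *ᵥ w p) = (C p).det⁻¹ * (w p ⬝ᵥ ((C p).adjugate *ᵥ w p)) := fun p => by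
    rw [Matrix.inv_def, Matrix.smul_mulVec, dotProduct_smul, Ring.inverse_eq_inv', smul_eq_mul]
  simp_rw [this]
  exact h1.inv.mul (hw.dotProduct (hC.matrix_adjugate.matrix_mulVec hw)).measurable

lemma measurable_wvX {m d : ℕ} (α : Fin d → ℝ) (X : Fin m → Fin d → ℝ) : Measurable (wv α X) := by
  unfold wv dotp
  fun_prop

lemma inner_int {m d : ℕ} (α : Fin d → ℝ) (hα : ∀ i, 0 ≤ α i) (X : Fin m → Fin d → ℝ)
    (S : Matrix (Fin m) (Fin m) ℝ) (hS : covM α X = S * Sᵀ) (g : (Fin m → ℝ) → ℝ) (hg : Measurable g) :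
    (Integrable (fun x => g (wv α X x)) (gaussPi d α) ↔ Integrable (fun z => g (S *ᵥ z)) (stdN m)) ∧
    ∫ x, g (wv α X x) ∂(gaussPi d α) = ∫ z, g (S *ᵥ z) ∂(stdN m) := by
  have hl := law_w α hα X S hS
  have hm := measurable_mulVec' S
  have hm2 := measurable_wvX α X
  constructor
  · have h1 := integrable_map_measure (μ := gaussPi d α) (f := wv α X) (g := g) hg.aestronglyMeasurable hm2.aemeasurable
    have h2 := integrable_map_measure (μ := stdN m) (f := fun z => S *ᵥ z) (g := g) hg.aestronglyMeasurable hm.aemeasurable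
    rw [hl] at h1
    exact h1.symm.trans h2
  · have h1 := integral_map (μ := gaussPi d α) (φ := wv α X) hm2.aemeasurable (f := g) hg.aestronglyMeasurable
    have h2 := integral_map (μ := stdN m) (φ := fun z => S *ᵥ z) hm.aemeasurable (f := g) hg.aestronglyMeasurable
    rw [hl] at h1
    exact h1.symm.trans h2

lemma inner_B {m d : ℕ} (α : Fin d → ℝ) (hα : ∀ i, 0 ≤ α i) (X : Fin m → Fin d → ℝ) :
    Integrable (fun x => wv α X x ⬝ᵥ wv α X x) (gaussPi d α) ∧
    ∫ x, wv α X x ⬝ᵥ wv α X x ∂(gaussPi d α) = (covM α X).trace := by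
  obtain ⟨S, hS⟩ := psd_sqrt (covM_psd α X)
  have h := inner_int α hα X S hS (fun w => w ⬝ᵥ w) (continuous_id.dotProduct continuous_id).measurable
  rw [h.1, h.2, hS]
  exact stdN_quad S

lemma inner_D {m d : ℕ} (α : Fin d → ℝ) (hα : ∀ i, 0 ≤ α i) (X : Fin m → Fin d → ℝ) (hX : 0 < (covM α X).det) :
    Integrable (fun x => wv α X x ⬝ᵥ ((covM α X)⁻¹ *ᵥ wv α X x)) (gaussPi d α) ∧
    ∫ x, wv α X x ⬝ᵥ ((covM α X)⁻¹ *ᵥ wv α X x) ∂(gaussPi d α) = m := by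
  obtain ⟨S, hS⟩ := psd_sqrt (covM_psd α X)
  have hS0 : S.det ≠ 0 := by
    rintro h
    rw [hS, det_mul, h] at hX
    simp at hX
  have h := inner_int α hα X S hS (fun w => w ⬝ᵥ ((covM α X)⁻¹ *ᵥ w)) (measurable_winv continuous_const continuous_id)
  rw [h.1, h.2, hS]
  simp_rw [quad_inv S hS0]
  exact stdN_sq m

lemma measurable_Jq {m d : ℕ} (α : Fin d → ℝ) : Measurable fun X : Fin m → Fin d → ℝ => Jq (covM α X) := by
  have : Continuous fun p : (Fin m → Fin d → ℝ) × (Fin m → ℝ) => p.2 ⬝ᵥ (covM α p.1 *ᵥ p.2) :=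
    continuous_snd.dotProduct (((continuous_covM α).comp continuous_fst).matrix_mulVec continuous_snd)
  have := this.measurable
  exact (ENNReal.measurable_ofReal.comp ((this.const_mul (-(1/2))).exp.const_mul (((√(2 * π))⁻¹) ^ m))).lintegral_prod_right'

lemma winv_nonneg {m : ℕ} {C : Matrix (Fin m) (Fin m) ℝ} (hC : C.PosSemidef) (w : Fin m → ℝ) : 0 ≤ w ⬝ᵥ (C⁻¹ *ᵥ w) := by
  have := hC.inv.dotProduct_mulVec_nonneg w
  simpa using this

lemma stepL {m d : ℕ} (α : Fin d → ℝ) (hα : ∀ i, 0 ≤ α i) (h0 : 0 < nrm 2 α) (b : ℝ) (hb : 0 ≤ b)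
    (hJ : ∫⁻ X, Jq (covM α X) ∂(sampleMeasure m d α) ≤ ENNReal.ofReal (1 + b)) :
    (∀ᵐ X ∂(sampleMeasure m d α), 0 < (covM α X).det) ∧
    Integrable (fun p => log (hd (covM α p.1) (wv α p.1 p.2))) ((sampleMeasure m d α).prod (gaussPi d α)) ∧
    - b ≤ ∫ p, log (hd (covM α p.1) (wv α p.1 p.2)) ∂((sampleMeasure m d α).prod (gaussPi d α)) := by
  have hJt : ∫⁻ X, Jq (covM α X) ∂(sampleMeasure m d α) ≠ ∞ := ne_top_of_le_ne_top ENNReal.ofReal_ne_top hJ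
  have hae : ∀ᵐ X ∂(sampleMeasure m d α), Jq (covM α X) ≠ ∞ := by
    filter_upwards [ae_lt_top (measurable_Jq α) hJt] with X hX using hX.ne
  have hdet : ∀ᵐ X ∂(sampleMeasure m d α), 0 < (covM α X).det := by
    filter_upwards [hae] with X hX using (Jq_cor (covM_psd α X) hX).1
  have hdet2 : ∀ᵐ p ∂((sampleMeasure m d α).prod (gaussPi d α)), 0 < (covM α p.1).det :=
    Measure.quasiMeasurePreserving_fst.ae hdet
  have hJi : Integrable (fun X => (Jq (covM α X)).toReal) (sampleMeasure m d α) :=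
    integrable_toReal_of_lintegral_ne_top (measurable_Jq α).aemeasurable hJt
  have hJv : ∫ X, (Jq (covM α X)).toReal ∂(sampleMeasure m d α) ≤ 1 + b := by
    rw [integral_toReal (measurable_Jq α).aemeasurable (ae_lt_top (measurable_Jq α) hJt)]
    exact ENNReal.toReal_le_of_le_ofReal (by linarith) hJ
  have htr := trace_moment (m := m) α hα h0
  have hAm : Measurable fun X : Fin m → Fin d → ℝ => log (covM α X).det :=
    (continuous_covM α).matrix_det.measurable.log
  have hA : Integrable (fun X => log (covM α X).det) (sampleMeasure m d α) := by
    refine Integrable.mono' (g := fun X => (covM α X).trace + 2 * (Jq (covM α X)).toReal) (htr.1.add (hJi.const_mul 2)) hAm.aestronglyMeasurable ?_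
    filter_upwards [hae] with X hX
    obtain ⟨h1, h2⟩ := Jq_cor (covM_psd α X) hX
    have h3 := log_det_le (covM_psd α X) h1
    have h4 : 0 ≤ (covM α X).trace := (covM_psd α X).trace_nonneg
    rw [Real.norm_eq_abs, abs_le]
    constructor <;> linarith [ENNReal.toReal_nonneg (a := Jq (covM α X))]
  have hAv : -(2 * b) ≤ ∫ X, log (covM α X).det ∂(sampleMeasure m d α) := by
    have : ∫ X, (2 - 2 * (Jq (covM α X)).toReal) ∂(sampleMeasure m d α) ≤ ∫ X, log (covM α X).det ∂(sampleMeasure m d α) := by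
      refine integral_mono_ae ((integrable_const _).sub (hJi.const_mul 2)) hA ?_
      filter_upwards [hae] with X hX
      obtain ⟨h1, h2⟩ := Jq_cor (covM_psd α X) hX
      linarith
    rw [integral_sub (integrable_const _) (hJi.const_mul 2), integral_const_mul] at this
    simp at this
    linarith
  have hC1 : Continuous fun p : (Fin m → Fin d → ℝ) × (Fin d → ℝ) => covM α p.1 := (continuous_covM α).comp continuous_fst
  have hBm : Measurable fun p : (Fin m → Fin d → ℝ) × (Fin d → ℝ) => wv α p.1 p.2 ⬝ᵥ wv α p.1 p.2 :=
    ((continuous_wv α).dotProduct (continuous_wv α)).measurable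
  have hDm : Measurable fun p : (Fin m → Fin d → ℝ) × (Fin d → ℝ) => wv α p.1 p.2 ⬝ᵥ ((covM α p.1)⁻¹ *ᵥ wv α p.1 p.2) :=
    measurable_winv hC1 (continuous_wv α)
  have hB0 : ∀ w : Fin m → ℝ, 0 ≤ w ⬝ᵥ w := fun w => Finset.sum_nonneg fun i _ => mul_self_nonneg _
  have hB : Integrable (fun p => wv α p.1 p.2 ⬝ᵥ wv α p.1 p.2) ((sampleMeasure m d α).prod (gaussPi d α)) := by
    rw [integrable_prod_iff hBm.aestronglyMeasurable]
    refine ⟨ae_of_all _ fun X => (inner_B α hα X).1, ?_⟩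
    simp_rw [Real.norm_of_nonneg (hB0 _), (inner_B α hα _).2]
    exact htr.1
  have hBv : ∫ p, wv α p.1 p.2 ⬝ᵥ wv α p.1 p.2 ∂((sampleMeasure m d α).prod (gaussPi d α)) = m := by
    rw [integral_prod _ hB]
    simp_rw [(inner_B α hα _).2]
    exact htr.2
  have hD : Integrable (fun p => wv α p.1 p.2 ⬝ᵥ ((covM α p.1)⁻¹ *ᵥ wv α p.1 p.2)) ((sampleMeasure m d α).prod (gaussPi d α)) := by
    rw [integrable_prod_iff hDm.aestronglyMeasurable]
    refine ⟨?_, ?_⟩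
    · filter_upwards [hdet] with X hX using (inner_D α hα X hX).1
    · refine (integrable_const (m : ℝ)).congr ?_
      filter_upwards [hdet] with X hX
      simp_rw [Real.norm_of_nonneg (winv_nonneg (covM_psd α X) _), (inner_D α hα X hX).2]
  have hDv : ∫ p, wv α p.1 p.2 ⬝ᵥ ((covM α p.1)⁻¹ *ᵥ wv α p.1 p.2) ∂((sampleMeasure m d α).prod (gaussPi d α)) = m := by
    rw [integral_prod _ hD]
    have : ∫ X, ∫ x, wv α X x ⬝ᵥ ((covM α X)⁻¹ *ᵥ wv α X x) ∂(gaussPi d α) ∂(sampleMeasure m d α) = ∫ X, (m:ℝ) ∂(sampleMeasure m d α) := by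
      refine integral_congr_ae ?_
      filter_upwards [hdet] with X hX using (inner_D α hα X hX).2
    rw [this]; simp
  have hA' : Integrable (fun p : (Fin m → Fin d → ℝ) × (Fin d → ℝ) => log (covM α p.1).det) ((sampleMeasure m d α).prod (gaussPi d α)) :=
    hA.comp_fst _
  have hAv' : ∫ p, log (covM α p.1).det ∂((sampleMeasure m d α).prod (gaussPi d α)) = ∫ X, log (covM α X).det ∂(sampleMeasure m d α) := by
    rw [integral_prod _ hA']; simp
  have heq : (fun p : (Fin m → Fin d → ℝ) × (Fin d → ℝ) => log (hd (covM α p.1) (wv α p.1 p.2))) =ᵐ[(sampleMeasure m d α).prod (gaussPi d α)]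
      fun p => (1/2) * log (covM α p.1).det - (1/2) * (wv α p.1 p.2 ⬝ᵥ wv α p.1 p.2) + (1/2) * (wv α p.1 p.2 ⬝ᵥ ((covM α p.1)⁻¹ *ᵥ wv α p.1 p.2)) := by
    filter_upwards [hdet2] with p hp
    rw [hd, if_neg hp.ne', Real.log_mul (Real.sqrt_pos.2 hp).ne' (exp_pos _).ne', Real.log_sqrt hp.le, Real.log_exp]
    ring
  refine ⟨hdet, (((hA'.const_mul _).sub (hB.const_mul _)).add (hD.const_mul _)).congr heq.symm, ?_⟩
  have hAB : Integrable (fun p : (Fin m → Fin d → ℝ) × (Fin d → ℝ) => (1/2) * log (covM α p.1).det - (1/2) * (wv α p.1 p.2 ⬝ᵥ wv α p.1 p.2))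
      ((sampleMeasure m d α).prod (gaussPi d α)) := (hA'.const_mul _).sub (hB.const_mul _)
  rw [integral_congr_ae heq, integral_add hAB (hD.const_mul _),
    integral_sub (hA'.const_mul _) (hB.const_mul _), integral_const_mul, integral_const_mul, integral_const_mul, hBv, hDv, hAv']
  linarith

lemma hd_pos {m : ℕ} {C : Matrix (Fin m) (Fin m) ℝ} (hC : C.PosSemidef) (w : Fin m → ℝ) : 0 < hd C w := by
  unfold hd
  split_ifs with h
  · exact one_pos
  · have : 0 < C.det := lt_of_le_of_ne hC.det_nonneg (Ne.symm h)
    positivity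

lemma inner_step {m d : ℕ} (α : Fin d → ℝ) (hα : ∀ i, 0 ≤ α i) (X : Fin m → Fin d → ℝ) (hX : 0 < (covM α X).det)
    (F : (Fin m → ℝ) → ℝ≥0∞) (hF : Measurable F) :
    ∫⁻ x, F (wv α X x) * ENNReal.ofReal (hd (covM α X) (wv α X x)) ∂(gaussPi d α) = ∫⁻ w, F w ∂(stdN m) := by
  obtain ⟨S, hS⟩ := psd_sqrt (covM_psd α X)
  have hS0 : S.det ≠ 0 := by
    rintro h
    rw [hS, det_mul, h] at hX
    simp at hX
  have hg : Measurable fun w : Fin m → ℝ => F w * ENNReal.ofReal (hd (covM α X) w) :=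
    hF.mul (measurable_hd continuous_const continuous_id).ennreal_ofReal
  have h1 := lintegral_map (μ := gaussPi d α) (g := wv α X) hg (measurable_wvX α X)
  have h2 := lintegral_map (μ := stdN m) (g := fun z => S *ᵥ z) hg (measurable_mulVec' S)
  rw [law_w α hα X S hS] at h1
  rw [← h1, h2, hS]
  exact step_lintegral S hS0 F hF

lemma exists_H {d : ℕ} (α : Fin d → ℝ) (hα : ∀ i, 0 ≤ α i) (h0 : 0 < nrm 2 α) (b : ℝ) (hb : 0 ≤ b) (n : ℕ)
    (hJ : ∀ m < n, ∫⁻ X, Jq (covM α X) ∂(sampleMeasure m d α) ≤ ENNReal.ofReal (1 + b)) :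
    ∀ m ≤ n, ∃ H : (Fin m → Fin d → ℝ) → ℝ, Measurable H ∧ (∀ X, 0 < H X) ∧
      (∀ F : (Fin m → Fin m → ℝ) → ℝ≥0∞, Measurable F →
        ∫⁻ X, F (fW m α X) * ENNReal.ofReal (H X) ∂(sampleMeasure m d α) = ∫⁻ M, F M ∂(goeOffDiag m)) ∧
      Integrable (fun X => log (H X)) (sampleMeasure m d α) ∧
      -(m * b) ≤ ∫ X, log (H X) ∂(sampleMeasure m d α) := by
  intro m
  induction m with
  | zero =>
    intro _
    refine ⟨fun _ => 1, measurable_const, fun _ => one_pos, ?_, by simp, by simp⟩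
    intro F _
    have h1 : ∀ X : Fin 0 → Fin 0 → ℝ, F X = F 0 := fun X => by rw [Subsingleton.elim X 0]
    simp_rw [h1]
    simp
  | succ m ih =>
    intro hm
    obtain ⟨H, hHm, hHp, hHF, hHi, hHv⟩ := ih (by omega)
    obtain ⟨hdet, hLi, hLv⟩ := stepL α hα h0 b hb (hJ m (by omega))
    have hC1 : Continuous fun p : (Fin m → Fin d → ℝ) × (Fin d → ℝ) => covM α p.1 := (continuous_covM α).comp continuous_fst
    let K : (Fin m → Fin d → ℝ) × (Fin d → ℝ) → ℝ := fun p => H p.1 * hd (covM α p.1) (wv α p.1 p.2)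
    have hhd : Measurable fun p : (Fin m → Fin d → ℝ) × (Fin d → ℝ) => hd (covM α p.1) (wv α p.1 p.2) :=
      measurable_hd hC1 (continuous_wv α)
    have hKm : Measurable K := (hHm.comp measurable_fst).mul hhd
    have hKp : ∀ p, 0 < K p := fun p => mul_pos (hHp _) (hd_pos (covM_psd α _) _)
    have mp := snocE_mp m d α
    have hlog : ∀ p, log (K p) = log (H p.1) + log (hd (covM α p.1) (wv α p.1 p.2)) := fun p =>
      Real.log_mul (hHp _).ne' (hd_pos (covM_psd α _) _).ne'
    have hHi' : Integrable (fun p : (Fin m → Fin d → ℝ) × (Fin d → ℝ) => log (H p.1)) ((sampleMeasure m d α).prod (gaussPi d α)) := hHi.comp_fst _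
    have hKi : Integrable (fun p => log (K p)) ((sampleMeasure m d α).prod (gaussPi d α)) := by
      simp_rw [hlog]
      exact hHi'.add hLi
    refine ⟨fun Y => K ((snocE m d).symm Y), hKm.comp (snocE m d).symm.measurable, fun Y => hKp _, ?_, ?_, ?_⟩
    · intro F hF
      rw [goe_succ m F hF]
      rw [← mp.lintegral_comp_emb (snocE m d).measurableEmbedding]
      have hFe : Measurable fun p : (Fin m → Fin m → ℝ) × (Fin m → ℝ) => F (extM p.1 p.2) := hF.comp measurable_extM
      rw [← hHF _ hFe.lintegral_prod_right']
      simp only [MeasurableEquiv.symm_apply_apply]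
      have hme : Measurable fun p => F (fW (m+1) α (snocE m d p)) * ENNReal.ofReal (K p) :=
        (hF.comp ((measurable_fW _ α).comp (snocE m d).measurable)).mul hKm.ennreal_ofReal
      rw [lintegral_prod _ hme.aemeasurable]
      refine lintegral_congr_ae ?_
      filter_upwards [hdet] with X hX
      simp only [fW_snoc, K]
      simp_rw [ENNReal.ofReal_mul (hHp X).le, mul_left_comm _ (ENNReal.ofReal (H X))]
      rw [lintegral_const_mul' _ _ ENNReal.ofReal_ne_top, mul_comm]
      congr 1
      exact inner_step α hα X hX (fun w => F (extM (fW m α X) w)) (hFe.comp (measurable_const.prodMk measurable_id))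
    · rw [← mp.integrable_comp_emb (snocE m d).measurableEmbedding]
      simpa [Function.comp_def] using hKi
    · rw [← mp.integral_comp (snocE m d).measurableEmbedding]
      simp only [MeasurableEquiv.symm_apply_apply, hlog]
      rw [integral_add hHi' hLi]
      have : ∫ p, log (H p.1) ∂((sampleMeasure m d α).prod (gaussPi d α)) = ∫ X, log (H X) ∂(sampleMeasure m d α) := by
        rw [integral_prod _ hHi']; simp
      rw [this]
      push_cast
      linarith

end

section

lemma relEnt_bound {Ω Ω' : Type*} [MeasurableSpace Ω] [MeasurableSpace Ω'] (P : Measure Ω) [IsProbabilityMeasure P]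
    (ν : Measure Ω') [IsProbabilityMeasure ν] (f : Ω → Ω') (hf : Measurable f) (H : Ω → ℝ) (hH : Measurable H)
    (hHp : ∀ X, 0 < H X)
    (hF : ∀ F : Ω' → ℝ≥0∞, Measurable F → ∫⁻ X, F (f X) * ENNReal.ofReal (H X) ∂P = ∫⁻ M, F M ∂ν)
    (hi : Integrable (fun X => log (H X)) P) (c : ℝ) (hc : 0 ≤ c) (hv : -c ≤ ∫ X, log (H X) ∂P) :
    0 ≤ relEnt (P.map f) ν ∧ relEnt (P.map f) ν ≤ c := by
  have hpm : IsProbabilityMeasure (P.map f) := Measure.isProbabilityMeasure_map hf.aemeasurable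
  have hac : P.map f ≪ ν := by
    refine Measure.AbsolutelyContinuous.mk fun s hs h0 => ?_
    rw [Measure.map_apply hf hs]
    have h1 := hF (s.indicator 1) (measurable_one.indicator hs)
    have hme : Measurable fun X => (s.indicator 1 (f X) : ℝ≥0∞) * ENNReal.ofReal (H X) :=
      ((measurable_one.indicator hs).comp hf).mul hH.ennreal_ofReal
    rw [lintegral_indicator_one hs, h0, lintegral_eq_zero_iff hme] at h1
    refine measure_mono_null (fun X hX => ?_) (ae_iff.1 h1)
    have : f X ∈ s := hX
    simp [this, hHp X]
  unfold relEnt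
  by_cases hint : Integrable (llr (P.map f) ν) (P.map f)
  swap
  · rw [integral_undef hint]; exact ⟨le_rfl, hc⟩
  constructor
  · have := InformationTheory.integral_llr_add_sub_measure_univ_nonneg hac hint
    simpa using this
  · let r : Ω' → ℝ := fun y => ((P.map f).rnDeriv ν y).toReal
    have hrm : Measurable r := (Measure.measurable_rnDeriv _ _).ennreal_toReal
    have hllr : llr (P.map f) ν = fun y => log (r y) := rfl
    have hrp : ∀ᵐ X ∂P, 0 < r (f X) := by
      have h1 : ∀ᵐ y ∂(P.map f), 0 < r y := by
        filter_upwards [Measure.rnDeriv_pos hac, hac.ae_le (Measure.rnDeriv_lt_top (P.map f) ν)] with y h2 h3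
        exact ENNReal.toReal_pos h2.ne' h3.ne
      exact ae_of_ae_map hf.aemeasurable h1
    rw [hllr] at hint ⊢
    rw [integrable_map_measure hrm.log.aestronglyMeasurable hf.aemeasurable] at hint
    rw [integral_map hf.aemeasurable hrm.log.aestronglyMeasurable]
    have hl : ∫⁻ X, ENNReal.ofReal (r (f X) * H X) ∂P ≤ 1 := by
      simp_rw [ENNReal.ofReal_mul' (hHp _).le]
      rw [hF (fun y => ENNReal.ofReal (r y)) hrm.ennreal_ofReal]
      calc _ ≤ ∫⁻ y, (P.map f).rnDeriv ν y ∂ν := lintegral_mono fun y => ENNReal.ofReal_toReal_le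
        _ ≤ P.map f Set.univ := Measure.lintegral_rnDeriv_le
        _ = 1 := measure_univ
    have hn : 0 ≤ᵐ[P] fun X => r (f X) * H X := ae_of_all _ fun X => mul_nonneg ENNReal.toReal_nonneg (hHp X).le
    have hm : Measurable fun X => r (f X) * H X := (hrm.comp hf).mul hH
    have hrH : Integrable (fun X => r (f X) * H X) P := by
      refine ⟨hm.aestronglyMeasurable, ?_⟩
      rw [hasFiniteIntegral_iff_ofReal hn]
      exact hl.trans_lt ENNReal.one_lt_top
    have hrv : ∫ X, r (f X) * H X ∂P ≤ 1 := by
      rw [integral_eq_lintegral_of_nonneg_ae hn hm.aestronglyMeasurable]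
      exact ENNReal.toReal_le_of_le_ofReal zero_le_one (by simpa using hl)
    have h5 : ∫ X, (log (r (f X)) + log (H X)) ∂P ≤ ∫ X, (r (f X) * H X - 1) ∂P := by
      refine integral_mono_ae (hint.add hi) (hrH.sub (integrable_const _)) ?_
      filter_upwards [hrp] with X hX
      show log (r (f X)) + log (H X) ≤ r (f X) * H X - 1
      rw [← Real.log_mul hX.ne' (hHp X).ne']
      exact Real.log_le_sub_one_of_pos (mul_pos hX (hHp X))
    have hint2 : Integrable (fun X => log (r (f X))) P := hint
    rw [integral_add hint2 hi, integral_sub hrH (integrable_const _)] at h5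
    simp at h5
    linarith

lemma relEnt_le {d : ℕ} (α : Fin d → ℝ) (hα : ∀ i, 0 ≤ α i) (h0 : 0 < nrm 2 α) (n : ℕ) (hn : 1 ≤ n) (δ N : ℝ)
    (hδ : ∑ i, ((α i / nrm 2 α) ^ 2) ^ 2 = δ) (hN : δ * N ^ 2 = 1) (hN0 : 0 < N) (hNn : 32 * (n * √n) ≤ N) :
    0 ≤ relEnt (wishartOffDiag n d α) (goeOffDiag n) ∧
    relEnt (wishartOffDiag n d α) (goeOffDiag n) ≤ n * (32 * δ * n ^ 2 + exp (-n)) := by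
  have hδ0 : 0 ≤ δ := hδ ▸ Finset.sum_nonneg fun i _ => sq_nonneg _
  have hsum : ∑ i, (α i / nrm 2 α) ^ 2 = 1 := by
    simp_rw [div_pow]
    rw [← Finset.sum_div, ← nrm_two_sq]
    exact div_self (by positivity)
  have haN : ∀ i, (α i / nrm 2 α) ^ 2 * N ≤ 1 := by
    intro i
    have h1 : ((α i / nrm 2 α) ^ 2) ^ 2 ≤ δ := by
      rw [← hδ]
      exact Finset.single_le_sum (f := fun i => ((α i / nrm 2 α) ^ 2) ^ 2) (fun i _ => by positivity) (Finset.mem_univ i)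
    have h2 : ((α i / nrm 2 α) ^ 2 * N) ^ 2 ≤ 1 := by
      rw [mul_pow, ← hN]; gcongr
    have h3 : 0 ≤ (α i / nrm 2 α) ^ 2 * N := by positivity
    nlinarith
  have hb : 0 ≤ 32 * δ * n ^ 2 + exp (-n) := by positivity
  have hJ : ∀ m < n, ∫⁻ X, Jq (covM α X) ∂(sampleMeasure m d α) ≤ ENNReal.ofReal (1 + (32 * δ * n ^ 2 + exp (-n))) := by
    intro m hm
    rw [lintegral_Jq α hα]
    refine (I_bound (fun i => (α i / nrm 2 α) ^ 2) (fun i => by positivity) hsum δ N n hn hm.le hδ hN.le haN hNn).trans ?_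
    apply ENNReal.ofReal_le_ofReal
    have : (m:ℝ) ≤ n := by exact_mod_cast hm.le
    rw [← add_assoc]
    gcongr
  obtain ⟨H, hHm, hHp, hHF, hHi, hHv⟩ := exists_H α hα h0 _ hb n hJ n le_rfl
  exact relEnt_bound (sampleMeasure n d α) (goeOffDiag n) (fW n α) (measurable_fW n α) H hHm hHp hHF hHi _ (by positivity) hHv

lemma nrm_four_pow {d : ℕ} (α : Fin d → ℝ) : nrm 4 α ^ 4 = ∑ i, α i ^ 4 := by
  unfold nrm
  have : 0 ≤ ∑ i, α i ^ 4 := Finset.sum_nonneg fun i _ => by positivity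
  rw [← Real.rpow_natCast, ← Real.rpow_mul this]; norm_num

lemma relEnt_le' {d : ℕ} (α : Fin d → ℝ) (hα : ∀ i, 0 ≤ α i) (hmax : ∃ i, α i = 1) (n : ℕ) (hn : 1 ≤ n)
    (hR : 1024 ≤ (nrm 2 α / nrm 4 α) ^ 4 / (n : ℝ) ^ 3) :
    0 ≤ relEnt (wishartOffDiag n d α) (goeOffDiag n) ∧
    relEnt (wishartOffDiag n d α) (goeOffDiag n) ≤ 32 * ((nrm 2 α / nrm 4 α) ^ 4 / (n : ℝ) ^ 3)⁻¹ + n * exp (-n) := by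
  obtain ⟨i0, hi0⟩ := hmax
  have hn' : (1:ℝ) ≤ n := by exact_mod_cast hn
  have h2 : 0 < nrm 2 α := by
    unfold nrm
    refine Real.rpow_pos_of_pos (lt_of_lt_of_le (by rw [hi0]; norm_num)
      (Finset.single_le_sum (f := fun i => α i ^ 2) (fun i _ => by positivity) (Finset.mem_univ i0))) _
  have h4 : 0 < nrm 4 α := by
    unfold nrm
    refine Real.rpow_pos_of_pos (lt_of_lt_of_le (by rw [hi0]; norm_num)
      (Finset.single_le_sum (f := fun i => α i ^ 4) (fun i _ => by positivity) (Finset.mem_univ i0))) _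
  set R := (nrm 2 α / nrm 4 α) ^ 4 with hRdef
  have hR0 : 0 < R := by positivity
  rw [le_div_iff₀ (by positivity)] at hR
  have hδ : ∑ i, ((α i / nrm 2 α) ^ 2) ^ 2 = R⁻¹ := by
    simp_rw [← pow_mul, div_pow]
    rw [← Finset.sum_div, ← nrm_four_pow, hRdef, div_pow, inv_div]
  have hN : R⁻¹ * (√R) ^ 2 = 1 := by
    rw [Real.sq_sqrt hR0.le]; exact inv_mul_cancel₀ hR0.ne'
  have hNn : 32 * (n * √(n:ℝ)) ≤ √R := by
    apply Real.le_sqrt_of_sq_le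
    rw [mul_pow, mul_pow, Real.sq_sqrt (by positivity)]
    linarith
  have := relEnt_le α hα h2 n hn _ _ hδ hN (Real.sqrt_pos.2 hR0) hNn
  refine ⟨this.1, this.2.trans (le_of_eq ?_)⟩
  rw [inv_div]
  field_simp

end

/-- Theorem 6. If `(‖α‖₂/‖α‖₄)⁴ / n³ → ∞`, then
`Ent[W(n,α) ‖ M(n)] → 0`. -/
theorem relEnt_tendsto_zero (p : ℝ) (hp : p ∈ Set.Ioo (0 : ℝ) 1)
    (d : ℕ → ℕ) (α : (n : ℕ) → Fin (d n) → ℝ)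
    (hα : ∀ n i, α n i ∈ Set.Icc (0 : ℝ) 1)
    (hmax : ∀ n, ∃ i, α n i = 1)
    (hlim : Tendsto (fun n => (nrm 2 (α n) / nrm 4 (α n)) ^ 4 / (n : ℝ) ^ 3)
      atTop atTop) :
    Tendsto (fun n => relEnt (wishartOffDiag n (d n) (α n)) (goeOffDiag n))
      atTop (nhds 0) := by
  have hub : Tendsto (fun n : ℕ => 32 * ((nrm 2 (α n) / nrm 4 (α n)) ^ 4 / (n : ℝ) ^ 3)⁻¹ + n * exp (-n)) atTop (nhds 0) := by
    have h1 := (tendsto_inv_atTop_zero.comp hlim).const_mul 32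
    have h2 := (Real.tendsto_pow_mul_exp_neg_atTop_nhds_zero 1).comp (tendsto_natCast_atTop_atTop (R := ℝ))
    have h3 := h1.add h2
    simpa [Function.comp_def] using h3
  have hev := (hlim.eventually_ge_atTop 1024).and (eventually_ge_atTop 1)
  refine tendsto_of_tendsto_of_tendsto_of_le_of_le' tendsto_const_nhds hub ?_ ?_
  · filter_upwards [hev] with n hn
    exact (relEnt_le' (α n) (fun i => (hα n i).1) (hmax n) n hn.2 hn.1).1
  · filter_upwards [hev] with n hn
    exact (relEnt_le' (α n) (fun i => (hα n i).1) (hmax n) n hn.2 hn.1).2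

end
end
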